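/- arXiv:1808.04805 — 4 statements merged into one kernel-verified Lean document; each statement's English description precedes it below -/
import Mathlib

section
/- Let k be a field, n ≥ 1 and d ≥ 1 natural numbers, and let I be a proper ideal of the polynomial ring k[x_1,…,x_n] generated by polynomials of total degree at most d. If I is prime up to (2nd)^(n³·2^(6n²)), then I is a prime ideal. -/
/-!
Hermann's bound and a degree-bounded Noether normalisation reduce primality of `I` to a statement
about a finite algebra over a field. Write `P = k[x₁,…,xₙ]`.

* *Non-zero-divisors.* For `a ∉ I` of degree at most `G`, the relations `a * g ∈ I` are syzygies of
  `(a, generators of I)`, and by Hermann's method (`hermann`) these are generated in degree at most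
  `G ^ hermannExp n`. Primality up to that degree puts the component `g` of each generating syzygy
  into `I`, so `a` is a non-zero-divisor modulo `I` (`nzd_of_prime_up_to`). This is the only way in
  which the hypothesis is used when `n ≥ 2`; for `n = 1` the ring is a principal ideal domain and
  the generator of `I` is irreducible (`isPrime_of_one_variable`).

* *Normalisation.* Choose a maximal set of variables independent modulo `I` up to a degree bound
  that grows as the set shrinks (`isPrime_of_nzd`). Each remaining variable `xᵢ` satisfies a
  relation of degree at most `e` over `R = k[independent variables]`, and `sᵢ xᵢ` is integral over
  `R`, where `sᵢ` is the leading coefficient (`NormData`). Reducing modulo these monic relations,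
  elements of `P / I` are described, up to powers of the `sᵢ`, by vectors over `R` indexed by the
  exponents in `[0, e) ^ n`; the vectors describing elements of `I` are, up to torsion, spanned by
  vectors of low degree. Their maximal minors have low degree and are non-zero-divisors, so `P / I`
  is torsion-free over `R` (`NormData.torsionFree`) and embeds in its generic fibre `A`, a finite
  algebra over `K = Frac R`.

* *The generic fibre is a domain.* By linear algebra in bounded degree, a linear form in the
  `sᵢ xᵢ` with coefficients of low degree satisfies an equation of low degree over `R`; the values
  of the factors of this equation are zero or non-zero-divisors, so one irreducible factor already
  vanishes (`NormData.exists_irreducible`). Having enough linear forms with irreducible equations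
  forces `A` to have a single maximal ideal (`eq_of_isMaximal`). In characteristic zero, irreducible
  equations for the generators make `A` reduced (`isReduced_of_squarefree`). In characteristic `p`,
  the elements with vanishing `p`-th power form the kernel of a linear system of low degree,
  obtained by extracting `p`-th roots of a Frobenius-semilinear one; it has solutions of low degree,
  which are not nilpotent unless zero (`NormData.mem_of_pow_char_mem`). Hence `A` is a reduced
  artinian local ring, that is a field. When there is no independent variable, every element of
  `P / I` is represented in low degree and the first step suffices (`NormData.isPrime_of_eq_zero`).
-/

open MvPolynomial

namespace PrimeBound

/-! ### Minors and Cramer's rule -/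

/-- On the submatrix of a nonvanishing minor of maximal size, Cramer's rule expresses every column of
the matrix, up to the factor `det`, through the columns of the minor. -/
theorem bordered_minor {R : Type*} [CommRing R] [IsDomain R] {ι κ : Type*} (A : Matrix ι κ R)
    {ρ : ℕ} (f : Fin ρ → ι) (g : Fin ρ → κ) (hdet : (A.submatrix f g).det ≠ 0)
    (hmax : ∀ (f' : Fin (ρ + 1) → ι) (g' : Fin (ρ + 1) → κ), (A.submatrix f' g').det = 0)
    (i : ι) (j : κ) :
    (A.submatrix f g).det * A i j =
      ∑ l, A i (g l) * (∑ l', (A.submatrix f g).adjugate l l' * A (f l') j) := by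
  have h0 := hmax (Fin.snoc f i) (Fin.snoc g j)
  obtain ⟨v, hv, hv0⟩ := Matrix.exists_mulVec_eq_zero_iff.mpr h0
  set B := A.submatrix f g with hB
  have h1 : ∀ l', ∑ l, B l' l * v (Fin.castSucc l) + A (f l') j * v (Fin.last ρ) = 0 := by
    intro l'
    have := congrFun hv0 (Fin.castSucc l')
    simpa [hB, Matrix.mulVec, dotProduct, Fin.sum_univ_castSucc] using this
  have h2 : ∑ l, A i (g l) * v (Fin.castSucc l) + A i j * v (Fin.last ρ) = 0 := by
    have := congrFun hv0 (Fin.last ρ)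
    simpa [Matrix.mulVec, dotProduct, Fin.sum_univ_castSucc] using this
  -- Cramer's rule: the first block of the null vector is determined by its last entry
  have h3 : ∀ l, B.det * v (Fin.castSucc l) =
      - (∑ l', B.adjugate l l' * A (f l') j) * v (Fin.last ρ) := by
    intro l
    have e1 : B.mulVec (fun l => v (Fin.castSucc l)) =
        fun l' => - (A (f l') j * v (Fin.last ρ)) := by
      funext l'
      exact eq_neg_of_add_eq_zero_left (h1 l')
    have e2 := congrArg (fun x => B.adjugate.mulVec x l) e1
    simp only [Matrix.mulVec_mulVec, Matrix.adjugate_mul, Matrix.smul_mulVec,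
      Matrix.one_mulVec, Pi.smul_apply, smul_eq_mul] at e2
    rw [e2]
    simp only [Matrix.mulVec, dotProduct, mul_neg, Finset.sum_neg_distrib, Finset.sum_mul,
      neg_mul, mul_assoc]
  have hlast : v (Fin.last ρ) ≠ 0 := by
    intro hl
    apply hv
    funext x
    refine Fin.lastCases ?_ (fun l => ?_) x
    · simpa using hl
    · have := h3 l
      rw [hl, mul_zero] at this
      simpa using (mul_eq_zero.mp this).resolve_left hdet
  apply mul_right_cancel₀ hlast
  have h4 : B.det * (∑ l, A i (g l) * v (Fin.castSucc l) + A i j * v (Fin.last ρ)) = 0 := by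
    rw [h2, mul_zero]
  rw [mul_add, Finset.mul_sum] at h4
  have h5 : ∀ l, B.det * (A i (g l) * v (Fin.castSucc l)) =
      - (A i (g l) * (∑ l', B.adjugate l l' * A (f l') j)) * v (Fin.last ρ) := by
    intro l
    rw [mul_left_comm, h3 l]; ring
  rw [Finset.sum_congr rfl (fun l _ => h5 l)] at h4
  rw [← Finset.sum_mul, Finset.sum_neg_distrib] at h4
  linear_combination h4

/-- A matrix whose nonvanishing minors have bounded size has one of maximal size; the last conjunct
is the form in which maximality is used. -/
theorem exists_max_minor {R : Type*} [CommRing R] [IsDomain R] {ι κ : Type*} (A : Matrix ι κ R)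
    (M : ℕ) (hM : ∀ (ρ : ℕ) (f : Fin ρ → ι) (g : Fin ρ → κ),
      (A.submatrix f g).det ≠ 0 → ρ ≤ M) :
    ∃ (ρ : ℕ) (f : Fin ρ → ι) (g : Fin ρ → κ), ρ ≤ M ∧ (A.submatrix f g).det ≠ 0 ∧
      ∀ i j, (A.submatrix f g).det * A i j =
        ∑ l, A i (g l) * (∑ l', (A.submatrix f g).adjugate l l' * A (f l') j) := by
  classical
  let p : ℕ → Prop := fun ρ => ∃ (f : Fin ρ → ι) (g : Fin ρ → κ), (A.submatrix f g).det ≠ 0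
  have hp0 : p 0 := ⟨Fin.elim0, Fin.elim0, by simp⟩
  obtain ⟨f, g, hfg⟩ : p (Nat.findGreatest p M) := Nat.findGreatest_spec (Nat.zero_le M) hp0
  refine ⟨_, f, g, hM _ f g hfg, hfg, ?_⟩
  refine bordered_minor A f g hfg ?_
  intro f' g'
  by_contra h
  have h1 := hM _ f' g' h
  have := Nat.le_findGreatest (P := p) h1 ⟨f', g', h⟩
  omega

theorem minor_le_rows {R : Type*} [CommRing R] {ι κ : Type*} [Fintype ι] (A : Matrix ι κ R)
    (ρ : ℕ) (f : Fin ρ → ι) (g : Fin ρ → κ) (h : (A.submatrix f g).det ≠ 0) :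
    ρ ≤ Fintype.card ι := by
  have hf : Function.Injective f := by
    intro a b hab
    by_contra hne
    exact h (Matrix.det_zero_of_row_eq hne (by funext x; simp [hab]))
  simpa using Fintype.card_le_of_injective f hf

theorem minor_le_cols {R : Type*} [CommRing R] {ι κ : Type*} [Fintype κ] (A : Matrix ι κ R)
    (ρ : ℕ) (f : Fin ρ → ι) (g : Fin ρ → κ) (h : (A.submatrix f g).det ≠ 0) :
    ρ ≤ Fintype.card κ := by
  have hf : Function.Injective g := by
    intro a b hab
    by_contra hne
    exact h (Matrix.det_zero_of_column_eq hne (by intro x; simp [hab]))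
  simpa using Fintype.card_le_of_injective g hf

/-! ### Degree estimates -/

section deg
variable {σ k : Type*} [Field k]

theorem totalDegree_sum_le {ι : Type*} (s : Finset ι) (f : ι → MvPolynomial σ k) (d : ℕ)
    (h : ∀ i ∈ s, (f i).totalDegree ≤ d) : (∑ i ∈ s, f i).totalDegree ≤ d :=
  totalDegree_finsetSum_le h

theorem totalDegree_det_le {m : ℕ} (B : Matrix (Fin m) (Fin m) (MvPolynomial σ k)) (h : ℕ)
    (hB : ∀ i j, (B i j).totalDegree ≤ h) : B.det.totalDegree ≤ m * h := by
  rw [Matrix.det_apply]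
  refine totalDegree_sum_le _ _ _ fun τ _ => ?_
  have : (∏ i, B (τ i) i).totalDegree ≤ m * h := by
    refine (totalDegree_finsetProd _ _).trans ?_
    refine (Finset.sum_le_card_nsmul _ _ h fun i _ => hB _ _).trans ?_
    simp
  rcases Int.units_eq_one_or (Equiv.Perm.sign τ) with h' | h' <;> rw [h'] <;> simpa using this

theorem totalDegree_adjugate_le {m : ℕ} (B : Matrix (Fin m) (Fin m) (MvPolynomial σ k)) (h : ℕ)
    (hB : ∀ i j, (B i j).totalDegree ≤ h) (i j : Fin m) :
    (B.adjugate i j).totalDegree ≤ m * h := by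
  rw [Matrix.adjugate_apply]
  refine totalDegree_det_le _ _ fun a b => ?_
  by_cases hab : a = j
  · subst hab
    rw [Matrix.updateRow_self, Pi.single_apply]
    split_ifs <;> simp
  · rw [Matrix.updateRow_ne hab]; exact hB a b

theorem totalDegree_mul_le_of {p q : MvPolynomial σ k} {a b : ℕ} (hp : p.totalDegree ≤ a)
    (hq : q.totalDegree ≤ b) : (p * q).totalDegree ≤ a + b :=
  (totalDegree_mul p q).trans (add_le_add hp hq)

theorem totalDegree_pow_le_of {p : MvPolynomial σ k} {a : ℕ} (hp : p.totalDegree ≤ a) (l : ℕ) :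
    (p ^ l).totalDegree ≤ l * a :=
  (totalDegree_pow p l).trans (Nat.mul_le_mul_left _ hp)

theorem totalDegree_sub_le_of {p q : MvPolynomial σ k} {a : ℕ} (hp : p.totalDegree ≤ a)
    (hq : q.totalDegree ≤ a) : (p - q).totalDegree ≤ a :=
  (totalDegree_sub p q).trans (max_le hp hq)

theorem totalDegree_add_le_of {p q : MvPolynomial σ k} {a : ℕ} (hp : p.totalDegree ≤ a)
    (hq : q.totalDegree ≤ a) : (p + q).totalDegree ≤ a :=
  (totalDegree_add p q).trans (max_le hp hq)

theorem totalDegree_eval_le {τ : Type*} (φ : MvPolynomial σ k →ₐ[k] MvPolynomial τ k) (w : ℕ)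
    (hφ : ∀ i, (φ (X i)).totalDegree ≤ w) (p : MvPolynomial σ k) :
    (φ p).totalDegree ≤ p.totalDegree * w := by
  conv_lhs => rw [p.as_sum, map_sum]
  refine totalDegree_sum_le _ _ _ fun v hv => ?_
  rw [monomial_eq, map_mul, Finsupp.prod, map_prod]
  have h1 : (φ (C (coeff v p))).totalDegree ≤ 0 := by
    rw [algHom_C]
    simp [algebraMap_eq]
  refine (totalDegree_mul_le_of h1 (b := p.totalDegree * w) ?_).trans (by simp)
  refine (totalDegree_finsetProd _ _).trans ?_
  calc _ ≤ ∑ i ∈ v.support, v i * w := by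
        refine Finset.sum_le_sum fun i _ => ?_
        rw [map_pow]
        exact totalDegree_pow_le_of (hφ i) _
    _ = (∑ i ∈ v.support, v i) * w := by rw [Finset.sum_mul]
    _ ≤ p.totalDegree * w := Nat.mul_le_mul_right _ (le_totalDegree hv)

end deg

/-! ### Kernel vectors from Cramer's rule -/

open Classical in
/-- The kernel vector attached to the column `j` by Cramer's rule on the minor with rows `f` and
columns `g`: its `j`-th entry is the minor, and the entries at the columns `g l` correct it. -/
noncomputable def kerVec {R : Type*} [CommRing R] {ι κ : Type*} (A : Matrix ι κ R) {ρ : ℕ}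
    (f : Fin ρ → ι) (g : Fin ρ → κ) (j : κ) : κ → R := fun c =>
  (if c = j then (A.submatrix f g).det else 0) -
    ∑ l, if g l = c then (∑ l', (A.submatrix f g).adjugate l l' * A (f l') j) else 0

theorem mulVec_kerVec {R : Type*} [CommRing R] {ι κ : Type*} [Fintype κ] (A : Matrix ι κ R)
    {ρ : ℕ} (f : Fin ρ → ι) (g : Fin ρ → κ)
    (h : ∀ i j, (A.submatrix f g).det * A i j =
        ∑ l, A i (g l) * (∑ l', (A.submatrix f g).adjugate l l' * A (f l') j)) (j : κ) :
    A.mulVec (kerVec A f g j) = 0 := by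
  classical
  funext i
  simp only [Matrix.mulVec, dotProduct, kerVec, mul_sub, Finset.sum_sub_distrib, Pi.zero_apply,
    mul_ite, mul_zero, Finset.mul_sum]
  rw [Finset.sum_comm (s := Finset.univ (α := κ))]
  simp only [Finset.sum_ite_eq', Finset.sum_ite_eq, Finset.mem_univ, if_true]
  rw [mul_comm, h i j, sub_eq_zero]
  simp only [Finset.mul_sum]

/-- Every vector is, up to the factor `det`, a combination of the kernel vectors plus a vector
supported on the columns of the minor; the latter vanishes for vectors in the kernel. -/
theorem sum_kerVec {R : Type*} [CommRing R] {ι κ : Type*} [Fintype κ] (A : Matrix ι κ R)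
    {ρ : ℕ} (f : Fin ρ → ι) (g : Fin ρ → κ) (v : κ → R) (c : κ) [DecidableEq κ] :
    ∑ j, v j * kerVec A f g j c = (A.submatrix f g).det * v c -
      ∑ l, if g l = c then (∑ l', (A.submatrix f g).adjugate l l' * A.mulVec v (f l')) else 0 := by
  simp only [kerVec, mul_sub, Finset.sum_sub_distrib, mul_ite, mul_zero, Finset.mul_sum]
  congr 1
  · simp [mul_comm]
  · rw [Finset.sum_comm (s := Finset.univ (α := κ))]
    refine Finset.sum_congr rfl fun l _ => ?_
    by_cases hl : g l = c
    · simp only [hl, if_true]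
      rw [Finset.sum_comm]
      refine Finset.sum_congr rfl fun l' _ => ?_
      simp only [Matrix.mulVec, dotProduct, Finset.mul_sum]
      refine Finset.sum_congr rfl fun x _ => by ring
    · simp [hl]

theorem kerVec_of_mulVec_eq_zero {R : Type*} [CommRing R] {ι κ : Type*} [Fintype κ]
    (A : Matrix ι κ R) {ρ : ℕ} (f : Fin ρ → ι) (g : Fin ρ → κ) (v : κ → R)
    (hv : A.mulVec v = 0) (c : κ) :
    ∑ j, v j * kerVec A f g j c = (A.submatrix f g).det * v c := by
  classical
  rw [sum_kerVec, hv]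
  simp

theorem totalDegree_kerVec_le {σ k : Type*} [Field k] {ι κ : Type*}
    (A : Matrix ι κ (MvPolynomial σ k)) {ρ : ℕ} (f : Fin ρ → ι) (g : Fin ρ → κ) (h : ℕ)
    (hA : ∀ i j, (A i j).totalDegree ≤ h) (j c : κ) :
    (kerVec A f g j c).totalDegree ≤ (ρ + 1) * h := by
  classical
  unfold kerVec
  refine totalDegree_sub_le_of ?_ ?_
  · split_ifs
    · refine (totalDegree_det_le _ h fun _ _ => hA _ _).trans (Nat.mul_le_mul_right _ (by omega))
    · simp
  · refine totalDegree_sum_le _ _ _ fun l _ => ?_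
    split_ifs
    · refine totalDegree_sum_le _ _ _ fun l' _ => ?_
      refine (totalDegree_mul_le_of (totalDegree_adjugate_le _ h (fun _ _ => hA _ _) _ _)
        (hA _ _)).trans (by ring_nf; rfl)
    · simp

/-- If `t • v` lies in the column span, so does `det • v`, with explicit coefficients. -/
theorem colSpan_of_smul {R : Type*} [CommRing R] [IsDomain R] {ι κ : Type*} (A : Matrix ι κ R)
    {ρ : ℕ} (f : Fin ρ → ι) (g : Fin ρ → κ)
    (h : ∀ i j, (A.submatrix f g).det * A i j =
        ∑ l, A i (g l) * (∑ l', (A.submatrix f g).adjugate l l' * A (f l') j))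
    (v : ι → R) (t : R) (ht : t ≠ 0)
    (hv : t • v ∈ Submodule.span R (Set.range fun j : κ => fun i => A i j)) (i : ι) :
    (A.submatrix f g).det * v i =
      ∑ l, A i (g l) * (∑ l', (A.submatrix f g).adjugate l l' * v (f l')) := by
  have key : ∀ w ∈ Submodule.span R (Set.range fun j : κ => fun i => A i j),
      (A.submatrix f g).det * w i =
      ∑ l, A i (g l) * (∑ l', (A.submatrix f g).adjugate l l' * w (f l')) := by
    intro w hw
    induction hw using Submodule.span_induction with
    | mem x hx => obtain ⟨j, rfl⟩ := hx; exact h i j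
    | zero => simp
    | add x y _ _ hx hy =>
      simp only [Pi.add_apply, mul_add, Finset.sum_add_distrib, hx, hy]
    | smul a x _ hx =>
      simp only [Pi.smul_apply, smul_eq_mul]
      rw [mul_left_comm, hx, Finset.mul_sum]
      refine Finset.sum_congr rfl fun l _ => ?_
      rw [mul_left_comm, Finset.mul_sum]
      congr 1
      refine Finset.sum_congr rfl fun l _ => by ring
  have := key _ hv
  apply mul_left_cancel₀ ht
  simp only [Pi.smul_apply, smul_eq_mul] at this
  rw [mul_left_comm, this, Finset.mul_sum]
  refine Finset.sum_congr rfl fun l _ => ?_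
  simp only [Finset.mul_sum]
  refine Finset.sum_congr rfl fun l' _ => by ring

/-! ### A triangular automorphism making a polynomial monic -/

section auto
variable {k : Type*} [Field k] {n : ℕ}

/-- The endomorphism `x₀ ↦ x₀`, `xᵢ ↦ xᵢ + c x₀ ^ (w ^ i)` of `k[x₀,…,xₙ]`. -/
noncomputable def shear (w : ℕ) (c : k) :
    MvPolynomial (Fin (n + 1)) k →ₐ[k] MvPolynomial (Fin (n + 1)) k :=
  aeval fun i ↦ if i = 0 then X 0 else X i + c • X 0 ^ (w ^ i.1)

theorem shear_comp_neg (w : ℕ) (c : k) :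
    (shear (n := n) w c).comp (shear w (-c)) = AlgHom.id _ _ := by
  apply MvPolynomial.algHom_ext
  intro i
  cases i using Fin.cases <;> simp [shear]

theorem shear_shear_neg (w : ℕ) (c : k) (p : MvPolynomial (Fin (n + 1)) k) :
    shear w c (shear w (-c) p) = p := by
  simpa using DFunLike.congr_fun (shear_comp_neg (n := n) w c) p

theorem totalDegree_shear_le (w : ℕ) (hw : 1 ≤ w) (c : k) (p : MvPolynomial (Fin (n + 1)) k) :
    (shear w c p).totalDegree ≤ p.totalDegree * w ^ n := by
  apply totalDegree_eval_le
  intro i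
  have h1 : 1 ≤ w ^ n := Nat.one_le_pow _ _ hw
  rw [shear, aeval_X]
  split_ifs
  · simpa using h1
  · refine totalDegree_add_le_of (by simpa using h1) ?_
    refine (totalDegree_smul_le _ _).trans ?_
    rw [totalDegree_X_pow]
    exact Nat.pow_le_pow_right hw (by omega)

/-- Uniqueness of base-`w` expansions. -/
theorem sum_pow_mul_ne (w : ℕ) (hw : 1 < w) (u v : Fin (n + 1) →₀ ℕ) (hu : ∀ i, u i < w)
    (hv : ∀ i, v i < w) (ne : u ≠ v) :
    ∑ x : Fin (n + 1), w ^ x.1 * u x ≠ ∑ x : Fin (n + 1), w ^ x.1 * v x := by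
  intro h
  refine ne <| Finsupp.ext <| congrFun <| List.ofFn_inj.mp ?_
  apply Nat.ofDigits_inj_of_len_eq hw (by simp) (by intro l hl; obtain ⟨i, rfl⟩ := List.mem_ofFn.mp hl; exact hu i)
    (by intro l hl; obtain ⟨i, rfl⟩ := List.mem_ofFn.mp hl; exact hv i)
  simpa only [Nat.ofDigits_eq_sum_mapIdx, List.mapIdx_eq_ofFn, List.get_ofFn, List.length_ofFn,
    Fin.val_cast, mul_comm, List.sum_ofFn] using! h

/-- The image of a variable under the shear, as a polynomial in `x₀`, is monic of degree `w ^ i`. -/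
theorem shear_X (w : ℕ) (hw : 1 < w) (i : Fin (n + 1)) :
    (finSuccEquiv k n (shear w 1 (X i))).Monic ∧
      (finSuccEquiv k n (shear w 1 (X i))).natDegree = w ^ i.1 := by
  cases i using Fin.cases with
  | zero => simp [shear, finSuccEquiv_X_zero]
  | succ i =>
    have hp : w ^ (i.1 + 1) ≠ 0 := by positivity
    simp only [shear, aeval_X, Fin.succ_ne_zero, if_false, one_smul, map_add, map_pow,
      finSuccEquiv_X_zero, finSuccEquiv_X_succ, add_comm (Polynomial.C _), Fin.val_succ]
    exact ⟨Polynomial.monic_X_pow_add_C _ hp, Polynomial.natDegree_X_pow_add_C⟩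

theorem shear_monomial (w : ℕ) (hw : 1 < w) (v : Fin (n + 1) →₀ ℕ) (a : k) (ha : a ≠ 0) :
    (finSuccEquiv k n (shear w 1 (monomial v a))).leadingCoeff = C a ∧
      (finSuccEquiv k n (shear w 1 (monomial v a))).natDegree = ∑ i, w ^ i.1 * v i := by
  have hm : (∏ i, (finSuccEquiv k n (shear w 1 (X i))) ^ v i).Monic :=
    Polynomial.monic_prod_of_monic _ _ fun i _ => (shear_X w hw i).1.pow _
  have e : finSuccEquiv k n (shear w 1 (monomial v a)) =
      Polynomial.C (C a) * ∏ i, (finSuccEquiv k n (shear w 1 (X i))) ^ v i := by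
    rw [monomial_eq, Finsupp.prod_fintype _ _ (fun i ↦ pow_zero _)]
    simp only [map_mul, map_prod, map_pow]
    congr 1
    rw [algHom_C, algebraMap_eq, finSuccEquiv_apply]
    simp
  rw [e]
  constructor
  · rw [Polynomial.leadingCoeff_mul, hm.leadingCoeff, mul_one, Polynomial.leadingCoeff_C]
  · rw [Polynomial.natDegree_C_mul (by simpa using ha),
      Polynomial.natDegree_prod_of_monic _ _ fun i _ => (shear_X w hw i).1.pow _]
    refine Finset.sum_congr rfl fun i _ => ?_
    rw [(shear_X w hw i).1.natDegree_pow, (shear_X w hw i).2, mul_comm]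

/-- For large `w` the shear makes every nonzero polynomial monic in `x₀` up to a constant: distinct
monomials acquire distinct `x₀`-degrees. -/
theorem shear_leadingCoeff (w : ℕ) (f : MvPolynomial (Fin (n + 1)) k) (hf : f ≠ 0)
    (hw : f.totalDegree + 1 < w) :
    ∃ a : k, a ≠ 0 ∧ (finSuccEquiv k n (shear w 1 f)).leadingCoeff = C a := by
  have hw1 : 1 < w := by omega
  obtain ⟨v, vin, vs⟩ := Finset.exists_max_image f.support
    (fun v ↦ ∑ i : Fin (n + 1), w ^ i.1 * v i) (support_nonempty.mpr hf)
  have hlt : ∀ u ∈ f.support, ∀ i, u i < w := fun u hu i =>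
    lt_of_le_of_lt ((monomial_le_degreeOf i hu).trans (degreeOf_le_totalDegree f i)) (by omega)
  set h := fun u ↦ finSuccEquiv k n (shear w 1 (monomial u (coeff u f))) with hh
  have hne : ∀ u ∈ f.support, h u ≠ 0 := by
    intro u hu h0
    have := (shear_monomial w hw1 u _ (mem_support_iff.mp hu)).1
    rw [show finSuccEquiv k n (shear w 1 (monomial u (coeff u f))) = 0 from h0] at this
    simp only [Polynomial.leadingCoeff_zero] at this
    exact mem_support_iff.mp hu (by simpa using this.symm)
  have hdeg : ∀ u ∈ f.support \ {v}, (h u).degree < (h v).degree := by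
    intro u hu
    obtain ⟨h1, h2⟩ := Finset.mem_sdiff.mp hu
    apply Polynomial.degree_lt_degree
    simp only [hh]
    rw [(shear_monomial w hw1 u _ (mem_support_iff.mp h1)).2,
      (shear_monomial w hw1 v _ (mem_support_iff.mp vin)).2]
    exact lt_of_le_of_ne (vs u h1) (sum_pow_mul_ne w hw1 u v (hlt u h1) (hlt v vin)
      (by simpa using h2))
  refine ⟨coeff v f, mem_support_iff.mp vin, ?_⟩
  have e : finSuccEquiv k n (shear w 1 f) = ∑ u ∈ f.support \ {v}, h u + h v := by
    conv_lhs => rw [← f.support_sum_monomial_coeff]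
    rw [map_sum, map_sum, Finset.sum_eq_add_sum_sdiff_singleton_of_mem vin, add_comm]
  rw [e, Polynomial.leadingCoeff_add_of_degree_lt]
  · exact (shear_monomial w hw1 v _ (mem_support_iff.mp vin)).1
  · refine lt_of_le_of_lt (Polynomial.degree_sum_le _ _) ?_
    exact (Finset.sup_lt_iff (Ne.bot_lt fun x ↦ hne v vin <| Polynomial.degree_eq_bot.mp x)).mpr
      hdeg

end auto

/-! ### Degree bounds for syzygies -/

theorem natDegree_det_le {R : Type*} [CommRing R] {m : ℕ} (M : Matrix (Fin m) (Fin m) (Polynomial R))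
    (h : ℕ) (hM : ∀ i j, (M i j).natDegree ≤ h) : M.det.natDegree ≤ m * h := by
  rw [Matrix.det_apply]
  refine Polynomial.natDegree_sum_le_of_forall_le _ _ fun σ _ => ?_
  refine (Polynomial.natDegree_smul_le _ _).trans ?_
  refine (Polynomial.natDegree_prod_le _ _).trans ?_
  refine (Finset.sum_le_sum fun i _ => hM _ _).trans ?_
  simp

theorem natDegree_adjugate_le {R : Type*} [CommRing R] {m : ℕ}
    (M : Matrix (Fin m) (Fin m) (Polynomial R))
    (h : ℕ) (hM : ∀ i j, (M i j).natDegree ≤ h) (i j : Fin m) :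
    (M.adjugate i j).natDegree ≤ m * h := by
  rw [Matrix.adjugate_apply]
  refine natDegree_det_le _ h fun a b => ?_
  rw [Matrix.updateRow_apply]
  split_ifs
  · rw [Pi.single_apply]; split_ifs <;> simp
  · exact hM _ _

theorem map_kerVec {R R' : Type*} [CommRing R] [CommRing R'] (φ : R →+* R') {ι κ : Type*}
    (A : Matrix ι κ R) {ρ : ℕ} (f : Fin ρ → ι) (g : Fin ρ → κ) (j c : κ) :
    kerVec (A.map φ) f g j c = φ (kerVec A f g j c) := by
  have hd : ((A.map φ).submatrix f g) = φ.mapMatrix (A.submatrix f g) := rfl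
  unfold kerVec
  rw [hd, ← RingHom.map_det, ← RingHom.map_adjugate]
  simp only [map_sub, map_sum, apply_ite φ, map_zero, map_mul, RingHom.mapMatrix_apply,
    Matrix.map_apply]

/-- Division with remainder by a minor with invertible leading coefficient brings a kernel vector
into bounded degree, modulo the kernel vectors given by Cramer's rule. -/
theorem poly_reduce {R : Type*} [CommRing R] [IsDomain R] {ι κ : Type*} [Fintype κ]
    (A : Matrix ι κ (Polynomial R)) {ρ : ℕ} (f : Fin ρ → ι) (g : Fin ρ → κ) (h : ℕ)
    (hA : ∀ i j, (A i j).natDegree ≤ h)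
    (hmax : ∀ i j, (A.submatrix f g).det * A i j =
        ∑ l, A i (g l) * (∑ l', (A.submatrix f g).adjugate l l' * A (f l') j))
    (hu : IsUnit (A.submatrix f g).det.leadingCoeff) (v : κ → Polynomial R)
    (hv : A.mulVec v = 0) :
    ∃ (q v' : κ → Polynomial R), (∀ c, v c = ∑ j, q j * kerVec A f g j c + v' c) ∧
      A.mulVec v' = 0 ∧ ∀ c, (v' c).natDegree ≤ (ρ + 1) * h := by
  classical
  set δ := (A.submatrix f g).det with hδ
  have hδ0 : δ ≠ 0 := by
    intro h0; rw [h0] at hu; simp at hu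
  have hδd : δ.natDegree ≤ ρ * h := natDegree_det_le _ h fun _ _ => hA _ _
  obtain ⟨u, hu⟩ := hu
  set δ' := Polynomial.C (↑u⁻¹ : R) * δ with hδ'
  have hmon : δ'.Monic := by
    rw [Polynomial.Monic, hδ', Polynomial.leadingCoeff_mul, Polynomial.leadingCoeff_C, ← hu]
    simp
  have hd' : δ'.natDegree ≤ δ.natDegree := Polynomial.natDegree_C_mul_le _ _
  set q : κ → Polynomial R := fun j => Polynomial.C (↑u⁻¹ : R) * (v j /ₘ δ') with hq
  set r : κ → Polynomial R := fun j => v j %ₘ δ' with hr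
  have hqr : ∀ j, v j = r j + δ * q j := by
    intro j
    conv_lhs => rw [← Polynomial.modByMonic_add_div (v j) δ']
    simp only [hr, hq, hδ']; ring
  have hrd : ∀ j, (r j).natDegree ≤ δ.natDegree := fun j =>
    (Polynomial.natDegree_modByMonic_le _ hmon).trans hd'
  set U : Fin ρ → Polynomial R := fun l =>
    ∑ l', (A.submatrix f g).adjugate l l' * A.mulVec q (f l') with hU
  have hUd : ∀ l, (U l).natDegree ≤ (ρ + 1) * h := by
    intro l
    have e1 : δ • A.mulVec q = - A.mulVec r := by
      rw [← Matrix.mulVec_smul, ← Matrix.mulVec_neg]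
      have : δ • q = v + -r := by
        funext j; simp only [Pi.smul_apply, smul_eq_mul, Pi.add_apply, Pi.neg_apply, hqr j]; ring
      rw [this, Matrix.mulVec_add, hv, zero_add]
    have e2 : δ * U l = ∑ l', (A.submatrix f g).adjugate l l' * (- A.mulVec r (f l')) := by
      rw [hU, Finset.mul_sum]
      refine Finset.sum_congr rfl fun l' _ => ?_
      have := congrFun e1 (f l')
      simp only [Pi.smul_apply, smul_eq_mul, Pi.neg_apply] at this
      rw [← this]; ring
    have e3 : (δ * U l).natDegree ≤ ρ * h + (h + δ.natDegree) := by
      rw [e2]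
      refine Polynomial.natDegree_sum_le_of_forall_le _ _ fun l' _ => ?_
      refine Polynomial.natDegree_mul_le.trans (add_le_add
        (natDegree_adjugate_le _ h (fun _ _ => hA _ _) _ _) ?_)
      rw [Polynomial.natDegree_neg]
      refine Polynomial.natDegree_sum_le_of_forall_le _ _ fun j _ => ?_
      exact Polynomial.natDegree_mul_le.trans (add_le_add (hA _ _) (hrd _))
    by_cases h0 : U l = 0
    · rw [h0]; simp
    · rw [Polynomial.natDegree_mul hδ0 h0] at e3
      rw [add_mul]; omega
  refine ⟨q, fun c => v c - ∑ j, q j * kerVec A f g j c, fun c => by ring, ?_, fun c => ?_⟩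
  · have : (fun c => v c - ∑ j, q j * kerVec A f g j c) =
        v - ∑ j, q j • kerVec A f g j := by
      funext c; simp [Finset.sum_apply]
    rw [this, Matrix.mulVec_sub, hv, Matrix.mulVec_sum]
    simp [Matrix.mulVec_smul, mulVec_kerVec A f g hmax]
  · simp only [sum_kerVec, hqr c]
    have : r c + δ * q c - (δ * q c - ∑ l, if g l = c then U l else 0) =
        r c + ∑ l, if g l = c then U l else 0 := by ring
    rw [this]
    refine Polynomial.natDegree_add_le_of_degree_le ((hrd c).trans (hδd.trans ?_)) ?_
    · exact Nat.mul_le_mul_right _ (by omega)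
    · refine Polynomial.natDegree_sum_le_of_forall_le _ _ fun l _ => ?_
      split_ifs
      · exact hUd l
      · simp

/-- Exponent in the syzygy bound: over `k[x₁,…,x_r]`, a matrix with at most `q` rows and entries of
degree at most `q` has its kernel generated in degree at most `q ^ hermannExp r`. -/
def hermannExp : ℕ → ℕ
  | 0 => 0
  | r + 1 => (3 * r + 5) * (hermannExp r + 2)

theorem finSuccEquiv_rename_succ {k : Type*} [Field k] {r : ℕ} (p : MvPolynomial (Fin r) k) :
    finSuccEquiv k r (rename Fin.succ p) = Polynomial.C p := by
  induction p using MvPolynomial.induction_on with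
  | C a => simp [finSuccEquiv_apply]
  | add p q hp hq => simp [hp, hq]
  | mul_X p i hp => rw [map_mul, map_mul, hp, rename_X, finSuccEquiv_X_succ, map_mul]

theorem totalDegree_finSuccEquiv_symm_sum {k : Type*} [Field k] {r L D : ℕ}
    (w : Fin (L + 1) → MvPolynomial (Fin r) k) (hw : ∀ a, (w a).totalDegree ≤ D) :
    ((finSuccEquiv k r).symm (∑ a, Polynomial.C (w a) * Polynomial.X ^ a.1)).totalDegree
      ≤ D + L := by
  rw [map_sum]
  refine totalDegree_sum_le _ _ _ fun a _ => ?_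
  have e1 : (finSuccEquiv k r).symm (Polynomial.C (w a)) = rename Fin.succ (w a) := by
    rw [AlgEquiv.symm_apply_eq, finSuccEquiv_rename_succ]
  have e2 : (finSuccEquiv k r).symm Polynomial.X = X 0 := by
    rw [AlgEquiv.symm_apply_eq, finSuccEquiv_X_zero]
  rw [map_mul, map_pow, e1, e2]
  refine totalDegree_mul_le_of ((totalDegree_rename_le _ _).trans (hw a)) ?_
  rw [totalDegree_X_pow]; omega

/-- The estimates for the step from `r` to `r + 1` variables in `hermann`, where `q ^ 2 + 2` is the
base of the shear and `ρ`, `c` are the size of the minor and the number of rows. -/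
theorem hermann_arith (q r B ρ c : ℕ) (hq : 2 ≤ q) (hρ : ρ ≤ q) (hc : c ≤ q) :
    c * ((ρ + 1) * (q * (q ^ 2 + 2) ^ r) + q * (q ^ 2 + 2) ^ r + 1) ≤ q ^ (3 * r + 5) ∧
    q * (q ^ 2 + 2) ^ r ≤ q ^ (3 * r + 5) ∧
    ((q ^ (3 * r + 5)) ^ B + (ρ + 1) * (q * (q ^ 2 + 2) ^ r)) * (q ^ 2 + 2) ^ r ≤
      q ^ ((3 * r + 5) * (B + 2)) ∧
    (ρ + 1) * q ≤ q ^ ((3 * r + 5) * (B + 2)) := by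
  have hw : (q ^ 2 + 2) ^ r ≤ q ^ (3 * r) := by
    rw [pow_mul]; refine Nat.pow_le_pow_left ?_ _
    nlinarith [Nat.mul_le_mul hq hq]
  generalize (q ^ 2 + 2) ^ r = W at *
  have hpos : 1 ≤ q ^ (3 * r) := Nat.one_le_pow _ _ (by omega)
  have e : q ^ (3 * r + 5) = q ^ (3 * r) * q ^ 5 := pow_add _ _ _
  have e4 : q ^ ((3 * r + 5) * (B + 2)) = (q ^ (3 * r + 5)) ^ B * (q ^ (3 * r + 5)) ^ 2 := by
    rw [pow_mul, pow_add]
  have hB : 1 ≤ (q ^ (3 * r + 5)) ^ B := Nat.one_le_pow _ _ (by positivity)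
  rw [e4]
  generalize (q ^ (3 * r + 5)) ^ B = V at *
  rw [e]
  generalize q ^ (3 * r) = T at *
  have hρ1 : ρ + 1 ≤ q ^ 2 := by nlinarith
  have h1 : q * W ≤ q * T := Nat.mul_le_mul_left _ hw
  have h2 : (ρ + 1) * (q * W) ≤ T * q ^ 3 := by
    calc (ρ + 1) * (q * W) ≤ q ^ 2 * (q * T) := Nat.mul_le_mul hρ1 h1
      _ = _ := by ring
  have hq2 : 4 ≤ q ^ 2 := by nlinarith
  have h3 : q * W + 1 ≤ T * q ^ 3 := by nlinarith [Nat.mul_le_mul hpos hq]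
  have h4 : (ρ + 1) * (q * W) + q * W + 1 ≤ T * q ^ 4 := by
    have : T * q ^ 3 * 2 ≤ T * q ^ 3 * q := Nat.mul_le_mul_left _ hq
    nlinarith
  refine ⟨?_, ?_, ?_, ?_⟩
  · calc _ ≤ q * (T * q ^ 4) := Nat.mul_le_mul hc h4
      _ = _ := by ring
  · calc _ ≤ T * q ^ 4 := by omega
      _ ≤ _ := Nat.mul_le_mul_left _ (Nat.pow_le_pow_right (by omega) (by omega))
  · have h5 : V + (ρ + 1) * (q * W) ≤ V * (T * q ^ 4) := by
      have a1 : T * q ^ 3 ≤ V * (T * q ^ 3) := Nat.le_mul_of_pos_left _ hB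
      have a2 : V * 1 ≤ V * (T * q ^ 3) := Nat.mul_le_mul_left _
        (Nat.mul_pos hpos (by positivity))
      have a3 : V * (T * q ^ 3) * 2 ≤ V * (T * q ^ 3) * q := Nat.mul_le_mul_left _ hq
      nlinarith
    calc _ ≤ V * (T * q ^ 4) * T := Nat.mul_le_mul h5 hw
      _ = V * (T ^ 2 * q ^ 4) := by ring
      _ ≤ V * (T ^ 2 * q ^ 10) := Nat.mul_le_mul_left _ (Nat.mul_le_mul_left _
        (Nat.pow_le_pow_right (by omega) (by omega)))
      _ = _ := by ring
  · calc _ ≤ q ^ 2 * q := Nat.mul_le_mul_right _ hρ1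
      _ = 1 * (1 * q ^ 3) := by ring
      _ ≤ V * (T ^ 2 * q ^ 10) := Nat.mul_le_mul hB (Nat.mul_le_mul (Nat.one_le_pow _ _ hpos)
        (Nat.pow_le_pow_right (by omega) (by omega)))
      _ = _ := by ring

/-- Hermann's bound for syzygies, by induction on the number of variables. After a shear a maximal
minor is monic in the first variable, so a kernel vector reduces to one of bounded degree in that
variable; its coefficients solve a larger linear system in one variable less. -/
theorem hermann {k : Type*} [Field k] (r : ℕ) : ∀ (q : ℕ), 2 ≤ q → ∀ {ι κ : Type}
    [Fintype ι] [Fintype κ] (A : Matrix ι κ (MvPolynomial (Fin r) k)), Fintype.card ι ≤ q →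
    (∀ i j, (A i j).totalDegree ≤ q) → ∀ v, A.mulVec v = 0 →
    v ∈ Submodule.span (MvPolynomial (Fin r) k)
      {w | A.mulVec w = 0 ∧ ∀ j, (w j).totalDegree ≤ q ^ hermannExp r} := by
  induction r with
  | zero =>
    intro q hq ι κ _ _ A hc hA v hv
    refine Submodule.subset_span ⟨hv, fun j => ?_⟩
    rw [totalDegree_eq_zero_iff_eq_C.mpr (eq_C_of_isEmpty _)]
    exact Nat.zero_le _
  | succ r ih =>
    intro q hq ι κ _ _ A hc hA v hv
    classical
    obtain ⟨ρ, f, g, hρ, hdet, hmax⟩ := exists_max_minor A (Fintype.card ι)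
      (fun ρ f g h => minor_le_rows A ρ f g h)
    set W := q ^ 2 + 2 with hW
    obtain ⟨ar1, ar2, ar3, ar4⟩ := hermann_arith q r (hermannExp r) ρ (Fintype.card ι) hq
      (hρ.trans hc) hc
    rw [← hW] at ar1 ar2 ar3
    set d1 := q * W ^ r with hd1
    set L := (ρ + 1) * d1 with hL
    obtain ⟨φ, hφ⟩ : ∃ φ : MvPolynomial (Fin (r + 1)) k →+* Polynomial (MvPolynomial (Fin r) k),
        ∀ p, φ p = finSuccEquiv k r (shear W 1 p) :=
      ⟨((finSuccEquiv k r).toAlgHom.comp (shear W 1)).toRingHom, fun _ => rfl⟩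
    obtain ⟨ψ, hψ⟩ : ∃ ψ : Polynomial (MvPolynomial (Fin r) k) →+* MvPolynomial (Fin (r + 1)) k,
        ∀ p, ψ p = shear W (-1) ((finSuccEquiv k r).symm p) :=
      ⟨((shear W (-1)).comp (finSuccEquiv k r).symm.toAlgHom).toRingHom, fun _ => rfl⟩
    have hψφ : ∀ p, ψ (φ p) = p := by
      intro p
      rw [hψ, hφ, AlgEquiv.symm_apply_apply]
      simpa using shear_shear_neg W (-1 : k) p
    have hW1 : 1 ≤ W := by omega
    have hAs : ∀ i j, (shear W 1 (A i j)).totalDegree ≤ d1 := fun i j =>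
      (totalDegree_shear_le W hW1 1 _).trans (Nat.mul_le_mul_right _ (hA i j))
    have hAd : ∀ i j, ((A.map φ) i j).natDegree ≤ d1 := by
      intro i j
      rw [Matrix.map_apply, hφ, natDegree_finSuccEquiv]
      exact (degreeOf_le_totalDegree _ _).trans (hAs i j)
    have hAc : ∀ i j m, (((A.map φ) i j).coeff m).totalDegree ≤ d1 := by
      intro i j m
      rw [Matrix.map_apply, hφ]
      by_cases h0 : (finSuccEquiv k r (shear W 1 (A i j))).coeff m = 0
      · rw [h0]; simp
      · have := totalDegree_coeff_finSuccEquiv_add_le (shear W 1 (A i j)) m h0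
        have := hAs i j
        omega
    have hsub : (A.map φ).submatrix f g = φ.mapMatrix (A.submatrix f g) := rfl
    have hunit : IsUnit ((A.map φ).submatrix f g).det.leadingCoeff := by
      rw [hsub, ← RingHom.map_det, hφ]
      obtain ⟨a, ha, e⟩ := shear_leadingCoeff W _ hdet (by
        have := totalDegree_det_le (A.submatrix f g) q fun _ _ => hA _ _
        have : ρ * q ≤ q * q := Nat.mul_le_mul_right _ (hρ.trans hc)
        rw [hW, sq]; omega)
      rw [e]
      exact (IsUnit.mk0 a ha).map C
    have hmax' : ∀ i j, ((A.map φ).submatrix f g).det * (A.map φ) i j =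
        ∑ l, (A.map φ) i (g l) *
          (∑ l', ((A.map φ).submatrix f g).adjugate l l' * (A.map φ) (f l') j) := by
      intro i j
      rw [hsub, ← RingHom.map_det, ← RingHom.map_adjugate]
      have := congrArg φ (hmax i j)
      simpa only [map_mul, map_sum, RingHom.mapMatrix_apply, Matrix.map_apply] using this
    have hv' : (A.map φ).mulVec (φ ∘ v) = 0 := by
      funext i
      rw [← RingHom.map_mulVec, hv]
      simp
    obtain ⟨Q, v', h1, h2, h3⟩ := poly_reduce (A.map φ) f g d1 hAd hmax' hunit _ hv'
    have hvv : v = ∑ j, ψ (Q j) • kerVec A f g j + fun c => ψ (v' c) := by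
      funext c
      have := congrArg ψ (h1 c)
      simp only [Function.comp, hψφ, map_add, map_sum, map_mul, map_kerVec] at this
      simpa [Finset.sum_apply] using this
    rw [hvv]
    refine add_mem (sum_mem fun j _ => Submodule.smul_mem _ _ (Submodule.subset_span ⟨?_, ?_⟩)) ?_
    · exact mulVec_kerVec A f g hmax j
    · intro c
      exact (totalDegree_kerVec_le A f g q hA j c).trans ar4
    -- The kernel vector `v'` of bounded degree in the first variable is unrolled into coefficients.
    let A2 : Matrix (ι × Fin (L + d1 + 1)) (κ × Fin (L + 1)) (MvPolynomial (Fin r) k) :=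
      fun x y => ((A.map φ) x.1 y.1 * Polynomial.X ^ y.2.1).coeff x.2.1
    let roll : (κ × Fin (L + 1) → MvPolynomial (Fin r) k) → κ → Polynomial (MvPolynomial (Fin r) k) :=
      fun w j => ∑ a : Fin (L + 1), Polynomial.C (w (j, a)) * Polynomial.X ^ a.1
    have hcoef : ∀ w i m, ((A.map φ).mulVec (roll w) i).coeff m =
        ∑ y : κ × Fin (L + 1), ((A.map φ) i y.1 * Polynomial.X ^ y.2.1).coeff m * w y := by
      intro w i m
      simp only [Matrix.mulVec, dotProduct, roll, Finset.mul_sum, Polynomial.finsetSum_coeff]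
      rw [Fintype.sum_prod_type]
      refine Finset.sum_congr rfl fun j _ => Finset.sum_congr rfl fun a _ => ?_
      rw [mul_left_comm, Polynomial.coeff_C_mul, mul_comm]
    have hroll : ∀ w, A2.mulVec w = 0 → (A.map φ).mulVec (roll w) = 0 := by
      intro w hw
      funext i
      ext1 m
      rw [Pi.zero_apply, Polynomial.coeff_zero]
      by_cases hm : m < L + d1 + 1
      · rw [hcoef]
        exact congrFun hw (i, ⟨m, hm⟩)
      · apply Polynomial.coeff_eq_zero_of_natDegree_lt
        refine lt_of_le_of_lt (b := L + d1) ?_ (by omega)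
        refine Polynomial.natDegree_sum_le_of_forall_le _ _ fun j _ => ?_
        refine Polynomial.natDegree_mul_le.trans ?_
        rw [add_comm L]
        refine add_le_add (hAd _ _) (Polynomial.natDegree_sum_le_of_forall_le _ _ fun a _ => ?_)
        exact (Polynomial.natDegree_C_mul_X_pow_le _ _).trans (by omega)
    have hunroll : v' = roll fun y => (v' y.1).coeff y.2.1 := by
      funext j
      simp only [roll]
      rw [Fin.sum_univ_eq_sum_range (fun a => Polynomial.C ((v' j).coeff a) * Polynomial.X ^ a)]
      exact (v' j).as_sum_range_C_mul_X_pow' (by have := h3 j; omega)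
    have hk2 : A2.mulVec (fun y => (v' y.1).coeff y.2.1) = 0 := by
      funext x
      have := hcoef (fun y => (v' y.1).coeff y.2.1) x.1 x.2.1
      rw [← hunroll, h2] at this
      simpa [Matrix.mulVec, dotProduct, A2] using this.symm
    have hspan := ih (q ^ (3 * r + 5)) (hq.trans (Nat.le_self_pow (by omega) _)) A2
      (by rw [Fintype.card_prod, Fintype.card_fin]; exact ar1)
      (by
        intro x y
        simp only [A2]
        rw [Polynomial.coeff_mul_X_pow']
        split_ifs
        · exact (hAc _ _ _).trans ar2
        · simp) _ hk2
    have key : ∀ w ∈ Submodule.span (MvPolynomial (Fin r) k)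
        {w | A2.mulVec w = 0 ∧ ∀ j, (w j).totalDegree ≤ (q ^ (3 * r + 5)) ^ hermannExp r},
        (fun c => ψ (roll w c)) ∈ Submodule.span (MvPolynomial (Fin (r + 1)) k)
          {w | A.mulVec w = 0 ∧ ∀ j, (w j).totalDegree ≤ q ^ hermannExp (r + 1)} := by
      intro w hw
      induction hw using Submodule.span_induction with
      | mem w hw =>
        refine Submodule.subset_span ⟨?_, fun j => ?_⟩
        · funext i
          have := congrArg ψ (congrFun (hroll w hw.1) i)
          simpa only [Matrix.mulVec, dotProduct, map_sum, map_mul, Matrix.map_apply, hψφ,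
            Pi.zero_apply, map_zero] using this
        · change (ψ (roll w j)).totalDegree ≤ _
          rw [hψ]
          refine (totalDegree_shear_le W hW1 _ _).trans ?_
          refine (Nat.mul_le_mul_right _ (totalDegree_finSuccEquiv_symm_sum _ fun a => hw.2 _)).trans
            ar3
      | zero =>
        convert Submodule.zero_mem _ using 1
        funext c; simp [roll]
      | add x y _ _ hx hy =>
        convert add_mem hx hy using 1
        funext c; simp [roll, add_mul, Finset.sum_add_distrib]
      | smul a x _ hx =>
        have e : (fun c => ψ (roll (a • x) c)) = ψ (Polynomial.C a) • fun c => ψ (roll x c) := by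
          funext c
          rw [Pi.smul_apply, smul_eq_mul, ← map_mul]
          simp only [roll, Finset.mul_sum, Pi.smul_apply, smul_eq_mul, map_mul, mul_assoc]
        rw [e]
        exact Submodule.smul_mem _ _ hx
    have := key _ hspan
    rwa [← hunroll] at this

/-! ### From primality in bounded degree to non-zero-divisors -/

/-- If `I` is prime up to `b`, a polynomial of small degree outside `I` is a non-zero-divisor
modulo `I`: the relations `a * g ∈ I` are generated by those of degree at most `b`. -/
theorem nzd_of_prime_up_to {k : Type*} [Field k] {n G b : ℕ} (hG : 2 ≤ G)
    (hb : G ^ hermannExp n ≤ b) (hGb : G ≤ b) (I : Ideal (MvPolynomial (Fin n) k))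
    (S : Set (MvPolynomial (Fin n) k)) (hgen : I = Ideal.span S)
    (hdeg : ∀ f ∈ S, f.totalDegree ≤ G)
    (hprime : ∀ f g : MvPolynomial (Fin n) k, f.totalDegree ≤ b → g.totalDegree ≤ b →
      f * g ∈ I → f ∈ I ∨ g ∈ I)
    (a : MvPolynomial (Fin n) k) (ha : a.totalDegree ≤ G) (haI : a ∉ I)
    (g : MvPolynomial (Fin n) k) (hg : a * g ∈ I) : g ∈ I := by
  have hg' := hg
  rw [hgen, Ideal.span, Submodule.mem_span_set'] at hg'
  obtain ⟨m, c, s, hs⟩ := hg'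
  let A : Matrix Unit (Fin (m + 1)) (MvPolynomial (Fin n) k) :=
    fun _ => Fin.cons a fun i => (s i : MvPolynomial (Fin n) k)
  have hAv : ∀ v, A.mulVec v = 0 ↔ a * v 0 + ∑ i, (s i : MvPolynomial (Fin n) k) * v i.succ = 0 := by
    intro v
    rw [funext_iff]
    simp [A, Matrix.mulVec, dotProduct, Fin.sum_univ_succ]
  have hv : A.mulVec (Fin.cons g fun i => - c i) = 0 := by
    rw [hAv]
    simp only [Fin.cons_zero, Fin.cons_succ, mul_neg, Finset.sum_neg_distrib]
    rw [← hs]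
    simp [mul_comm]
  have := hermann n G hG A (by simpa using by omega) (by
    intro i j
    cases j using Fin.cases with
    | zero => exact ha
    | succ j => exact hdeg _ (s j).2) _ hv
  have key : ∀ v ∈ Submodule.span (MvPolynomial (Fin n) k)
      {w | A.mulVec w = 0 ∧ ∀ j, (w j).totalDegree ≤ G ^ hermannExp n}, v 0 ∈ I := by
    intro v hv
    induction hv using Submodule.span_induction with
    | mem w hw =>
      have h1 := (hAv w).mp hw.1
      have h2 : a * w 0 ∈ I := by
        rw [eq_neg_of_add_eq_zero_left h1, hgen]
        exact neg_mem (sum_mem fun i _ => Ideal.mul_mem_right _ _ (Ideal.subset_span (s i).2))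
      exact (hprime a (w 0) (ha.trans hGb) ((hw.2 0).trans hb) h2).resolve_left haI
    | zero => exact zero_mem _
    | add x y _ _ hx hy => exact add_mem hx hy
    | smul t x _ hx => exact Ideal.mul_mem_left _ _ hx
  exact key _ this

/-! ### Normal forms modulo monic one-variable relations -/

section normalForm
variable {R : Type*} [CommRing R] {n e : ℕ}

variable (e) in
/-- The `R`-linear normal form modulo monic polynomials `q i` of degree `e` in the `i`-th variable:
a monomial goes to the product of the remainders of its one-variable factors, written in
coordinates indexed by the exponents in the box `[0, e) ^ n`. -/
noncomputable def nf (q : Fin n → Polynomial R) :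
    MvPolynomial (Fin n) R →ₗ[R] ((Fin n → Fin e) → R) :=
  (basisMonomials (Fin n) R).constr R fun α β =>
    ∏ i, ((Polynomial.X ^ α i : Polynomial R) %ₘ q i).coeff (β i)

/-- The polynomial with prescribed coefficients on the box `[0, e) ^ n`. -/
noncomputable def boxPoly : ((Fin n → Fin e) → R) →ₗ[R] MvPolynomial (Fin n) R where
  toFun c := ∑ β, C (c β) * ∏ i, X i ^ (β i).1
  map_add' c c' := by simp [add_mul, Finset.sum_add_distrib]
  map_smul' t c := by simp [Finset.smul_sum, smul_eq_C_mul, mul_assoc]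

/-- The ideal generated by the `q i`, the `i`-th of them evaluated at the `i`-th variable. -/
noncomputable def relIdeal (q : Fin n → Polynomial R) : Ideal (MvPolynomial (Fin n) R) :=
  Ideal.span (Set.range fun i => Polynomial.aeval (X i : MvPolynomial (Fin n) R) (q i))

theorem boxPoly_apply (c : (Fin n → Fin e) → R) :
    boxPoly c = ∑ β, C (c β) * ∏ i, X i ^ (β i).1 := rfl

theorem nf_monomial (q : Fin n → Polynomial R) (α : Fin n →₀ ℕ) (β : Fin n → Fin e) :
    nf e q (monomial α 1) β = ∏ i, ((Polynomial.X ^ α i : Polynomial R) %ₘ q i).coeff (β i) := by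
  have := (basisMonomials (Fin n) R).constr_basis R (fun α (β : Fin n → Fin e) =>
    ∏ i, ((Polynomial.X ^ α i : Polynomial R) %ₘ q i).coeff (β i)) α
  rw [coe_basisMonomials] at this
  exact congrFun this β

theorem monomial_one_eq_prod (α : Fin n →₀ ℕ) :
    (monomial α 1 : MvPolynomial (Fin n) R) = ∏ i, X i ^ α i := by
  rw [monomial_eq, C_1, one_mul, Finsupp.prod_fintype _ _ fun i => pow_zero _]

/-- Linear statements about polynomials can be checked on monomials. -/
theorem monomial_induction {P : MvPolynomial (Fin n) R → Prop} (p : MvPolynomial (Fin n) R)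
    (hm : ∀ α, P (monomial α 1)) (hadd : ∀ p q, P p → P q → P (p + q))
    (hsmul : ∀ (c : R) p, P p → P (c • p)) : P p := by
  induction p using MvPolynomial.induction_on' with
  | monomial α c =>
    have : monomial α c = c • (monomial α 1 : MvPolynomial (Fin n) R) := by
      rw [smul_monomial, smul_eq_mul, mul_one]
    rw [this]; exact hsmul _ _ (hm α)
  | add p q hp hq => exact hadd _ _ hp hq

variable {q : Fin n → Polynomial R}

theorem boxPoly_single (α : Fin n → Fin e) :
    boxPoly (R := R) (Pi.single α 1) = ∏ i, X i ^ (α i).1 := by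
  classical
  rw [boxPoly_apply, Finset.sum_eq_single α]
  · simp
  · intro b _ hb; simp [Pi.single_eq_of_ne hb]
  · simp

theorem sub_boxPoly_nf_mem (hq : ∀ i, (q i).Monic) (he : ∀ i, (q i).natDegree = e)
    (p : MvPolynomial (Fin n) R) : p - boxPoly (nf e q p) ∈ relIdeal q := by
  induction p using monomial_induction with
  | hm α =>
    have h1 : boxPoly (nf e q (monomial α 1)) =
        ∏ i, Polynomial.aeval (X i : MvPolynomial (Fin n) R)
          ((Polynomial.X ^ α i : Polynomial R) %ₘ q i) := by
      have : ∀ i, Polynomial.aeval (X i : MvPolynomial (Fin n) R)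
          ((Polynomial.X ^ α i : Polynomial R) %ₘ q i) =
          ∑ j : Fin e, C (((Polynomial.X ^ α i : Polynomial R) %ₘ q i).coeff j) * X i ^ j.1 := by
        intro i
        by_cases h1 : q i = 1
        · have : e = 0 := by rw [← he i, h1]; simp
          subst this
          simp [h1]
        · have hlt := Polynomial.natDegree_modByMonic_lt (Polynomial.X ^ α i) (hq i) h1
          rw [he i] at hlt
          rw [Polynomial.aeval_eq_sum_range' hlt, Fin.sum_univ_eq_sum_range
            (fun j => C (((Polynomial.X ^ α i : Polynomial R) %ₘ q i).coeff j) * X i ^ j)]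
          simp [smul_eq_C_mul]
      rw [Finset.prod_congr rfl fun i _ => this i, Finset.prod_univ_sum, Fintype.piFinset_univ,
        boxPoly_apply]
      refine Finset.sum_congr rfl fun β _ => ?_
      rw [nf_monomial, Finset.prod_mul_distrib, map_prod]
    rw [h1, monomial_one_eq_prod, ← Ideal.Quotient.eq, map_prod, map_prod]
    refine Finset.prod_congr rfl fun i _ => Ideal.Quotient.eq.mpr ?_
    have : (X i : MvPolynomial (Fin n) R) ^ α i = Polynomial.aeval (X i : MvPolynomial (Fin n) R)
        (Polynomial.X ^ α i : Polynomial R) := by simp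
    rw [this, ← map_sub]
    have h2 := Polynomial.modByMonic_add_div (Polynomial.X ^ α i : Polynomial R) (q i)
    have h3 : (Polynomial.X ^ α i : Polynomial R) - Polynomial.X ^ α i %ₘ q i =
        q i * (Polynomial.X ^ α i /ₘ q i) := by linear_combination -h2
    rw [h3, map_mul]
    exact Ideal.mul_mem_right _ _ (Ideal.subset_span ⟨i, rfl⟩)
  | hadd p p' hp hp' =>
    rw [map_add, map_add]
    convert add_mem hp hp' using 1; ring
  | hsmul c p hp =>
    rw [map_smul, map_smul, ← smul_sub, smul_eq_C_mul]
    exact Ideal.mul_mem_left _ _ hp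

theorem nf_boxPoly (hq : ∀ i, (q i).Monic) (he : ∀ i, (q i).natDegree = e)
    (c : (Fin n → Fin e) → R) : nf e q (boxPoly c) = c := by
  classical
  rcases subsingleton_or_nontrivial R with hR | hR
  · exact Subsingleton.elim _ _
  have h : ∀ α : Fin n → Fin e, nf e q (∏ i, X i ^ (α i).1) = Pi.single α 1 := by
    intro α
    funext β
    have : (∏ i, X i ^ (α i).1 : MvPolynomial (Fin n) R) =
        monomial (Finsupp.equivFunOnFinite.symm fun i => (α i).1) 1 := by
      rw [monomial_one_eq_prod]; rfl
    rw [this, nf_monomial]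
    have h1 : ∀ i, ((Polynomial.X ^ (α i).1 : Polynomial R) %ₘ q i) =
        Polynomial.X ^ (α i).1 := by
      intro i
      rw [Polynomial.modByMonic_eq_self_iff (hq i), Polynomial.degree_X_pow,
        Polynomial.degree_eq_natDegree (hq i).ne_zero, he i]
      exact_mod_cast (α i).2
    simp only [Finsupp.equivFunOnFinite_symm_apply_apply, h1, Polynomial.coeff_X_pow]
    by_cases hb : β = α
    · subst hb; simp
    · rw [Pi.single_eq_of_ne hb]
      obtain ⟨i, hi⟩ := Function.ne_iff.mp hb
      exact Finset.prod_eq_zero (Finset.mem_univ i) (if_neg fun h => hi (Fin.ext h))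
  rw [boxPoly_apply, map_sum]
  simp only [← smul_eq_C_mul, map_smul, h]
  funext β
  simp [Finset.sum_apply, Pi.single_apply]

theorem nf_eq_zero (p : MvPolynomial (Fin n) R) (hp : p ∈ relIdeal q) (hq : ∀ i, (q i).Monic) :
    nf e q p = 0 := by
  have key : ∀ i (p : MvPolynomial (Fin n) R),
      nf e q (p * Polynomial.aeval (X i : MvPolynomial (Fin n) R) (q i)) = 0 := by
    intro i p
    induction p using monomial_induction with
    | hm α =>
      funext β
      have h1 : (monomial α 1 : MvPolynomial (Fin n) R) *
          Polynomial.aeval (X i : MvPolynomial (Fin n) R) (q i) =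
          ∑ j ∈ Finset.range ((q i).natDegree + 1),
            (q i).coeff j • monomial (α + Finsupp.single i j) 1 := by
        rw [Polynomial.aeval_eq_sum_range, Finset.mul_sum]
        refine Finset.sum_congr rfl fun j _ => ?_
        rw [mul_smul_comm, X_pow_eq_monomial, monomial_mul, one_mul]
      rw [h1, map_sum, Finset.sum_apply]
      simp only [map_smul, Pi.smul_apply, nf_monomial, smul_eq_mul]
      have h2 : ∀ j, ∏ i', ((Polynomial.X ^ (α + Finsupp.single i j) i' : Polynomial R)
          %ₘ q i').coeff (β i') =
          ((Polynomial.X ^ (α i + j) : Polynomial R) %ₘ q i).coeff (β i) *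
          ∏ i' ∈ Finset.univ.erase i, ((Polynomial.X ^ α i' : Polynomial R)
            %ₘ q i').coeff (β i') := by
        intro j
        rw [← Finset.mul_prod_erase _ _ (Finset.mem_univ i)]
        congr 1
        · simp
        · refine Finset.prod_congr rfl fun i' hi' => ?_
          simp [(Finset.ne_of_mem_erase hi').symm]
      simp only [h2, ← mul_assoc]
      rw [← Finset.sum_mul]
      have h3 : ∑ j ∈ Finset.range ((q i).natDegree + 1),
          (q i).coeff j * ((Polynomial.X ^ (α i + j) : Polynomial R) %ₘ q i).coeff (β i) = 0 := by
        have h4 : (Polynomial.X ^ α i * q i) %ₘ q i = 0 :=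
          (Polynomial.modByMonic_eq_zero_iff_dvd (hq i)).mpr (dvd_mul_left _ _)
        have h5 : (Polynomial.X ^ α i * q i) =
            ∑ j ∈ Finset.range ((q i).natDegree + 1),
              (q i).coeff j • (Polynomial.X ^ (α i + j) : Polynomial R) := by
          conv_lhs => rw [(q i).as_sum_range_C_mul_X_pow, Finset.mul_sum]
          refine Finset.sum_congr rfl fun j _ => ?_
          rw [Polynomial.smul_eq_C_mul]; ring
        have h6 := congrArg (Polynomial.modByMonicHom (q i)) h5
        rw [map_sum] at h6
        simp only [map_smul, Polynomial.modByMonicHom_apply, h4] at h6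
        have h7 := congrArg (fun x => Polynomial.coeff x (β i)) h6
        simpa [Polynomial.finsetSum_coeff] using h7.symm
      rw [h3, zero_mul]; rfl
    | hadd p p' hp hp' => rw [add_mul, map_add, hp, hp', add_zero]
    | hsmul c p hp => rw [smul_mul_assoc, map_smul, hp, smul_zero]
  induction hp using Submodule.span_induction with
  | mem x hx =>
    obtain ⟨i, rfl⟩ := hx
    simpa using key i 1
  | zero => simp
  | add x y _ _ hx hy => rw [map_add, hx, hy, add_zero]
  | smul t x hx hx' =>
    rw [smul_eq_mul]
    clear hx'
    obtain ⟨c, hc⟩ := (Ideal.mem_span_range_iff_exists_fun).mp hx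
    rw [← hc, Finset.mul_sum, map_sum]
    refine Finset.sum_eq_zero fun i _ => ?_
    rw [← mul_assoc]; exact key _ _

theorem nf_mul (hq : ∀ i, (q i).Monic) (he : ∀ i, (q i).natDegree = e)
    (p p' : MvPolynomial (Fin n) R) :
    nf e q (p * p') = nf e q (boxPoly (nf e q p) * p') := by
  rw [← sub_eq_zero, ← map_sub, ← sub_mul]
  exact nf_eq_zero _ (Ideal.mul_mem_right _ _ (sub_boxPoly_nf_mem hq he p)) hq

end normalForm

section degree
variable {k : Type*} [Field k] {r n e : ℕ}

/-- Each step of the reduction of `X ^ a` raises the degree of the coefficients by at most `h`. -/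
theorem totalDegree_coeff_X_pow_modByMonic (q : Polynomial (MvPolynomial (Fin r) k)) (h : ℕ)
    (hq : q.Monic) (hc : ∀ j, (q.coeff j).totalDegree ≤ h) (a : ℕ) :
    ∀ m, (((Polynomial.X ^ a : Polynomial (MvPolynomial (Fin r) k)) %ₘ q).coeff m).totalDegree
      ≤ a * h := by
  induction a using Nat.strong_induction_on with
  | _ a ih =>
    intro m
    by_cases ha : a < q.natDegree
    · rw [(Polynomial.modByMonic_eq_self_iff hq).mpr]
      · rw [Polynomial.coeff_X_pow]; split_ifs <;> simp
      · rw [Polynomial.degree_X_pow, Polynomial.degree_eq_natDegree hq.ne_zero]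
        exact_mod_cast ha
    · push Not at ha
      have h4 : (Polynomial.X ^ (a - q.natDegree) * q) %ₘ q = 0 :=
        (Polynomial.modByMonic_eq_zero_iff_dvd hq).mpr (dvd_mul_left _ _)
      have h5 : (Polynomial.X ^ (a - q.natDegree) * q) =
          ∑ j ∈ Finset.range q.natDegree,
            q.coeff j • (Polynomial.X ^ (a - q.natDegree + j) :
              Polynomial (MvPolynomial (Fin r) k)) + Polynomial.X ^ a := by
        generalize hN : a - q.natDegree = N
        conv_lhs => rw [q.as_sum_range_C_mul_X_pow, Finset.mul_sum]
        rw [Finset.sum_range_succ]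
        congr 1
        · refine Finset.sum_congr rfl fun j _ => ?_
          rw [Polynomial.smul_eq_C_mul]; ring
        · rw [hq.coeff_natDegree, Polynomial.C_1, one_mul, ← pow_add]
          congr 1; omega
      have h6 := congrArg (Polynomial.modByMonicHom q) h5
      rw [map_add, map_sum] at h6
      simp only [map_smul, Polynomial.modByMonicHom_apply, h4] at h6
      rw [eq_neg_of_add_eq_zero_right h6.symm, Polynomial.coeff_neg, totalDegree_neg,
        Polynomial.finsetSum_coeff]
      refine totalDegree_sum_le _ _ _ fun j hj => ?_
      have hj' := Finset.mem_range.mp hj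
      rw [Polynomial.coeff_smul, smul_eq_mul]
      have h8 := ih (a - q.natDegree + j) (by omega) m
      refine (totalDegree_mul_le_of (hc j) h8).trans ?_
      calc h + (a - q.natDegree + j) * h = (a - q.natDegree + j + 1) * h := by ring
        _ ≤ a * h := Nat.mul_le_mul_right _ (by omega)

/-- Weighted degree at most `D`: the coefficients count with their total degree, each variable
with weight `h`. -/
def WDeg (h : ℕ) (p : MvPolynomial (Fin n) (MvPolynomial (Fin r) k)) (D : ℕ) : Prop :=
  ∀ α, coeff α p ≠ 0 → (coeff α p).totalDegree + (∑ i, α i) * h ≤ D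

theorem WDeg.mono {h D D' : ℕ} {p : MvPolynomial (Fin n) (MvPolynomial (Fin r) k)}
    (hp : WDeg h p D) (hD : D ≤ D') : WDeg h p D' := fun α hα => (hp α hα).trans hD

theorem WDeg.zero {h D : ℕ} : WDeg h (0 : MvPolynomial (Fin n) (MvPolynomial (Fin r) k)) D :=
  fun α hα => absurd (coeff_zero α) hα

theorem WDeg.add {h D : ℕ} {p q : MvPolynomial (Fin n) (MvPolynomial (Fin r) k)}
    (hp : WDeg h p D) (hq : WDeg h q D) : WDeg h (p + q) D := by
  intro α hα
  rw [coeff_add] at hα ⊢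
  by_cases h1 : coeff α p = 0
  · rw [h1, zero_add] at hα ⊢; exact hq α hα
  by_cases h2 : coeff α q = 0
  · rw [h2, add_zero] at hα ⊢; exact hp α hα
  have := totalDegree_add (coeff α p) (coeff α q)
  have := hp α h1
  have := hq α h2
  omega

theorem WDeg.sum {h D : ℕ} {ι : Type*} (s : Finset ι)
    (p : ι → MvPolynomial (Fin n) (MvPolynomial (Fin r) k))
    (hp : ∀ i ∈ s, WDeg h (p i) D) : WDeg h (∑ i ∈ s, p i) D := by
  classical
  induction s using Finset.induction_on with
  | empty => exact WDeg.zero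
  | insert a s ha ih =>
    rw [Finset.sum_insert ha]
    exact (hp a (Finset.mem_insert_self _ _)).add
      (ih fun i hi => hp i (Finset.mem_insert_of_mem hi))

theorem WDeg.mul {h D D' : ℕ} {p q : MvPolynomial (Fin n) (MvPolynomial (Fin r) k)}
    (hp : WDeg h p D) (hq : WDeg h q D') : WDeg h (p * q) (D + D') := by
  classical
  intro α hα
  rw [coeff_mul] at hα ⊢
  obtain ⟨x0, hx0, hx0'⟩ := Finset.exists_ne_zero_of_sum_ne_zero hα
  have aux : ∀ x ∈ Finset.HasAntidiagonal.antidiagonal α, coeff x.1 p * coeff x.2 q ≠ 0 →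
      (coeff x.1 p * coeff x.2 q).totalDegree + (∑ i, α i) * h ≤ D + D' := by
    intro x hx hne
    have h1 := hp x.1 (left_ne_zero_of_mul hne)
    have h2 := hq x.2 (right_ne_zero_of_mul hne)
    have h3 := totalDegree_mul (coeff x.1 p) (coeff x.2 q)
    rw [← Finset.HasAntidiagonal.mem_antidiagonal.mp hx]
    simp only [Finsupp.add_apply, Finset.sum_add_distrib, add_mul]
    omega
  have hle : (∑ i, α i) * h ≤ D + D' := le_trans (Nat.le_add_left _ _) (aux x0 hx0 hx0')
  have : (∑ x ∈ Finset.HasAntidiagonal.antidiagonal α, coeff x.1 p * coeff x.2 q).totalDegree ≤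
      D + D' - (∑ i, α i) * h := by
    refine totalDegree_sum_le _ _ _ fun x hx => ?_
    by_cases h0 : coeff x.1 p * coeff x.2 q = 0
    · rw [h0]; simp
    · have := aux x hx h0; omega
  omega

theorem WDeg.C {h : ℕ} (c : MvPolynomial (Fin r) k) {D : ℕ} (hc : c.totalDegree ≤ D) :
    WDeg (n := n) h (MvPolynomial.C c) D := by
  classical
  intro α hα
  rw [coeff_C] at hα ⊢
  split_ifs with h0
  · subst h0; simpa using hc
  · simp [h0] at hα

theorem WDeg.X {h : ℕ} (i : Fin n) :
    WDeg h (MvPolynomial.X i : MvPolynomial (Fin n) (MvPolynomial (Fin r) k)) h := by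
  classical
  intro α hα
  rw [coeff_X] at hα ⊢
  split_ifs with h0
  · subst h0; simp [Finsupp.single_apply]
  · simp [h0] at hα

theorem WDeg.pow {h D : ℕ} {p : MvPolynomial (Fin n) (MvPolynomial (Fin r) k)}
    (hp : WDeg h p D) (l : ℕ) : WDeg h (p ^ l) (l * D) := by
  induction l with
  | zero =>
    rw [pow_zero, ← MvPolynomial.C_1]
    exact WDeg.C _ (by simp)
  | succ l ih =>
    rw [pow_succ]
    exact (ih.mul hp).mono (by ring_nf; rfl)

theorem WDeg.prod {h : ℕ} {ι : Type*} (s : Finset ι)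
    (p : ι → MvPolynomial (Fin n) (MvPolynomial (Fin r) k)) (D : ι → ℕ)
    (hp : ∀ i ∈ s, WDeg h (p i) (D i)) : WDeg h (∏ i ∈ s, p i) (∑ i ∈ s, D i) := by
  classical
  induction s using Finset.induction_on with
  | empty => simpa using WDeg.C (n := n) (h := h) (1 : MvPolynomial (Fin r) k) (D := 0) (by simp)
  | insert a s ha ih =>
    rw [Finset.prod_insert ha, Finset.sum_insert ha]
    exact (hp a (Finset.mem_insert_self _ _)).mul
      (ih fun i hi => hp i (Finset.mem_insert_of_mem hi))

/-- Normal forms do not increase the weighted degree when each variable weighs as much as the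
coefficients of the relations. -/
theorem totalDegree_nf_le {q : Fin n → Polynomial (MvPolynomial (Fin r) k)} {h : ℕ}
    (hq : ∀ i, (q i).Monic) (hc : ∀ i j, ((q i).coeff j).totalDegree ≤ h) {D : ℕ}
    {p : MvPolynomial (Fin n) (MvPolynomial (Fin r) k)} (hp : WDeg h p D) (β : Fin n → Fin e) :
    (nf e q p β).totalDegree ≤ D := by
  conv_lhs => rw [p.as_sum]
  rw [map_sum, Finset.sum_apply]
  refine totalDegree_sum_le _ _ _ fun α hα => ?_
  have : monomial α (coeff α p) =
      coeff α p • (monomial α 1 : MvPolynomial (Fin n) (MvPolynomial (Fin r) k)) := by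
    rw [smul_monomial, smul_eq_mul, mul_one]
  rw [this, map_smul, Pi.smul_apply, nf_monomial, smul_eq_mul]
  refine (totalDegree_mul_le_of le_rfl ?_).trans (hp α (mem_support_iff.mp hα))
  refine (totalDegree_finsetProd _ _).trans ?_
  rw [Finset.sum_mul]
  exact Finset.sum_le_sum fun i _ =>
    totalDegree_coeff_X_pow_modByMonic (q i) h (hq i) (hc i) (α i) (β i)

end degree

/-! ### The bounded Noether normalisation of `I` -/

/-- The localisation of `T / J` away from `x`. -/
theorem exists_away.{u} {T : Type u} [CommRing T] (J : Ideal T) (x : T) :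
    ∃ (Λ : Type u) (_ : CommRing Λ) (π : T →+* Λ), IsUnit (π x) ∧ (∀ t ∈ J, π t = 0) ∧
      ∀ p, π p = 0 → ∃ M : ℕ, x ^ M * p ∈ J := by
  refine ⟨Localization.Away (Ideal.Quotient.mk J x), inferInstance,
    (algebraMap (T ⧸ J) _).comp (Ideal.Quotient.mk J), ?_, ?_, ?_⟩
  · exact IsLocalization.Away.algebraMap_isUnit (Ideal.Quotient.mk J x)
  · intro t ht
    rw [RingHom.comp_apply, Ideal.Quotient.eq_zero_iff_mem.mpr ht, map_zero]
  · intro p hp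
    rw [RingHom.comp_apply,
      IsLocalization.map_eq_zero_iff (Submonoid.powers (Ideal.Quotient.mk J x))] at hp
    obtain ⟨⟨_, M, rfl⟩, hM⟩ := hp
    refine ⟨M, ?_⟩
    rw [← Ideal.Quotient.eq_zero_iff_mem, ← hM]
    simp

/-- An ideal `I` of `k[x₁,…,xₙ]` together with variables `x_{f 0},…,x_{f (r-1)}` that are
independent modulo `I` in low degree, and monic relations of degree `e` over
`k[x_{f 0},…,x_{f (r-1)}]` for the multiples `s i * xᵢ` of all the variables. -/
structure NormData {k : Type*} [Field k] {n : ℕ} (r e d : ℕ)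
    (I : Ideal (MvPolynomial (Fin n) k)) where
  S : Set (MvPolynomial (Fin n) k)
  hS : I = Ideal.span S
  hSd : ∀ g ∈ S, g.totalDegree ≤ d
  f : Fin r → Fin n
  s : Fin n → MvPolynomial (Fin r) k
  q : Fin n → Polynomial (MvPolynomial (Fin r) k)
  hn : 1 ≤ n
  hd : 1 ≤ d
  he : 2 * n * d ≤ e
  s_ne : ∀ i, s i ≠ 0
  s_deg : ∀ i, (s i).totalDegree ≤ e
  s_f : ∀ j, s (f j) = 1
  q_monic : ∀ i, (q i).Monic
  q_natDegree : ∀ i, (q i).natDegree = e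
  q_coeff : ∀ i j, ((q i).coeff j).totalDegree ≤ e ^ 2
  q_mem : ∀ i, (q i).eval₂ (rename f : MvPolynomial (Fin r) k →ₐ[k] _).toRingHom
    (rename f (s i) * X i) ∈ I
  free : ∀ c : MvPolynomial (Fin r) k, c ≠ 0 → c.totalDegree ≤ e ^ (n + 4) → rename f c ∉ I
  nzd : ∀ a : MvPolynomial (Fin n) k, a.totalDegree ≤ e ^ (4 * n + 8) → a ∉ I →
    ∀ g, a * g ∈ I → g ∈ I

namespace NormData
variable {k : Type*} [Field k] {n r e d : ℕ} {I : Ideal (MvPolynomial (Fin n) k)}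
  (D : NormData r e d I)

theorem two_le_e (D : NormData r e d I) : 2 ≤ e := by
  have h := D.he
  have := Nat.mul_le_mul D.hn D.hd
  nlinarith

theorem two_mul_n_le (D : NormData r e d I) : 2 * n ≤ e := le_trans (Nat.le_mul_of_pos_right _ D.hd) D.he

theorem n_add_one_le (D : NormData r e d I) : n + 1 ≤ e := by have := D.two_mul_n_le; have := D.hn; omega

theorem pow_le_pow (D : NormData r e d I) {a b : ℕ} (h : a ≤ b) : e ^ a ≤ e ^ b :=
  Nat.pow_le_pow_right (by have := D.two_le_e; omega) h

/-- The substitution `yᵢ ↦ s i * xᵢ`, with coefficients in `k[x_{f 0},…,x_{f (r-1)}]`. -/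
noncomputable def θ : MvPolynomial (Fin n) (MvPolynomial (Fin r) k) →+* MvPolynomial (Fin n) k :=
  eval₂Hom (rename D.f : MvPolynomial (Fin r) k →ₐ[k] _).toRingHom
    fun i => rename D.f (D.s i) * X i

@[simp] theorem θ_C (c : MvPolynomial (Fin r) k) : D.θ (C c) = rename D.f c := by simp [θ]

@[simp] theorem θ_X (i : Fin n) : D.θ (X i) = rename D.f (D.s i) * X i := by simp [θ]

theorem θ_smul (c : MvPolynomial (Fin r) k) (p : MvPolynomial (Fin n) (MvPolynomial (Fin r) k)) :
    D.θ (c • p) = rename D.f c * D.θ p := by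
  rw [smul_eq_C_mul, map_mul, θ_C]

theorem θ_aeval_X (i : Fin n) (p : Polynomial (MvPolynomial (Fin r) k)) :
    D.θ (Polynomial.aeval (X i : MvPolynomial (Fin n) (MvPolynomial (Fin r) k)) p) =
    p.eval₂ (rename D.f : MvPolynomial (Fin r) k →ₐ[k] _).toRingHom
      (rename D.f (D.s i) * X i) := by
  rw [Polynomial.aeval_def, Polynomial.hom_eval₂, θ_X]
  congr 1
  refine RingHom.ext fun c => ?_
  simp [algebraMap_eq]

theorem θ_relIdeal {p : MvPolynomial (Fin n) (MvPolynomial (Fin r) k)} (hp : p ∈ relIdeal D.q) :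
    D.θ p ∈ I := by
  have : relIdeal D.q ≤ I.comap D.θ := by
    refine Ideal.span_le.mpr ?_
    rintro _ ⟨i, rfl⟩
    simp only [Ideal.coe_comap, Set.mem_preimage, SetLike.mem_coe]
    rw [θ_aeval_X]
    exact D.q_mem i
  exact this hp

/-- A polynomial and its normal form have congruent images modulo `I`. -/
theorem θ_boxPoly_nf (p : MvPolynomial (Fin n) (MvPolynomial (Fin r) k)) :
    D.θ p - D.θ (boxPoly (nf e D.q p)) ∈ I := by
  rw [← map_sub]
  exact D.θ_relIdeal (sub_boxPoly_nf_mem D.q_monic D.q_natDegree p)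

theorem θ_boxPoly_nf_mem_iff (p : MvPolynomial (Fin n) (MvPolynomial (Fin r) k)) :
    D.θ (boxPoly (nf e D.q p)) ∈ I ↔ D.θ p ∈ I :=
  ⟨fun h => by simpa using add_mem (D.θ_boxPoly_nf p) h,
    fun h => by simpa using sub_mem h (D.θ_boxPoly_nf p)⟩

/-- Every polynomial becomes, after multiplication by a power of the `s i`, the image of a
polynomial in the `s i * xᵢ`. -/
theorem exists_lift (p : MvPolynomial (Fin n) k) (N : ℕ) (hN : p.totalDegree ≤ N) :
    ∃ p' : MvPolynomial (Fin n) (MvPolynomial (Fin r) k),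
      D.θ p' = rename D.f (∏ i, D.s i) ^ N * p ∧ WDeg (e ^ 2) p' (n * N * e + N * e ^ 2) := by
  have hα : ∀ α ∈ p.support, ∑ i, α i ≤ N := by
    intro α hα
    refine le_trans ?_ ((le_totalDegree hα).trans hN)
    rw [Finsupp.sum_fintype _ _ fun _ => rfl]
  refine ⟨∑ α ∈ p.support, C (C (coeff α p) * ∏ i, D.s i ^ (N - α i)) * ∏ i, X i ^ α i, ?_, ?_⟩
  · rw [map_sum]
    conv_rhs => rw [p.as_sum, Finset.mul_sum]
    refine Finset.sum_congr rfl fun α h => ?_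
    rw [monomial_eq, Finsupp.prod_fintype _ _ fun i => pow_zero _]
    simp only [map_mul, θ_C, map_prod, map_pow, θ_X, rename_C, mul_pow, Finset.prod_mul_distrib]
    have : (∏ i, rename D.f (D.s i) ^ (N - α i)) * ∏ i, rename D.f (D.s i) ^ α i =
        (∏ i, rename D.f (D.s i)) ^ N := by
      rw [← Finset.prod_mul_distrib, ← Finset.prod_pow]
      refine Finset.prod_congr rfl fun i _ => ?_
      rw [← pow_add]
      congr 1
      have h1 := hα α h
      have h2 := Finset.single_le_sum (f := fun i => α i) (fun _ _ => Nat.zero_le _)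
        (Finset.mem_univ i)
      omega
    rw [← this]; ring
  · refine WDeg.sum _ _ fun α h => WDeg.mul (WDeg.C _ ?_) ?_
    · rw [mul_assoc]
      refine (totalDegree_mul_le_of (a := 0) (b := n * (N * e)) (by simp) ?_).trans (by omega)
      refine (totalDegree_finsetProd _ _).trans ?_
      refine (Finset.sum_le_sum (g := fun _ => N * e) fun i _ => ?_).trans (by simp)
      exact (totalDegree_pow_le_of (D.s_deg i) _).trans (Nat.mul_le_mul_right _ (by omega))
    · refine (WDeg.prod _ _ (fun i => α i * e ^ 2) fun i _ => (WDeg.X i).pow _).mono ?_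
      rw [← Finset.sum_mul]
      exact Nat.mul_le_mul_right _ (hα α h)

/-- The elements of low weighted degree that `θ` maps into `I`. -/
def lowRel : Set (MvPolynomial (Fin n) (MvPolynomial (Fin r) k)) :=
  {t | D.θ t ∈ I ∧ WDeg (e ^ 2) t (e ^ 3)}

/-- Up to a power of the `s i`, the relations of low weighted degree generate all relations. The
inverse of `θ` is constructed after inverting the `s i` and dividing by the low relations. -/
theorem saturate (p : MvPolynomial (Fin n) (MvPolynomial (Fin r) k)) (hp : D.θ p ∈ I) :
    ∃ M, C ((∏ i, D.s i) ^ M) * p ∈ Ideal.span D.lowRel := by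
  set J := Ideal.span D.lowRel with hJ
  obtain ⟨Λ, _, π, hu, hker, hπ⟩ := exists_away J (C (∏ i, D.s i))
  have hz : ∀ i, ∃ z, π (C (D.s i)) * z = 1 := fun i => by
    have : IsUnit (π (C (D.s i))) := isUnit_of_dvd_unit
      (map_dvd π (map_dvd C (Finset.dvd_prod_of_mem D.s (Finset.mem_univ i)))) hu
    exact this.exists_right_inv
  choose z hz using hz
  -- `μ` inverts `θ` by sending `xᵢ` to `yᵢ / sᵢ`
  let μ : MvPolynomial (Fin n) k →+* Λ := eval₂Hom ((π.comp C).comp C) fun i => z i * π (X i)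
  have he := D.two_le_e
  have hnd := D.he
  have hμf : ∀ c, μ (rename D.f c) = π (C c) := by
    intro c
    induction c using MvPolynomial.induction_on with
    | C a => simp [μ]
    | add p q hp hq => simp only [map_add, hp, hq]
    | mul_X c j hc =>
      have h1 : (X (D.f j) : MvPolynomial (Fin n) (MvPolynomial (Fin r) k)) - C (X j) ∈ J := by
        refine Ideal.subset_span ⟨?_, ?_⟩
        · simp [D.s_f]
        · rw [sub_eq_add_neg, ← map_neg]
          refine WDeg.mono (D := e ^ 2) ((WDeg.X _).add (WDeg.C _ ?_))
            (Nat.pow_le_pow_right (by omega) (by omega))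
          rw [totalDegree_neg, totalDegree_X]
          nlinarith
      have h2 := hker _ h1
      rw [map_sub, sub_eq_zero] at h2
      have h3 := hz (D.f j)
      rw [D.s_f, map_one, map_one, one_mul] at h3
      rw [map_mul, map_mul, hc, map_mul, map_mul, rename_X]
      congr 1
      simp [μ, h3, h2]
  have hμ : ∀ p, μ (D.θ p) = π p := by
    intro p
    induction p using MvPolynomial.induction_on with
    | C a => rw [θ_C, hμf]
    | add p q hp hq => simp only [map_add, hp, hq]
    | mul_X c j hc =>
      rw [map_mul, map_mul, hc, map_mul, θ_X, map_mul, hμf]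
      congr 1
      have : μ (X j) = z j * π (X j) := by simp [μ]
      rw [this, ← mul_assoc, hz, one_mul]
  have hI : I ≤ RingHom.ker μ := by
    rw [D.hS]
    refine Ideal.span_le.mpr fun g hg => ?_
    obtain ⟨g', h1, h2⟩ := D.exists_lift g d (D.hSd g hg)
    have h3 : g' ∈ J := by
      refine Ideal.subset_span ⟨?_, h2.mono ?_⟩
      · rw [h1]
        refine Ideal.mul_mem_left _ _ ?_
        rw [D.hS]
        exact Ideal.subset_span hg
      · have a1 : 2 * (n * d) ≤ e := by linarith
        have a2 : 2 * d ≤ e := by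
          refine le_trans ?_ hnd
          nlinarith [D.hn, Nat.zero_le d]
        have a3 : 2 * (n * d) * e ≤ e * e := Nat.mul_le_mul_right _ a1
        have a4 : 2 * d * e ^ 2 ≤ e * e ^ 2 := Nat.mul_le_mul_right _ a2
        have a5 : e * e * 1 ≤ e * e * e := Nat.mul_le_mul_left _ (by omega)
        nlinarith
    have h4 := hμ g'
    rw [hker _ h3, h1, map_mul, map_pow, hμf] at h4
    exact (hu.pow d).mul_right_eq_zero.mp h4
  have h0 : π p = 0 := by rw [← hμ]; exact hI hp
  obtain ⟨M, hM⟩ := hπ p h0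
  exact ⟨M, by rwa [map_pow]⟩

/-- The vectors of low degree on the box whose polynomial lies in the preimage of `I`. -/
def lowVec : Set ((Fin n → Fin e) → MvPolynomial (Fin r) k) :=
  {v | D.θ (boxPoly v) ∈ I ∧ ∀ β, (v β).totalDegree ≤ e ^ 4}

/-- Multiplying a low relation by the box monomials and reducing gives low vectors, so the normal
forms of the ideal of low relations are spanned by them. -/
theorem nf_mem_span_lowVec (p : MvPolynomial (Fin n) (MvPolynomial (Fin r) k))
    (hp : p ∈ Ideal.span D.lowRel) :
    nf e D.q p ∈ Submodule.span (MvPolynomial (Fin r) k) D.lowVec := by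
  have key : ∀ t ∈ D.lowRel, ∀ a, nf e D.q (a * t) ∈
      Submodule.span (MvPolynomial (Fin r) k) D.lowVec := by
    intro t ht a
    rw [nf_mul D.q_monic D.q_natDegree, boxPoly_apply, Finset.sum_mul, map_sum]
    refine sum_mem fun β _ => ?_
    rw [mul_assoc, ← smul_eq_C_mul, map_smul]
    refine Submodule.smul_mem _ _ (Submodule.subset_span ⟨?_, ?_⟩)
    · rw [θ_boxPoly_nf_mem_iff, map_mul]
      exact Ideal.mul_mem_left _ _ ht.1
    · intro β'
      refine totalDegree_nf_le D.q_monic D.q_coeff ((WDeg.mul (WDeg.prod _ _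
        (fun i => (β i).1 * e ^ 2) fun i _ => (WDeg.X i).pow _) ht.2).mono ?_) β'
      refine (add_le_add_left (Finset.sum_le_sum (g := fun _ => e * e ^ 2) fun i _ =>
        Nat.mul_le_mul_right _ (β i).2.le) _).trans ?_
      rw [Finset.sum_const, Finset.card_univ, Fintype.card_fin, smul_eq_mul]
      calc n * (e * e ^ 2) + e ^ 3 = (n + 1) * e ^ 3 := by ring
        _ ≤ e * e ^ 3 := Nat.mul_le_mul_right _ D.n_add_one_le
        _ = e ^ 4 := by ring
  obtain ⟨m, c, t, rfl⟩ := Submodule.mem_span_set'.mp hp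
  rw [map_sum]
  exact sum_mem fun i _ => key _ (t i).2 _

/-- Nonzero polynomials of low degree in the independent variables are non-zero-divisors modulo `I`. -/
theorem of_rename_mul_mem {c : MvPolynomial (Fin r) k} (hc : c ≠ 0)
    (hd : c.totalDegree ≤ e ^ (n + 4)) (g : MvPolynomial (Fin n) k) (h : rename D.f c * g ∈ I) :
    g ∈ I :=
  D.nzd _ ((totalDegree_rename_le _ _).trans (hd.trans (D.pow_le_pow (by omega))))
    (D.free c hc hd) g h

theorem of_prod_s_mul {N : ℕ} {g : MvPolynomial (Fin n) k}
    (h : rename D.f (∏ i, D.s i) ^ N * g ∈ I) : g ∈ I := by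
  have h1 : ∀ (T : Finset (Fin n)) (g : MvPolynomial (Fin n) k),
      rename D.f (∏ i ∈ T, D.s i) * g ∈ I → g ∈ I := by
    intro T
    classical
    induction T using Finset.induction_on with
    | empty => intro g hg; simpa using hg
    | insert a T ha ih =>
      intro g hg
      rw [Finset.prod_insert ha, map_mul, mul_assoc] at hg
      refine ih g (D.of_rename_mul_mem (D.s_ne a) ((D.s_deg a).trans ?_) _ hg)
      exact Nat.le_self_pow (by omega) _
  induction N with
  | zero => simpa using h
  | succ N ih =>
    rw [pow_succ', mul_assoc] at h
    exact ih (h1 _ _ h)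

/-- A vector that some nonzero multiple sends into `I` lies, up to torsion, in the span of the low
vectors. -/
theorem smul_mem_span_of_mem {v : (Fin n → Fin e) → MvPolynomial (Fin r) k}
    {t : MvPolynomial (Fin r) k} (ht : t ≠ 0) (hv : rename D.f t * D.θ (boxPoly v) ∈ I) :
    ∃ t' : MvPolynomial (Fin r) k, t' ≠ 0 ∧
      t' • v ∈ Submodule.span (MvPolynomial (Fin r) k) D.lowVec := by
  rw [← θ_smul, ← map_smul] at hv
  obtain ⟨M, hM⟩ := D.saturate _ hv
  have := D.nf_mem_span_lowVec _ hM
  rw [← smul_eq_C_mul, map_smul, nf_boxPoly D.q_monic D.q_natDegree, smul_smul] at this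
  exact ⟨_, mul_ne_zero (pow_ne_zero _ (Finset.prod_ne_zero_iff.mpr fun i _ => D.s_ne i)) ht, this⟩

theorem card_box : Fintype.card (Fin n → Fin e) = e ^ n := by simp

/-- The matrix whose columns are the relations of low degree. -/
def lowMatrix : Matrix (Fin n → Fin e) D.lowVec (MvPolynomial (Fin r) k) := fun β v => v.1 β

theorem lowMatrix_span : Set.range (fun j => fun i => D.lowMatrix i j) = D.lowVec := by
  ext v; simp [lowMatrix]

/-- A vector that the Cramer identity expresses through low vectors describes an element of `I`,
because the minor has low degree and is a non-zero-divisor. -/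
theorem θ_boxPoly_of_mul {ρ : ℕ} (f' : Fin ρ → (Fin n → Fin e)) (g' : Fin ρ → D.lowVec)
    (hdet : (D.lowMatrix.submatrix f' g').det ≠ 0) (hρ : ρ ≤ e ^ n)
    (v : (Fin n → Fin e) → MvPolynomial (Fin r) k)
    (hv : ∀ i, (D.lowMatrix.submatrix f' g').det * v i = ∑ l, D.lowMatrix i (g' l) *
      (∑ l', (D.lowMatrix.submatrix f' g').adjugate l l' * v (f' l'))) :
    D.θ (boxPoly v) ∈ I := by
  have h1 : (D.lowMatrix.submatrix f' g').det.totalDegree ≤ e ^ (n + 4) := by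
    refine (totalDegree_det_le _ (e ^ 4) fun i j => (g' j).2.2 _).trans ?_
    rw [pow_add]
    exact Nat.mul_le_mul_right _ hρ
  refine D.of_rename_mul_mem hdet h1 _ ?_
  rw [← θ_smul, ← map_smul]
  have : (D.lowMatrix.submatrix f' g').det • v = ∑ l,
      (∑ l', (D.lowMatrix.submatrix f' g').adjugate l l' * v (f' l')) • (g' l).1 := by
    funext i
    rw [Pi.smul_apply, smul_eq_mul, hv i, Finset.sum_apply]
    refine Finset.sum_congr rfl fun l _ => ?_
    rw [Pi.smul_apply, smul_eq_mul, mul_comm]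
    rfl
  rw [this, map_sum, map_sum]
  refine sum_mem fun l _ => ?_
  rw [map_smul, θ_smul]
  exact Ideal.mul_mem_left _ _ (g' l).2.1

/-- Nonzero polynomials in the independent variables are non-zero-divisors modulo `I`. -/
theorem torsionFree {t : MvPolynomial (Fin r) k} (ht : t ≠ 0) {p : MvPolynomial (Fin n) k}
    (hp : rename D.f t * p ∈ I) : p ∈ I := by
  obtain ⟨p', h1, -⟩ := D.exists_lift p _ le_rfl
  refine D.of_prod_s_mul (N := p.totalDegree) ?_
  rw [← h1, ← θ_boxPoly_nf_mem_iff]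
  set v := nf e D.q p' with hv
  have h2 : rename D.f t * D.θ (boxPoly v) ∈ I := by
    have h3 : D.θ (boxPoly (nf e D.q (t • p'))) ∈ I := by
      rw [θ_boxPoly_nf_mem_iff, θ_smul, h1, mul_left_comm]
      exact Ideal.mul_mem_left _ _ hp
    rwa [map_smul, map_smul, θ_smul] at h3
  obtain ⟨t', ht', hspan⟩ := D.smul_mem_span_of_mem ht h2
  obtain ⟨ρ, f', g', hρ, hdet, hmax⟩ := exists_max_minor D.lowMatrix _
    (fun ρ f g h => minor_le_rows D.lowMatrix ρ f g h)
  rw [card_box] at hρ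
  rw [← lowMatrix_span] at hspan
  exact D.θ_boxPoly_of_mul f' g' hdet hρ v
    (colSpan_of_smul D.lowMatrix f' g' hmax v t' ht' hspan)

/-- The relations among the box monomials form the kernel of a square matrix of low degree. -/
theorem exists_matrix : ∃ Φ : Matrix (Fin n → Fin e) (Fin n → Fin e) (MvPolynomial (Fin r) k),
    (∀ i j, (Φ i j).totalDegree ≤ e ^ (n + 5)) ∧
    ∀ v, Φ.mulVec v = 0 ↔ D.θ (boxPoly v) ∈ I := by
  classical
  obtain ⟨ρ, f', g', hρ, hdet, hmax⟩ := exists_max_minor D.lowMatrix _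
    (fun ρ f g h => minor_le_rows D.lowMatrix ρ f g h)
  rw [card_box] at hρ
  set B := D.lowMatrix.submatrix f' g' with hB
  have hbd : ∀ i j, (B i j).totalDegree ≤ e ^ 4 := fun i j => (g' j).2.2 _
  have he := D.two_le_e
  have hle : ρ * e ^ 4 + e ^ 4 ≤ e ^ (n + 5) := by
    have h1 : 1 ≤ e ^ n := Nat.one_le_pow _ _ (by omega)
    calc ρ * e ^ 4 + e ^ 4 = (ρ + 1) * e ^ 4 := by ring
      _ ≤ (e ^ n * e) * e ^ 4 := Nat.mul_le_mul_right _ (by nlinarith)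
      _ = _ := by ring
  refine ⟨fun i j => (if i = j then B.det else 0) -
    ∑ l, D.lowMatrix i (g' l) * ∑ l', B.adjugate l l' * (if f' l' = j then 1 else 0), ?_, ?_⟩
  · intro i j
    refine totalDegree_sub_le_of ?_ ?_
    · split_ifs
      · exact (totalDegree_det_le B _ hbd).trans (by omega)
      · simp
    · refine totalDegree_sum_le _ _ _ fun l _ => ?_
      refine (totalDegree_mul_le_of (b := ρ * e ^ 4) ((g' l).2.2 i) ?_).trans (by omega)
      refine totalDegree_sum_le _ _ _ fun l' _ => ?_
      refine (totalDegree_mul_le_of (b := 0) (totalDegree_adjugate_le B _ hbd _ _) ?_)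
      split_ifs <;> simp
  · intro v
    have hΦ : ∀ i, Matrix.mulVec (fun i j => (if i = j then B.det else 0) -
        ∑ l, D.lowMatrix i (g' l) * ∑ l', B.adjugate l l' * (if f' l' = j then 1 else 0)) v i =
        B.det * v i - ∑ l, D.lowMatrix i (g' l) * ∑ l', B.adjugate l l' * v (f' l') := by
      intro i
      simp only [Matrix.mulVec, dotProduct, sub_mul, Finset.sum_sub_distrib, ite_mul, zero_mul,
        Finset.sum_ite_eq, Finset.mem_univ, if_true, Finset.sum_mul, Finset.mul_sum, mul_ite,
        mul_one, mul_zero]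
      congr 1
      rw [Finset.sum_comm]
      refine Finset.sum_congr rfl fun l _ => ?_
      rw [Finset.sum_comm]
      refine Finset.sum_congr rfl fun l' _ => ?_
      simp [mul_assoc]
    constructor
    · intro h
      refine D.θ_boxPoly_of_mul f' g' hdet hρ v fun i => ?_
      have := congrFun h i
      rw [hΦ, Pi.zero_apply, sub_eq_zero] at this
      exact this
    · intro h
      obtain ⟨t', ht', hspan⟩ := D.smul_mem_span_of_mem (t := 1) one_ne_zero
        (by simpa using h)
      rw [← lowMatrix_span] at hspan
      funext i
      rw [hΦ, Pi.zero_apply, sub_eq_zero]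
      exact colSpan_of_smul D.lowMatrix f' g' hmax v t' ht' hspan i

end NormData
namespace NormData
variable {k : Type*} [Field k] {n r e d : ℕ} {I : Ideal (MvPolynomial (Fin n) k)}
  (D : NormData r e d I)

/-! ### Irreducible equations for linear forms -/

theorem one_notMem (D : NormData r e d I) : (1 : MvPolynomial (Fin n) k) ∉ I := by
  simpa using D.free 1 one_ne_zero (by simp)

theorem rename_notMem_of_ne {c : MvPolynomial (Fin r) k} (hc : c ≠ 0) : rename D.f c ∉ I :=
  fun h => D.one_notMem (D.torsionFree (p := 1) hc (by simpa using h))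

/-- Elements of low degree outside `I` are not nilpotent modulo `I`. -/
theorem pow_notMem (D : NormData r e d I) {a : MvPolynomial (Fin n) k} (ha : a.totalDegree ≤ e ^ (4 * n + 8))
    (haI : a ∉ I) (m : ℕ) : a ^ m ∉ I := by
  induction m with
  | zero => simpa using D.one_notMem
  | succ m ih =>
    intro h
    rw [pow_succ'] at h
    exact ih (D.nzd a ha haI _ h)

/-- Evaluation at an element `u` of polynomials in one variable over the independent variables. -/
noncomputable def evalAt (u : MvPolynomial (Fin n) k) :
    MvPolynomial (Fin (r + 1)) k →ₐ[k] MvPolynomial (Fin n) k :=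
  aeval (Fin.cons u fun j => X (D.f j))

theorem evalAt_symm (u : MvPolynomial (Fin n) k) (p : Polynomial (MvPolynomial (Fin r) k)) :
    D.evalAt u ((finSuccEquiv k r).symm p) =
      p.eval₂ (rename D.f : MvPolynomial (Fin r) k →ₐ[k] _).toRingHom u := by
  induction p using Polynomial.induction_on' with
  | add p q hp hq => rw [map_add, map_add, hp, hq, Polynomial.eval₂_add]
  | monomial m c =>
    have e1 : (finSuccEquiv k r).symm (Polynomial.C c) = rename Fin.succ c := by
      rw [AlgEquiv.symm_apply_eq, finSuccEquiv_rename_succ]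
    have e2 : (finSuccEquiv k r).symm Polynomial.X = X 0 := by
      rw [AlgEquiv.symm_apply_eq, finSuccEquiv_X_zero]
    rw [← Polynomial.C_mul_X_pow_eq_monomial, map_mul, map_pow, e1, e2, map_mul, map_pow,
      Polynomial.eval₂_mul, Polynomial.eval₂_C, Polynomial.eval₂_pow, Polynomial.eval₂_X]
    congr 1
    · rw [evalAt, aeval_rename]
      change _ = rename D.f c
      exact DFunLike.congr_fun (algHom_ext (fun j => by simp)) c
    · simp [evalAt]

/-- A low-degree polynomial equation yields an irreducible one, since the values of its
factors have low degree and hence are non-zero-divisors or zero modulo `I`. -/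
theorem exists_irreducible_of_eval {u : MvPolynomial (Fin n) k} {w B : ℕ} (hw : 1 ≤ w)
    (hu : u.totalDegree ≤ w) (hB : B * w ≤ e ^ (4 * n + 8))
    (χ : MvPolynomial (Fin (r + 1)) k) (h0 : χ ≠ 0) (hd : χ.totalDegree ≤ B)
    (hχ : D.evalAt u χ ∈ I) :
    ∃ π : MvPolynomial (Fin (r + 1)) k, Irreducible π ∧ D.evalAt u π ∈ I := by
  induction χ using WfDvdMonoid.induction_on_irreducible with
  | zero => exact absurd rfl h0
  | unit a ha =>
    exact absurd ((Ideal.eq_top_iff_one _).mp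
      (Ideal.eq_top_of_isUnit_mem I hχ (ha.map (D.evalAt u)))) D.one_notMem
  | mul a i ha hi ih =>
    have hdeg : i.totalDegree ≤ B :=
      (totalDegree_le_of_dvd_of_isDomain (Dvd.intro _ rfl) h0).trans hd
    have hdeg' : a.totalDegree ≤ B :=
      (totalDegree_le_of_dvd_of_isDomain (Dvd.intro_left _ rfl) h0).trans hd
    by_cases hiI : D.evalAt u i ∈ I
    · exact ⟨i, hi, hiI⟩
    · refine ih ha hdeg' ?_
      rw [map_mul] at hχ
      refine D.nzd _ ?_ hiI _ hχ
      refine (totalDegree_eval_le _ w (fun j => ?_) _).trans ((Nat.mul_le_mul_right _ hdeg).trans hB)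
      rw [evalAt, aeval_X]
      cases j using Fin.cases with
      | zero => simpa using hu
      | succ j => simpa using hw

/-- Linear forms in the `s i * xᵢ` with coefficients of low degree satisfy irreducible
equations over the independent variables. -/
theorem exists_irreducible (b : Fin n → MvPolynomial (Fin r) k)
    (hb : ∀ i, (b i).totalDegree ≤ e ^ (n + 2)) :
    ∃ π : Polynomial (MvPolynomial (Fin r) k), Irreducible π ∧
      π.eval₂ (rename D.f : MvPolynomial (Fin r) k →ₐ[k] _).toRingHom
        (D.θ (∑ i, C (b i) * X i)) ∈ I := by
  classical
  set u : MvPolynomial (Fin n) (MvPolynomial (Fin r) k) := ∑ i, C (b i) * X i with hu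
  have he := D.two_le_e
  have hn := D.hn
  have hN : 1 ≤ e ^ n := Nat.one_le_pow _ _ (by omega)
  have hNe : e ^ n + 1 ≤ e ^ (n + 1) := by rw [pow_succ]; nlinarith
  have hw2 : e ^ (n + 2) + e ^ 2 ≤ e ^ (n + 3) := by
    have : e ^ 2 ≤ e ^ (n + 2) := D.pow_le_pow (by omega)
    rw [show n + 3 = (n + 2) + 1 from rfl, pow_succ e (n + 2)]
    nlinarith
  have hw1 : e ^ (n + 2) + (e + 1) ≤ e ^ (n + 3) := by nlinarith
  have huW : WDeg (e ^ 2) u (e ^ (n + 3)) :=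
    (WDeg.sum _ _ fun i _ => (WDeg.C (b i) (hb i)).mul (WDeg.X i)).mono hw2
  -- the `e ^ n + 1` powers of `u` are linearly dependent on the `e ^ n` box monomials
  let M : Matrix (Fin n → Fin e) (Fin (e ^ n + 1)) (MvPolynomial (Fin r) k) :=
    fun β l => nf e D.q (u ^ l.1) β
  obtain ⟨ρ, f', g', hρ, hdet, hmax⟩ := exists_max_minor M _
    (fun ρ f g h => minor_le_rows M ρ f g h)
  rw [card_box] at hρ
  have hMdeg : ∀ β l, (M β l).totalDegree ≤ e ^ n * e ^ (n + 3) := fun β l =>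
    totalDegree_nf_le D.q_monic D.q_coeff
      ((huW.pow l.1).mono (Nat.mul_le_mul_right _ (by omega))) β
  obtain ⟨j, hj⟩ : ∃ j, ∀ l, g' l ≠ j := by
    by_contra! h
    have := Fintype.card_le_of_surjective g' h
    simp at this
    omega
  set c := kerVec M f' g' j with hc
  have hcj : c j ≠ 0 := by
    have : c j = (M.submatrix f' g').det := by simp [hc, kerVec, hj]
    rw [this]
    exact hdet
  have hcdeg : ∀ l, (c l).totalDegree ≤ e ^ (3 * n + 4) := fun l => by
    refine (totalDegree_kerVec_le M f' g' _ hMdeg j l).trans ?_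
    calc (ρ + 1) * (e ^ n * e ^ (n + 3)) ≤ e ^ (n + 1) * (e ^ n * e ^ (n + 3)) :=
          Nat.mul_le_mul_right _ (by omega)
      _ = e ^ (3 * n + 4) := by rw [← pow_add, ← pow_add]; congr 1; omega
  have hMc := mulVec_kerVec M f' g' hmax j
  set χ : Polynomial (MvPolynomial (Fin r) k) := ∑ a, Polynomial.C (c a) * Polynomial.X ^ a.1
    with hχ
  have hχ0 : χ ≠ 0 := by
    intro h
    apply hcj
    have := congrArg (fun p => Polynomial.coeff p j.1) h
    simpa [hχ, Polynomial.finsetSum_coeff, Polynomial.coeff_C_mul, Polynomial.coeff_X_pow,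
      Fin.val_inj] using this
  have hχI : χ.eval₂ (rename D.f : MvPolynomial (Fin r) k →ₐ[k] _).toRingHom (D.θ u) ∈ I := by
    have h1 : χ.eval₂ (rename D.f : MvPolynomial (Fin r) k →ₐ[k] _).toRingHom (D.θ u) =
        D.θ (∑ a, c a • u ^ a.1) := by
      rw [hχ, Polynomial.eval₂_finsetSum, map_sum D.θ (fun a : Fin (e ^ n + 1) => c a • u ^ a.1)]
      refine Finset.sum_congr rfl fun a _ => ?_
      rw [θ_smul, Polynomial.eval₂_mul, Polynomial.eval₂_C, Polynomial.eval₂_pow,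
        Polynomial.eval₂_X, map_pow]
      rfl
    rw [h1, ← θ_boxPoly_nf_mem_iff]
    have h2 : nf e D.q (∑ a, c a • u ^ a.1) = M.mulVec c := by
      rw [map_sum]
      funext β
      rw [Finset.sum_apply]
      refine Finset.sum_congr rfl fun a _ => ?_
      rw [map_smul, Pi.smul_apply, smul_eq_mul, mul_comm]
    rw [h2, hMc]
    simp
  have hθu : (D.θ u).totalDegree ≤ e ^ (n + 3) := by
    rw [hu, map_sum]
    refine totalDegree_sum_le _ _ _ fun i _ => ?_
    rw [map_mul, θ_C, θ_X]
    refine (totalDegree_mul_le_of ((totalDegree_rename_le _ _).trans (hb i))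
      (totalDegree_mul_le_of ((totalDegree_rename_le _ _).trans (D.s_deg i))
        (totalDegree_X i).le)).trans hw1
  obtain ⟨π, hπ, hπI⟩ := D.exists_irreducible_of_eval (u := D.θ u) (w := e ^ (n + 3))
    (B := e ^ (3 * n + 5)) (Nat.one_le_pow _ _ (by omega)) hθu
    (by rw [← pow_add]; exact D.pow_le_pow (by omega))
    ((finSuccEquiv k r).symm χ) (by simpa using hχ0)
    ((totalDegree_finSuccEquiv_symm_sum c hcdeg).trans (by
      have : e ^ n ≤ e ^ (3 * n + 4) := D.pow_le_pow (by omega)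
      rw [show 3 * n + 5 = (3 * n + 4) + 1 from rfl, pow_succ e (3 * n + 4)]
      nlinarith)) (by rw [evalAt_symm]; exact hχI)
  refine ⟨finSuccEquiv k r π, (MulEquiv.irreducible_iff (finSuccEquiv k r)).mpr hπ, ?_⟩
  rw [← evalAt_symm, AlgEquiv.symm_apply_apply]
  exact hπI

theorem totalDegree_θ_boxPoly_le {v : (Fin n → Fin e) → MvPolynomial (Fin r) k} {B : ℕ}
    (hv : ∀ β, (v β).totalDegree ≤ B) : (D.θ (boxPoly v)).totalDegree ≤ B + e ^ 4 := by
  have he := D.two_le_e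
  rw [boxPoly_apply, map_sum]
  refine totalDegree_sum_le _ _ _ fun β _ => ?_
  rw [map_mul, θ_C, map_prod]
  refine totalDegree_mul_le_of ((totalDegree_rename_le _ _).trans (hv β)) ?_
  refine (totalDegree_finsetProd _ _).trans ?_
  refine (Finset.sum_le_sum (g := fun _ => e * (e + 1)) fun i _ => ?_).trans ?_
  · rw [map_pow, θ_X]
    refine (totalDegree_pow_le_of (totalDegree_mul_le_of
      ((totalDegree_rename_le _ _).trans (D.s_deg i)) (totalDegree_X i).le) _).trans ?_
    exact Nat.mul_le_mul_right _ (β i).2.le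
  · rw [Finset.sum_const, Finset.card_univ, Fintype.card_fin, smul_eq_mul]
    calc n * (e * (e + 1)) ≤ e * (e * (e * e)) :=
          Nat.mul_le_mul (by have := D.n_add_one_le; omega) (Nat.mul_le_mul_left _ (by nlinarith))
      _ = e ^ 4 := by ring

/-- Without independent variables every element has low degree up to a unit. -/
theorem isPrime_of_eq_zero (D : NormData r e d I) (hr : r = 0) : I.IsPrime := by
  subst hr
  refine ⟨fun h => D.one_notMem (h ▸ Submodule.mem_top), fun {p g} hpg => ?_⟩
  by_contra! hcon
  obtain ⟨p', h1, -⟩ := D.exists_lift p _ le_rfl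
  have h2 : D.θ (boxPoly (nf e D.q p')) ∉ I := by
    rw [θ_boxPoly_nf_mem_iff, h1]
    exact fun h => hcon.1 (D.of_prod_s_mul h)
  refine hcon.2 (D.nzd _ ((D.totalDegree_θ_boxPoly_le (B := 0) fun β => ?_).trans ?_) h2 g ?_)
  · rw [eq_C_of_isEmpty (nf e D.q p' β)]; simp
  · rw [zero_add]; exact D.pow_le_pow (by omega)
  · have h3 := Ideal.mul_mem_right g _ (D.θ_boxPoly_nf p')
    have h4 : D.θ p' * g ∈ I := by rw [h1, mul_assoc]; exact Ideal.mul_mem_left _ _ hpg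
    have := sub_mem h4 h3
    rwa [sub_mul, sub_sub_cancel] at this

end NormData

/-! ### Frobenius roots of polynomials -/

section frobenius
variable {k : Type*} [Field k] (p : ℕ) [Fact p.Prime]

/-- Over a field of characteristic `p` some inverse-Frobenius-semilinear map does not vanish at
a given nonzero element. -/
theorem exists_root_functional [CharP k p] {a : k} (ha : a ≠ 0) :
    ∃ φ : k →+ k, (∀ b c, φ (b ^ p * c) = b * φ c) ∧ φ a ≠ 0 := by
  let F := (frobenius k p).fieldRange
  obtain ⟨l, hl⟩ : ∃ l : Module.Dual F k, l a ≠ 0 := by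
    by_contra! h
    exact ha ((Module.forall_dual_apply_eq_zero_iff F a).mp h)
  have hbij : Function.Bijective (frobenius k p).rangeRestrictField :=
    ⟨(frobenius k p).rangeRestrictField.injective, fun x => by
      obtain ⟨y, hy⟩ := x.2
      exact ⟨y, Subtype.ext hy⟩⟩
  let ε := RingEquiv.ofBijective _ hbij
  refine ⟨(ε.symm : F →+* k).toAddMonoidHom.comp l.toAddMonoidHom, ?_, ?_⟩
  · intro b c
    have h1 : b ^ p * c = ε b • c := rfl
    change ε.symm (l (b ^ p * c)) = b * ε.symm (l c)
    rw [h1, map_smul, smul_eq_mul, map_mul, RingEquiv.symm_apply_apply]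
  · change ε.symm (l a) ≠ 0
    simpa using hl

variable {r : ℕ}

/-- `IsRootMap p L` says that `L` is an additive map extracting `p`-th roots of coefficients:
it is inverse-Frobenius-semilinear and divides degrees by `p`. -/
def IsRootMap (L : MvPolynomial (Fin r) k →+ MvPolynomial (Fin r) k) : Prop :=
  (∀ c v, L (c ^ p * v) = c * L v) ∧
    ∀ v B, v.totalDegree ≤ p * B → (L v).totalDegree ≤ B

/-- The polynomial whose coefficient at `γ` is `φ` of the coefficient of `v` at `p • γ + m`. -/
noncomputable def rootFun (φ : k →+ k) (m : Fin r →₀ ℕ) (v : MvPolynomial (Fin r) k) :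
    MvPolynomial (Fin r) k :=
  ∑ γ ∈ v.support.image (fun α => α.mapRange (· / p) (Nat.zero_div p)),
    monomial γ (φ (coeff (p • γ + m) v))

variable {p}

theorem coeff_rootFun (φ : k →+ k) {m : Fin r →₀ ℕ} (hm : ∀ i, m i < p)
    (v : MvPolynomial (Fin r) k) (γ : Fin r →₀ ℕ) :
    coeff γ (rootFun p φ m v) = φ (coeff (p • γ + m) v) := by
  classical
  have hp : 0 < p := (Fact.out : p.Prime).pos
  simp only [rootFun, coeff_sum, coeff_monomial]
  rw [Finset.sum_ite_eq']
  split_ifs with h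
  · rfl
  · rw [Finset.mem_image] at h
    push Not at h
    by_contra h0
    refine h (p • γ + m) ?_ ?_
    · rw [mem_support_iff]
      intro h1
      rw [h1, map_zero] at h0
      exact h0 rfl
    · ext i
      simp [Nat.mul_add_div hp, Nat.div_eq_of_lt (hm i)]

/-- The root maps jointly detect nonzero polynomials. -/
theorem exists_isRootMap [CharP k p] {v : MvPolynomial (Fin r) k} (hv : v ≠ 0) :
    ∃ L : MvPolynomial (Fin r) k →+ MvPolynomial (Fin r) k, IsRootMap p L ∧ L v ≠ 0 := by
  classical
  have hp : 0 < p := (Fact.out : p.Prime).pos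
  obtain ⟨α, hα⟩ := ne_zero_iff.mp hv
  obtain ⟨φ, hφ, hφα⟩ := exists_root_functional p hα
  let m : Fin r →₀ ℕ := α.mapRange (· % p) (Nat.zero_mod p)
  have hm : ∀ i, m i < p := fun i => by simpa [m] using Nat.mod_lt _ hp
  refine ⟨⟨⟨rootFun p φ m, ?_⟩, ?_⟩, ⟨?_, ?_⟩, ?_⟩
  · ext γ; rw [coeff_rootFun φ hm]; simp
  · intro v w; ext γ; simp only [coeff_rootFun φ hm, coeff_add, map_add]
  · intro c v
    change rootFun p φ m (c ^ p * v) = c * rootFun p φ m v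
    have hadd : ∀ v w, rootFun p φ m (v + w) = rootFun p φ m v + rootFun p φ m w := by
      intro v w; ext γ; simp only [coeff_rootFun φ hm, coeff_add, map_add]
    induction c using MvPolynomial.induction_on' with
    | add a b ha hb => rw [add_pow_char, add_mul, hadd, ha, hb, add_mul]
    | monomial δ a =>
      ext γ
      rw [coeff_rootFun φ hm, monomial_pow, coeff_monomial_mul', coeff_monomial_mul',
        coeff_rootFun φ hm]
      have hiff : p • δ ≤ p • γ + m ↔ δ ≤ γ := by
        refine ⟨fun h i => ?_, fun h i => ?_⟩
        · have h1 := h i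
          simp only [Finsupp.smul_apply, Finsupp.add_apply, smul_eq_mul] at h1
          have h2 := hm i
          by_contra! h3
          have : p * (γ i + 1) ≤ p * δ i := Nat.mul_le_mul_left _ h3
          rw [mul_add] at this
          omega
        · have := Nat.mul_le_mul_left p (h i)
          simp only [Finsupp.smul_apply, Finsupp.add_apply, smul_eq_mul]
          omega
      simp only [hiff]
      split_ifs with h
      · rw [hφ]
        congr 3
        ext i
        have h1 := Nat.mul_le_mul_left p (h i)
        simp only [Finsupp.smul_apply, Finsupp.add_apply, Finsupp.tsub_apply, smul_eq_mul,
          Nat.mul_sub]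
        omega
      · simp
  · intro v B hB
    change (rootFun p φ m v).totalDegree ≤ B
    refine Finset.sup_le fun γ hγ => ?_
    rw [mem_support_iff, coeff_rootFun φ hm] at hγ
    have h1 : coeff (p • γ + m) v ≠ 0 := fun h => hγ (by rw [h, map_zero])
    have h2 := (le_totalDegree (mem_support_iff.mpr h1)).trans hB
    rw [Finsupp.sum_fintype _ _ fun _ => rfl] at h2 ⊢
    simp only [Finsupp.smul_apply, Finsupp.add_apply, smul_eq_mul, Finset.sum_add_distrib,
      ← Finset.mul_sum] at h2
    exact Nat.le_of_mul_le_mul_left (by omega) hp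
  · intro h
    apply hφα
    have := congrArg (coeff (α.mapRange (· / p) (Nat.zero_div p))) h
    change coeff _ (rootFun p φ m v) = _ at this
    rw [coeff_rootFun φ hm, coeff_zero] at this
    convert this using 3
    ext i
    simp [m, Nat.div_add_mod]

end frobenius

namespace NormData
variable {k : Type*} [Field k] {n r e d : ℕ} {I : Ideal (MvPolynomial (Fin n) k)}

theorem add_le_pow_succ (D : NormData r e d I) {a b m : ℕ} (ha : a ≤ e ^ m) (hb : b ≤ e ^ m) :
    a + b ≤ e ^ (m + 1) := by
  rw [pow_succ]
  have := Nat.mul_le_mul_left (e ^ m) D.two_le_e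
  omega

set_option maxHeartbeats 800000 in
/-- In characteristic `p`, if `P / I` had a nonzero element with vanishing `p`-th power, then
extracting `p`-th roots in the resulting linear system would produce one of low degree. -/
theorem mem_of_pow_char_mem (D : NormData r e d I) (p : ℕ) [Fact p.Prime] [CharP k p]
    {g : MvPolynomial (Fin n) k} (hg : g ^ p ∈ I) : g ∈ I := by
  classical
  have hp : 0 < p := (Fact.out : p.Prime).pos
  have he := D.two_le_e
  obtain ⟨Φ, hΦd, hΦ⟩ := D.exists_matrix
  obtain ⟨gl, h1, -⟩ := D.exists_lift g _ le_rfl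
  refine D.of_prod_s_mul (N := g.totalDegree) ?_
  rw [← h1, ← θ_boxPoly_nf_mem_iff]
  set c := nf e D.q gl with hc
  let Y : (Fin n → Fin e) → MvPolynomial (Fin n) (MvPolynomial (Fin r) k) :=
    fun β => ∏ i, X i ^ (p * (β i).1)
  let w : (Fin n → Fin e) → (Fin n → Fin e) → MvPolynomial (Fin r) k :=
    fun β => Φ.mulVec (nf e D.q (Y β))
  -- membership of a `p`-th power is a Frobenius-semilinear condition on the coefficients
  have hw : ∀ v : (Fin n → Fin e) → MvPolynomial (Fin r) k,
      D.θ (boxPoly v) ^ p ∈ I ↔ ∀ γ, ∑ β, v β ^ p * w β γ = 0 := by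
    intro v
    have h2 : boxPoly v ^ p = ∑ β, v β ^ p • Y β := by
      rw [boxPoly_apply, sum_pow_char]
      refine Finset.sum_congr rfl fun β _ => ?_
      rw [mul_pow, ← map_pow, smul_eq_C_mul, ← Finset.prod_pow]
      congr 1
      exact Finset.prod_congr rfl fun i _ => by rw [← pow_mul, mul_comm]
    rw [← map_pow, ← θ_boxPoly_nf_mem_iff, ← hΦ, h2, map_sum, funext_iff]
    refine forall_congr' fun γ => ?_
    simp only [map_smul, Matrix.mulVec_sum, Matrix.mulVec_smul, Finset.sum_apply, Pi.smul_apply,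
      smul_eq_mul, Pi.zero_apply, w]
  have hwd : ∀ β γ, (w β γ).totalDegree ≤ p * (e ^ (n + 5) + e ^ 4) := by
    intro β γ
    refine totalDegree_sum_le _ _ _ fun δ _ => ?_
    refine (totalDegree_mul_le_of (hΦd _ _) (totalDegree_nf_le D.q_monic D.q_coeff
      (WDeg.prod _ _ (fun i => p * (β i).1 * e ^ 2) fun i _ => (WDeg.X i).pow _) δ)).trans ?_
    rw [mul_add]
    refine add_le_add (Nat.le_mul_of_pos_left _ hp) ?_
    refine (Finset.sum_le_sum (g := fun _ => p * e * e ^ 2) fun i _ =>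
      Nat.mul_le_mul_right _ (Nat.mul_le_mul_left _ (β i).2.le)).trans ?_
    rw [Finset.sum_const, Finset.card_univ, Fintype.card_fin, smul_eq_mul]
    calc n * (p * e * e ^ 2) ≤ e * (p * e * e ^ 2) :=
          Nat.mul_le_mul_right _ (by have := D.n_add_one_le; omega)
      _ = p * e ^ 4 := by ring
  -- applying all root maps turns the semilinear system into a linear one
  let A : Matrix ({L : MvPolynomial (Fin r) k →+ MvPolynomial (Fin r) k // IsRootMap p L} ×
      (Fin n → Fin e)) (Fin n → Fin e) (MvPolynomial (Fin r) k) := fun x β => x.1.1 (w β x.2)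
  have hA : ∀ v : (Fin n → Fin e) → MvPolynomial (Fin r) k,
      D.θ (boxPoly v) ^ p ∈ I ↔ A.mulVec v = 0 := by
    intro v
    have h3 : ∀ x, A.mulVec v x = x.1.1 (∑ β, v β ^ p * w β x.2) := by
      intro x
      rw [map_sum]
      refine Finset.sum_congr rfl fun β _ => ?_
      rw [x.1.2.1, mul_comm]
    rw [hw]
    constructor
    · intro h
      funext x
      rw [h3, h, map_zero]; rfl
    · intro h γ
      by_contra h0
      obtain ⟨L, hL, hL0⟩ := exists_isRootMap (p := p) h0
      have := congrFun h (⟨L, hL⟩, γ)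
      rw [h3] at this
      exact hL0 this
  obtain ⟨ρ, f', g', hρ, hdet, hmax⟩ := exists_max_minor A _
    (fun ρ f g h => minor_le_cols A ρ f g h)
  rw [card_box] at hρ
  have hcA : A.mulVec c = 0 := by
    rw [← hA]
    have h4 : D.θ (boxPoly c) - D.θ gl ∈ I := by
      simpa using neg_mem (D.θ_boxPoly_nf gl)
    have h5 : D.θ (boxPoly c) ^ p - D.θ gl ^ p ∈ I :=
      Ideal.mem_of_dvd I (sub_dvd_pow_sub_pow _ _ _) h4
    have h6 : D.θ gl ^ p ∈ I := by
      rw [h1, mul_pow]; exact Ideal.mul_mem_left _ _ hg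
    simpa using add_mem h5 h6
  have hsum := kerVec_of_mulVec_eq_zero A f' g' c hcA
  have hker : ∀ j, D.θ (boxPoly (kerVec A f' g' j)) ∈ I := by
    intro j
    by_contra hj
    refine D.pow_notMem ((D.totalDegree_θ_boxPoly_le fun β => totalDegree_kerVec_le A f' g'
      (e ^ (n + 5) + e ^ 4) (fun x β => x.1.2.2 _ _ (hwd _ _)) j β).trans ?_) hj p
      ((hA _).mpr (mulVec_kerVec A f' g' hmax j))
    have hn := D.hn
    have a1 : 1 ≤ e ^ n := Nat.one_le_pow _ _ (by omega)
    have a2 : ρ + 1 ≤ e ^ (n + 1) := by rw [pow_succ]; nlinarith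
    have a3 : e ^ 4 ≤ e ^ (n + 5) := D.pow_le_pow (by omega)
    have a4 : e ^ (n + 5) + e ^ 4 ≤ e ^ (n + 6) := D.add_le_pow_succ le_rfl a3
    have a5 : (ρ + 1) * (e ^ (n + 5) + e ^ 4) ≤ e ^ (2 * n + 7) := by
      refine (Nat.mul_le_mul a2 a4).trans_eq ?_
      rw [← pow_add]; congr 1; omega
    have a6 : e ^ 4 ≤ e ^ (2 * n + 7) := D.pow_le_pow (by omega)
    exact (D.add_le_pow_succ a5 a6).trans (D.pow_le_pow (by omega))
  refine D.torsionFree hdet ?_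
  rw [← θ_smul, ← map_smul]
  have h7 : (A.submatrix f' g').det • c = ∑ j, c j • kerVec A f' g' j := by
    funext β
    rw [Pi.smul_apply, smul_eq_mul, ← hsum, Finset.sum_apply]
    rfl
  rw [h7, map_sum, map_sum]
  refine sum_mem fun j _ => ?_
  rw [map_smul, θ_smul]
  exact Ideal.mul_mem_left _ _ (hker j)

/-- In characteristic `p` the ideal is radical. -/
theorem mem_of_pow_mem_of_charP (D : NormData r e d I) (p : ℕ) [Fact p.Prime] [CharP k p]
    {g : MvPolynomial (Fin n) k} {m : ℕ} (hg : g ^ m ∈ I) : g ∈ I := by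
  have h : ∀ m, g ^ p ^ m ∈ I → g ∈ I := by
    intro m
    induction m with
    | zero => simp
    | succ m ih => intro h; rw [pow_succ, pow_mul] at h; exact ih (D.mem_of_pow_char_mem p h)
  refine h m (Ideal.mem_of_dvd I (pow_dvd_pow g ?_) hg)
  exact (Nat.lt_pow_self (Fact.out : p.Prime).one_lt).le

end NormData

/-! ### Finite algebras generated by elements with irreducible equations -/

section algebra
variable {K A : Type*} [Field K] [CommRing A] [Algebra K A] [Module.Finite K A]

/-- If enough linear forms in generators of a finite algebra satisfy irreducible equations, the
algebra has only one maximal ideal. For `ψ` with kernel `M'`, each linear form has the same value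
under `ψ` and some homomorphism with kernel `M`; by the pigeonhole principle a single such
homomorphism works for `n` linear forms, and then it equals `ψ`. -/
theorem eq_of_isMaximal {n N : ℕ} (hn : 1 ≤ n) (y : Fin n → A)
    (hy : Algebra.adjoin K (Set.range y) = ⊤) (hN : Module.finrank K A ≤ N) (t : ℕ → K)
    (ht : Function.Injective t)
    (hu : ∀ j < N * n, ∃ π : Polynomial K, Irreducible π ∧
      Polynomial.aeval (∑ i, t j ^ i.1 • y i) π = 0)
    (M M' : Ideal A) [M.IsMaximal] [M'.IsMaximal] : M = M' := by
  classical
  let _ : Field (A ⧸ M) := Ideal.Quotient.field M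
  let _ : Field (A ⧸ M') := Ideal.Quotient.field M'
  have : Algebra.IsAlgebraic K (A ⧸ M) := Algebra.IsAlgebraic.of_finite K _
  have : Algebra.IsAlgebraic K (A ⧸ M') := Algebra.IsAlgebraic.of_finite K _
  let Ω := AlgebraicClosure K
  obtain ⟨ψ₀⟩ : Nonempty ((A ⧸ M') →ₐ[K] Ω) := ⟨IsAlgClosed.lift⟩
  let ψ : A →ₐ[K] Ω := ψ₀.comp (Ideal.Quotient.mkₐ K M')
  have hker : ∀ φ : (A ⧸ M) →ₐ[K] Ω, RingHom.ker (φ.comp (Ideal.Quotient.mkₐ K M)) = M := by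
    intro φ
    ext x
    rw [RingHom.mem_ker, AlgHom.comp_apply, map_eq_zero_iff φ φ.toRingHom.injective]
    exact Ideal.Quotient.eq_zero_iff_mem
  have hψ : RingHom.ker ψ = M' := by
    ext x
    rw [RingHom.mem_ker, AlgHom.comp_apply, map_eq_zero_iff ψ₀ ψ₀.toRingHom.injective]
    exact Ideal.Quotient.eq_zero_iff_mem
  have hφ : ∀ j : Fin (N * n), ∃ φ : A →ₐ[K] Ω, RingHom.ker φ = M ∧
      φ (∑ i, t j ^ i.1 • y i) = ψ (∑ i, t j ^ i.1 • y i) := by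
    intro j
    obtain ⟨π, hπ, h0⟩ := hu j j.2
    set u := ∑ i, t j ^ i.1 • y i with hu
    have h1 : Polynomial.aeval (Ideal.Quotient.mkₐ K M u) π = 0 := by
      rw [Polynomial.aeval_algHom_apply, h0, map_zero]
    have h2 : Polynomial.aeval (ψ u) (minpoly K (Ideal.Quotient.mkₐ K M u)) = 0 := by
      rw [← minpoly.eq_of_irreducible hπ h1, map_mul, Polynomial.aeval_algHom_apply, h0, map_zero,
        zero_mul]
    obtain ⟨φ, hφ⟩ := IntermediateField.exists_algHom_of_splits_of_aeval (F := K) (K := Ω)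
      (fun s => ⟨Algebra.IsIntegral.isIntegral (R := K) s, IsAlgClosed.splits _⟩) h2
    exact ⟨φ.comp (Ideal.Quotient.mkₐ K M), hker φ, hφ⟩
  choose φ hφM hφu using hφ
  have : Finite (A →ₐ[K] Ω) := inferInstance
  let _ := Fintype.ofFinite (A →ₐ[K] Ω)
  have : Nonempty (A →ₐ[K] Ω) := ⟨ψ⟩
  obtain ⟨φ₀, h0⟩ := Fintype.exists_le_card_fiber_of_mul_le_card φ (n := n) (by
    rw [Fintype.card_fin, ← Nat.card_eq_fintype_card]
    exact Nat.mul_le_mul_right _ ((card_algHom_le_finrank K A Ω).trans hN))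
  obtain ⟨j₀, hj₀⟩ : ∃ j, φ j = φ₀ := by
    obtain ⟨j, hj⟩ := Finset.card_pos.mp (lt_of_lt_of_le hn h0)
    exact ⟨j, (Finset.mem_filter.mp hj).2⟩
  have heq : φ₀ = ψ := by
    refine AlgHom.ext_of_adjoin_eq_top hy ?_
    rintro _ ⟨i, rfl⟩
    -- the differences are the coefficients of a polynomial of degree `< n` with `n` roots
    let P : Polynomial Ω :=
      ∑ i : Fin n, Polynomial.C (φ₀ (y i) - ψ (y i)) * Polynomial.X ^ i.1
    have hP : P = 0 := by
      refine Polynomial.eq_zero_of_natDegree_lt_card_of_eval_eq_zero' P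
        (({x | φ x = φ₀} : Finset (Fin (N * n))).image fun j : Fin (N * n) => algebraMap K Ω (t j.1)) ?_ ?_
      · intro a ha
        obtain ⟨j, hj, rfl⟩ := Finset.mem_image.mp ha
        have h1 := hφu j
        rw [(Finset.mem_filter.mp hj).2, ← sub_eq_zero] at h1
        rw [← h1]
        simp only [P, Polynomial.eval_finsetSum, map_sum]
        rw [← Finset.sum_sub_distrib]
        refine Finset.sum_congr rfl fun i _ => ?_
        rw [map_smul, map_smul, Algebra.smul_def, Algebra.smul_def, map_pow]
        simp only [Polynomial.eval_mul, Polynomial.eval_C, Polynomial.eval_pow, Polynomial.eval_X]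
        ring
      · rw [Finset.card_image_of_injective _ fun a b hab =>
          Fin.val_injective (ht ((algebraMap K Ω).injective hab))]
        refine lt_of_lt_of_le ?_ h0
        refine (Polynomial.natDegree_sum_le_of_forall_le (n := n - 1) _ _ fun i _ => ?_).trans_lt
          (by omega)
        exact (Polynomial.natDegree_C_mul_X_pow_le _ _).trans (by omega)
    have := congrArg (fun p => Polynomial.coeff p i.1) hP
    simp only [P, Polynomial.finsetSum_coeff, Polynomial.coeff_C_mul, Polynomial.coeff_X_pow,
      Polynomial.coeff_zero, Fin.val_inj, mul_ite, mul_one, mul_zero, Finset.sum_ite_eq,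
      Finset.mem_univ, if_true] at this
    exact sub_eq_zero.mp this
  rw [← hφM j₀, hj₀, heq, hψ]

/-- A finite algebra over a perfect field generated by elements with squarefree equations is
reduced, because multiplication by each of its elements is semisimple. -/
theorem isReduced_of_squarefree [PerfectField K] {n : ℕ} (y : Fin n → A)
    (hy : Algebra.adjoin K (Set.range y) = ⊤)
    (hπ : ∀ i, ∃ π : Polynomial K, Irreducible π ∧ Polynomial.aeval (y i) π = 0) :
    IsReduced A := by
  have key : ∀ x : A, (Algebra.lmul K A x).IsSemisimple := by
    intro x
    have hx : x ∈ Algebra.adjoin K (Set.range y) := hy ▸ Algebra.mem_top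
    have hcomm : ∀ x y : A, Commute (Algebra.lmul K A x) (Algebra.lmul K A y) := fun x y => by
      rw [commute_iff_eq, ← map_mul, ← map_mul, mul_comm]
    induction hx using Algebra.adjoin_induction with
    | mem x hx =>
      obtain ⟨i, rfl⟩ := hx
      obtain ⟨π, h1, h2⟩ := hπ i
      refine Module.End.isSemisimple_of_squarefree_aeval_eq_zero h1.squarefree ?_
      rw [Polynomial.aeval_algHom_apply, h2, map_zero]
    | algebraMap c =>
      refine Module.End.isSemisimple_of_squarefree_aeval_eq_zero
        (Polynomial.irreducible_X_sub_C c).squarefree ?_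
      rw [Polynomial.aeval_algHom_apply]
      simp
    | add a b _ _ ha hb =>
      rw [map_add]
      exact ha.add_of_commute (hcomm a b) hb
    | mul a b _ _ ha hb =>
      rw [map_mul]
      exact ha.mul_of_commute (hcomm a b) hb
  refine ⟨fun x hx => ?_⟩
  have h := Module.End.eq_zero_of_isNilpotent_isSemisimple (hx.map (Algebra.lmul K A)) (key x)
  simpa using congrArg (fun f => f 1) h

/-- A reduced artinian ring with at most one maximal ideal is a field. -/
theorem isDomain_of_unique_maximal (K : Type*) [Field K] [Algebra K A] [Module.Finite K A]
    [Nontrivial A] [IsReduced A]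
    (h : ∀ M M' : Ideal A, M.IsMaximal → M'.IsMaximal → M = M') : IsDomain A := by
  have : IsArtinianRing A := IsArtinianRing.of_finite K A
  obtain ⟨M, hM⟩ := Ideal.exists_maximal A
  have hbot : M = ⊥ := by
    rw [eq_bot_iff]
    intro x hx
    have : x ∈ nilradical A := by
      rw [nilradical_eq_sInf, Submodule.mem_sInf]
      intro P hP
      have : Ideal.IsPrime P := hP
      rw [h P M (IsArtinianRing.isMaximal_of_isPrime P) hM]
      exact hx
    rwa [nilradical_eq_zero] at this
  subst hbot
  have := hM.isPrime
  exact IsDomain.of_bot_isPrime A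

end algebra

/-! ### The generic fibre -/

/-- The generic fibre of a torsion-free algebra over a domain. -/
theorem exists_generic_fibre.{u} {R S : Type u} [CommRing R] [IsDomain R] [CommRing S]
    (ι : R →+* S) (htf : ∀ c : R, c ≠ 0 → ∀ s, ι c * s = 0 → s = 0) :
    ∃ (A : Type u) (_ : CommRing A) (_ : Algebra (FractionRing R) A) (π : S →+* A),
      Function.Injective π ∧ (∀ c, π (ι c) = algebraMap (FractionRing R) A (algebraMap R _ c)) ∧
      ∀ a, ∃ c : R, c ≠ 0 ∧ ∃ s, algebraMap (FractionRing R) A (algebraMap R _ c) * a = π s := by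
  let : Algebra R S := ι.toAlgebra
  let M := Algebra.algebraMapSubmonoid S (nonZeroDivisors R)
  let : Algebra (FractionRing R) (Localization M) := localizationAlgebra (nonZeroDivisors R) S
  have hcomp : ∀ c : R, algebraMap S (Localization M) (ι c) =
      algebraMap (FractionRing R) (Localization M) (algebraMap R _ c) := by
    intro c
    exact (IsLocalization.map_eq (S := FractionRing R) (Q := Localization M)
      (show _ ≤ (Algebra.algebraMapSubmonoid S (nonZeroDivisors R)).comap (algebraMap R S) from
        (nonZeroDivisors R).le_comap_map) c).symm
  refine ⟨Localization M, inferInstance, inferInstance, algebraMap S (Localization M),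
    ?_, hcomp, ?_⟩
  · rw [injective_iff_map_eq_zero]
    intro s hs
    rw [IsLocalization.map_eq_zero_iff M] at hs
    obtain ⟨⟨_, c, hc, rfl⟩, h⟩ := hs
    exact htf c (nonZeroDivisors.ne_zero hc) s h
  · intro a
    obtain ⟨⟨s, ⟨_, c, hc, rfl⟩⟩, h⟩ := IsLocalization.surj M a
    refine ⟨c, nonZeroDivisors.ne_zero hc, s, ?_⟩
    rw [← hcomp, ← h, mul_comm]
    rfl

namespace NormData
variable {k : Type*} [Field k] {n r e d : ℕ} {I : Ideal (MvPolynomial (Fin n) k)}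

/-- With at least one independent variable, the generic fibre of `P / I` over the independent
variables is a reduced finite algebra with one maximal ideal. -/
theorem isPrime_of_pos (D : NormData r e d I) (hr : 0 < r) : I.IsPrime := by
  classical
  have he := D.two_le_e
  let K := FractionRing (MvPolynomial (Fin r) k)
  obtain ⟨A, _, _, π₀, hinj, hcompat, hsurj⟩ := exists_generic_fibre
    ((Ideal.Quotient.mk I).comp (rename D.f : MvPolynomial (Fin r) k →ₐ[k] _).toRingHom) (by
      intro c hc s hs
      obtain ⟨s, rfl⟩ := Ideal.Quotient.mk_surjective s
      rw [RingHom.comp_apply, ← map_mul, Ideal.Quotient.eq_zero_iff_mem] at hs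
      exact Ideal.Quotient.eq_zero_iff_mem.mpr (D.torsionFree hc hs))
  let π : MvPolynomial (Fin n) k →+* A := π₀.comp (Ideal.Quotient.mk I)
  have hπ0 : ∀ p, π p = 0 ↔ p ∈ I := fun p => by
    rw [RingHom.comp_apply, map_eq_zero_iff π₀ hinj, Ideal.Quotient.eq_zero_iff_mem]
  have hπc : ∀ c : MvPolynomial (Fin r) k,
      π (rename D.f c) = algebraMap K A (algebraMap _ K c) := hcompat
  have hsurj' : ∀ a : A, ∃ c : MvPolynomial (Fin r) k, c ≠ 0 ∧ ∃ p,
      algebraMap K A (algebraMap _ K c) * a = π p := fun a => by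
    obtain ⟨c, hc, s, hs⟩ := hsurj a
    obtain ⟨s, rfl⟩ := Ideal.Quotient.mk_surjective s
    exact ⟨c, hc, s, hs⟩
  have hcu : ∀ c : MvPolynomial (Fin r) k, c ≠ 0 → algebraMap _ K c ≠ 0 := fun c hc h =>
    hc ((map_eq_zero_iff _ (IsFractionRing.injective (MvPolynomial (Fin r) k) K)).mp h)
  let y : Fin n → A := fun i => π (D.θ (X i))
  have hbox : ∀ v : (Fin n → Fin e) → MvPolynomial (Fin r) k,
      π (D.θ (boxPoly v)) = ∑ β, algebraMap _ K (v β) • ∏ i, y i ^ (β i).1 := by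
    intro v
    rw [boxPoly_apply, map_sum, map_sum]
    refine Finset.sum_congr rfl fun β _ => ?_
    rw [map_mul, map_mul, θ_C, hπc, Algebra.smul_def]
    simp [y]
  have hspan : Submodule.span K (Set.range fun β : Fin n → Fin e => ∏ i, y i ^ (β i).1) = ⊤ := by
    rw [eq_top_iff]
    rintro a -
    obtain ⟨c, hc, p, hp⟩ := hsurj' a
    obtain ⟨p', h1, -⟩ := D.exists_lift p _ le_rfl
    have h2 : π (D.θ p') = π (D.θ (boxPoly (nf e D.q p'))) := by
      rw [← sub_eq_zero, ← map_sub, hπ0]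
      exact D.θ_boxPoly_nf p'
    rw [h1, map_mul, ← hp, ← map_pow, hπc, ← mul_assoc, ← map_mul, ← map_mul, ← Algebra.smul_def]
      at h2
    have h3 : algebraMap _ K ((∏ i, D.s i) ^ p.totalDegree * c) ≠ 0 := hcu _
      (mul_ne_zero (pow_ne_zero _ (Finset.prod_ne_zero_iff.mpr fun i _ => D.s_ne i)) hc)
    rw [← inv_smul_smul₀ h3 a, h2, hbox]
    exact Submodule.smul_mem _ _ (sum_mem fun β _ =>
      Submodule.smul_mem _ _ (Submodule.subset_span ⟨β, rfl⟩))
  have hfin : Module.Finite K A :=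
    ⟨⟨Finset.univ.image fun β : Fin n → Fin e => ∏ i, y i ^ (β i).1, by simpa using hspan⟩⟩
  have hrank : Module.finrank K A ≤ e ^ n := by
    have := finrank_le_of_span_eq_top hspan
    rwa [card_box] at this
  have hy : Algebra.adjoin K (Set.range y) = ⊤ := by
    rw [← Algebra.toSubmodule_eq_top, eq_top_iff, ← hspan]
    refine Submodule.span_le.mpr ?_
    rintro _ ⟨β, rfl⟩
    exact Subalgebra.prod_mem _ fun i _ => Subalgebra.pow_mem _ 
      (Algebra.subset_adjoin (Set.mem_range_self i)) _
  have hirr : ∀ b : Fin n → MvPolynomial (Fin r) k, (∀ i, (b i).totalDegree ≤ e ^ (n + 2)) →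
      ∃ χ : Polynomial K, Irreducible χ ∧
        Polynomial.aeval (∑ i, algebraMap _ K (b i) • y i) χ = 0 := by
    intro b hb
    obtain ⟨χ, h1, h2⟩ := D.exists_irreducible b hb
    have h3 : χ.natDegree ≠ 0 := by
      intro h
      rw [Polynomial.eq_C_of_natDegree_eq_zero h, Polynomial.eval₂_C] at h2
      refine D.rename_notMem_of_ne (c := χ.coeff 0) (fun h0 => ?_) h2
      rw [Polynomial.eq_C_of_natDegree_eq_zero h, h0, map_zero] at h1
      exact h1.ne_zero rfl
    refine ⟨χ.map (algebraMap _ K),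
      ((h1.isPrimitive h3).irreducible_iff_irreducible_map_fraction_map).mp h1, ?_⟩
    have h4 : ∑ i, algebraMap _ K (b i) • y i = π (D.θ (∑ i, C (b i) * X i)) := by
      rw [map_sum, map_sum]
      refine Finset.sum_congr rfl fun i _ => ?_
      rw [map_mul, map_mul, θ_C, hπc, Algebra.smul_def]
    rw [h4, Polynomial.aeval_def, Polynomial.eval₂_map, ← (hπ0 _).mpr h2, Polynomial.hom_eval₂]
    congr 1
    exact RingHom.ext fun c => (hπc c).symm
  have hnt : Nontrivial A := by
    refine ⟨⟨π 1, 0, fun h => D.one_notMem ((hπ0 _).mp h)⟩⟩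
  have hred : IsReduced A := by
    rcases CharP.exists' k with h0 | ⟨p, hp, hchar⟩
    · have : CharZero K := charZero_of_injective_algebraMap
        (IsFractionRing.injective (MvPolynomial (Fin r) k) K)
      refine isReduced_of_squarefree y hy fun i => ?_
      obtain ⟨χ, h1, h2⟩ := hirr (Pi.single i 1) (fun j => by
        rcases eq_or_ne j i with rfl | h
        · simp
        · simp [Pi.single_eq_of_ne h])
      refine ⟨χ, h1, ?_⟩
      rwa [Finset.sum_eq_single i (fun j _ hj => by rw [Pi.single_eq_of_ne hj, map_zero, zero_smul])
        (by simp), Pi.single_eq_same, map_one, one_smul] at h2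
    · refine ⟨fun a ⟨m, hm⟩ => ?_⟩
      obtain ⟨c, hc, p', hp'⟩ := hsurj' a
      have h1 : p' ^ m ∈ I := by
        rw [← hπ0, map_pow, ← hp', mul_pow, hm, mul_zero]
      rw [(hπ0 _).mpr (D.mem_of_pow_mem_of_charP p h1), ← Algebra.smul_def] at hp'
      exact (smul_eq_zero_iff_right (hcu c hc)).mp hp'
  have hdom : IsDomain A := by
    refine isDomain_of_unique_maximal K fun M M' _ _ => ?_
    refine eq_of_isMaximal D.hn y hy hrank
      (fun j => algebraMap (MvPolynomial (Fin r) k) K (X ⟨0, hr⟩ ^ j)) ?_ ?_ M M'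
    · intro a b hab
      have h1 := IsFractionRing.injective (MvPolynomial (Fin r) k) K hab
      have h2 := congrArg totalDegree h1
      simpa [totalDegree_X_pow] using h2
    · intro j hj
      obtain ⟨χ, h1, h2⟩ := hirr (fun i => (X ⟨0, hr⟩ ^ j) ^ i.1) (fun i => by
        rw [← pow_mul, totalDegree_X_pow]
        have hne := D.n_add_one_le
        calc j * i.1 ≤ e ^ n * n * n := Nat.mul_le_mul hj.le i.2.le
          _ ≤ e ^ n * e * e := Nat.mul_le_mul (Nat.mul_le_mul_left _ (by omega)) (by omega)
          _ = e ^ (n + 2) := by ring)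
      refine ⟨χ, h1, ?_⟩
      simpa only [map_pow] using h2
  have : I = RingHom.ker π := by
    ext p; rw [RingHom.mem_ker, hπ0]
  rw [this]
  exact RingHom.ker_isPrime π

theorem isPrime (D : NormData r e d I) : I.IsPrime := by
  rcases Nat.eq_zero_or_pos r with h | h
  · exact D.isPrime_of_eq_zero h
  · exact D.isPrime_of_pos h

end NormData

/-! ### Variables that are independent modulo `I` in bounded degree -/

section Independent
variable {k : Type*} [Field k] {n r e : ℕ} {I : Ideal (MvPolynomial (Fin n) k)}

/-- The variables `x_{f 0},…,x_{f (r-1)}` satisfy no nonzero relation of degree at most `N`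
modulo `I`. -/
def IsFree (I : Ideal (MvPolynomial (Fin n) k)) (f : Fin r → Fin n) (N : ℕ) : Prop :=
  ∀ c : MvPolynomial (Fin r) k, c ≠ 0 → c.totalDegree ≤ N → rename f c ∉ I

theorem eval₂_finSuccEquiv (f : Fin r → Fin n) (i : Fin n) (p : MvPolynomial (Fin (r + 1)) k) :
    (finSuccEquiv k r p).eval₂ (rename f : MvPolynomial (Fin r) k →ₐ[k] _).toRingHom
      (X i : MvPolynomial (Fin n) k) = rename (Fin.cons i f : Fin (r + 1) → Fin n) p := by
  induction p using MvPolynomial.induction_on with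
  | C a => simp [finSuccEquiv_apply]
  | add p q hp hq => rw [map_add, Polynomial.eval₂_add, hp, hq, map_add]
  | mul_X p j hp =>
    rw [map_mul, Polynomial.eval₂_mul, hp, map_mul, rename_X]
    congr 1
    refine Fin.cases ?_ (fun j => ?_) j
    · simp [finSuccEquiv_X_zero]
    · simp [finSuccEquiv_X_succ]

/-- A dependent variable satisfies a relation over the independent ones, which becomes monic of
degree `e` after multiplying the variable by the leading coefficient. -/
theorem exists_monic_relation {N : ℕ} {f : Fin r → Fin n} (heN : e ≤ N) (hf : IsFree I f N)
    (i : Fin n) (hi : ¬ IsFree I (Fin.cons i f : Fin (r + 1) → Fin n) e) :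
    ∃ (s : MvPolynomial (Fin r) k) (q : Polynomial (MvPolynomial (Fin r) k)),
      s ≠ 0 ∧ s.totalDegree ≤ e ∧ q.Monic ∧ q.natDegree = e ∧
      (∀ j, (q.coeff j).totalDegree ≤ e ^ 2) ∧
      q.eval₂ (rename f : MvPolynomial (Fin r) k →ₐ[k] _).toRingHom (rename f s * X i) ∈ I := by
  unfold IsFree at hi
  push Not at hi
  obtain ⟨p, hp, hpd, hpI⟩ := hi
  set P := finSuccEquiv k r p with hP
  have hP0 : P ≠ 0 := by simpa [hP] using hp
  rw [← eval₂_finSuccEquiv, ← hP] at hpI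
  have hcoeff : ∀ j, (P.coeff j).totalDegree ≤ e := by
    intro j
    by_cases hj : P.coeff j = 0
    · simp [hj]
    · have := totalDegree_coeff_finSuccEquiv_add_le p j hj
      rw [← hP] at this
      omega
  have hm : P.natDegree ≤ e := by
    rw [hP, natDegree_finSuccEquiv]
    exact (degreeOf_le_totalDegree p 0).trans hpd
  have hlc : P.leadingCoeff ≠ 0 := Polynomial.leadingCoeff_ne_zero.mpr hP0
  have hm1 : 1 ≤ P.natDegree := by
    by_contra h
    have h0 : P.natDegree = 0 := by omega
    rw [Polynomial.eq_C_of_natDegree_eq_zero h0, Polynomial.eval₂_C] at hpI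
    refine hf (P.coeff 0) ?_ ((hcoeff 0).trans heN) hpI
    rw [Polynomial.leadingCoeff, h0] at hlc
    exact hlc
  have hmon := Polynomial.monic_integralNormalization hP0
  refine ⟨P.leadingCoeff, P.integralNormalization * Polynomial.X ^ (e - P.natDegree), hlc,
    hcoeff _, hmon.mul (Polynomial.monic_X_pow _), ?_, ?_, ?_⟩
  · rw [hmon.natDegree_mul (Polynomial.monic_X_pow _), Polynomial.natDegree_X_pow,
      Polynomial.natDegree_integralNormalization]
    omega
  · intro j
    rw [Polynomial.coeff_mul_X_pow']
    split_ifs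
    · generalize j - (e - P.natDegree) = l
      rw [Polynomial.integralNormalization_coeff]
      split_ifs with h
      · simp
      · refine (totalDegree_mul_le_of (hcoeff _) (totalDegree_pow_le_of (hcoeff _) _)).trans ?_
        have : P.natDegree - 1 - l + 1 ≤ e := by omega
        nlinarith
    · simp
  · rw [Polynomial.eval₂_mul]
    refine Ideal.mul_mem_right _ _ ?_
    have h := Polynomial.integralNormalization_eval₂_leadingCoeff_mul hm1
      (rename f : MvPolynomial (Fin r) k →ₐ[k] MvPolynomial (Fin n) k).toRingHom (X i)
    have h' : (rename f : MvPolynomial (Fin r) k →ₐ[k] MvPolynomial (Fin n) k).toRingHom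
      P.leadingCoeff = rename f P.leadingCoeff := rfl
    rw [h'] at h
    rw [h]
    exact Ideal.mul_mem_left _ _ hpI

/-- The normalisation data attached to a maximal set of independent variables. -/
theorem exists_normData {d : ℕ} {S : Set (MvPolynomial (Fin n) k)} (hn : 1 ≤ n) (hd : 1 ≤ d)
    (he : 2 * n * d ≤ e) (hS : I = Ideal.span S) (hSd : ∀ g ∈ S, g.totalDegree ≤ d)
    (f : Fin r → Fin n) (hf : IsFree I f (e ^ (n + 4)))
    (hmax : ∀ i, i ∉ Set.range f → ¬ IsFree I (Fin.cons i f : Fin (r + 1) → Fin n) e)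
    (nzd : ∀ a : MvPolynomial (Fin n) k, a.totalDegree ≤ e ^ (4 * n + 8) → a ∉ I →
      ∀ g, a * g ∈ I → g ∈ I) : Nonempty (NormData r e d I) := by
  have he1 : 1 ≤ e := le_trans (by nlinarith [Nat.mul_le_mul hn hd]) he
  have key : ∀ i, ∃ (s : MvPolynomial (Fin r) k) (q : Polynomial (MvPolynomial (Fin r) k)),
      s ≠ 0 ∧ s.totalDegree ≤ e ∧ (i ∈ Set.range f → s = 1) ∧ q.Monic ∧ q.natDegree = e ∧
      (∀ j, (q.coeff j).totalDegree ≤ e ^ 2) ∧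
      q.eval₂ (rename f : MvPolynomial (Fin r) k →ₐ[k] _).toRingHom (rename f s * X i) ∈ I := by
    intro i
    by_cases hi : i ∈ Set.range f
    · obtain ⟨j, rfl⟩ := hi
      refine ⟨1, Polynomial.X ^ e - Polynomial.C (X j ^ e), one_ne_zero, by simp, fun _ => rfl,
        Polynomial.monic_X_pow_sub_C _ (by omega), Polynomial.natDegree_X_pow_sub_C, ?_, ?_⟩
      · intro l
        rw [Polynomial.coeff_sub, Polynomial.coeff_X_pow, Polynomial.coeff_C]
        refine totalDegree_sub_le_of ?_ ?_
        · split_ifs <;> simp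
        · split_ifs
          · rw [totalDegree_X_pow]
            nlinarith
          · simp
      · rw [Polynomial.eval₂_sub, Polynomial.eval₂_X_pow, Polynomial.eval₂_C]
        simp
    · obtain ⟨s, q, h1, h2, h3⟩ :=
        exists_monic_relation (Nat.le_self_pow (by omega) e) hf i (hmax i hi)
      exact ⟨s, q, h1, h2, fun h => absurd h hi, h3⟩
  choose s q h1 h2 h3 h4 h5 h6 h7 using key
  exact ⟨{ S := S, hS := hS, hSd := hSd, f := f, s := s, q := q, hn := hn, hd := hd, he := he,
           s_ne := h1, s_deg := h2, s_f := fun j => h3 _ ⟨j, rfl⟩, q_monic := h4,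
           q_natDegree := h5, q_coeff := h6, q_mem := h7, free := hf, nzd := nzd }⟩

/-- An ideal generated in degree at most `d` modulo which all the variables are independent up to
degree `d` is zero. -/
theorem eq_bot_of_isFree {d : ℕ} {S : Set (MvPolynomial (Fin n) k)} (hS : I = Ideal.span S)
    (hSd : ∀ g ∈ S, g.totalDegree ≤ d) (f : Fin n → Fin n) (hf : Function.Injective f)
    (hfree : IsFree I f d) : I = ⊥ := by
  have hb : Function.Bijective f := Finite.injective_iff_bijective.mp hf
  rw [hS, Ideal.span_eq_bot]
  intro g hg
  by_contra h0
  have hg' : rename f (renameEquiv k (Equiv.ofBijective f hb).symm g) = g := by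
    rw [renameEquiv_apply, rename_rename]
    have : f ∘ (Equiv.ofBijective f hb).symm = id := by
      funext x
      exact (Equiv.ofBijective f hb).apply_symm_apply x
    rw [this, rename_id_apply]
  refine hfree (renameEquiv k (Equiv.ofBijective f hb).symm g) 
    (EmbeddingLike.map_ne_zero_iff.mpr h0) ?_ ?_
  · exact (totalDegree_rename_le _ _).trans (hSd g hg)
  · rw [hg', hS]
    exact Ideal.subset_span hg

/-- Descending induction on the number of independent variables, the degree bound `E` growing by
the exponent `n + 4` at each step. -/
theorem isPrime_of_nzd {d : ℕ} {S : Set (MvPolynomial (Fin n) k)} (hn : 1 ≤ n) (hd : 1 ≤ d)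
    (hI : I ≠ ⊤) (hS : I = Ideal.span S) (hSd : ∀ g ∈ S, g.totalDegree ≤ d)
    (nzd : ∀ a : MvPolynomial (Fin n) k,
      a.totalDegree ≤ ((2 * n * d) ^ (n + 4) ^ (n - 1)) ^ (4 * n + 8) → a ∉ I →
      ∀ g, a * g ∈ I → g ∈ I) : I.IsPrime := by
  have hX : 1 ≤ 2 * n * d := by nlinarith [Nat.mul_le_mul hn hd]
  have main : ∀ m, ∀ r, r + m = n → ∀ f : Fin r → Fin n, Function.Injective f →
      IsFree I f ((2 * n * d) ^ (n + 4) ^ m) → I.IsPrime := by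
    intro m
    induction m with
    | zero =>
      intro r hr f hf hfree
      obtain rfl : r = n := by omega
      have : I = ⊥ := eq_bot_of_isFree hS hSd f hf fun c hc hcd => hfree c hc
        (hcd.trans (by simpa using Nat.le_mul_of_pos_left d (by omega)))
      rw [this]
      exact Ideal.isPrime_bot
    | succ m ih =>
      intro r hr f hf hfree
      by_cases hmax : ∃ i, i ∉ Set.range f ∧
          IsFree I (Fin.cons i f : Fin (r + 1) → Fin n) ((2 * n * d) ^ (n + 4) ^ m)
      · obtain ⟨i, hi, hif⟩ := hmax
        exact ih (r + 1) (by omega) _ (Fin.cons_injective_iff.mpr ⟨hi, hf⟩) hif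
      · push Not at hmax
        rw [pow_succ, pow_mul] at hfree
        obtain ⟨D⟩ := exists_normData hn hd (Nat.le_self_pow (by positivity) _) hS hSd f hfree
          hmax fun a ha => nzd a (ha.trans (Nat.pow_le_pow_left
            (Nat.pow_le_pow_right hX (Nat.pow_le_pow_right (by omega) (by omega))) _))
        exact D.isPrime
  refine main n 0 (by omega) Fin.elim0 (fun x => x.elim0) fun c hc _ hcI => ?_
  -- a nonzero polynomial in no variables is a unit
  obtain ⟨a, rfl⟩ := C_surjective (Fin 0) c
  have ha : a ≠ 0 := fun h => hc (by rw [h, C_0])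
  rw [rename_C] at hcI
  exact hI (Ideal.eq_top_of_isUnit_mem _ hcI ((Ne.isUnit ha).map C))

end Independent

/-! ### Numerical bounds -/

theorem hermannExp_add_two_le (n : ℕ) : hermannExp n + 2 ≤ 2 ^ (2 * n ^ 2 + n + 1) := by
  induction n with
  | zero => simp [hermannExp]
  | succ n ih =>
    have h1 : 3 * n + 6 ≤ 2 ^ (4 * n + 3) := by
      have h := Nat.lt_two_pow_self (n := n)
      have h' : 2 ^ n ≤ 2 ^ (4 * n) := Nat.pow_le_pow_right (by norm_num) (by omega)
      rw [pow_add]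
      omega
    have h2 : hermannExp (n + 1) + 2 ≤ (3 * n + 6) * (hermannExp n + 2) := by
      rw [hermannExp]
      nlinarith
    refine h2.trans ((Nat.mul_le_mul h1 ih).trans (le_of_eq ?_))
    rw [← pow_add]
    congr 1
    ring

/-- The degree `G = (2nd) ^ ((n + 4) ^ (n - 1) * (4 * n + 8))` in which non-zero-divisors are needed,
raised to the exponent of the syzygy bound, stays below the bound of the theorem. -/
theorem exponent_le (n : ℕ) (hn : 2 ≤ n) :
    (n + 4) ^ (n - 1) * (4 * n + 8) * (hermannExp n + 2) ≤ n ^ 3 * 2 ^ (6 * n ^ 2) := by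
  have h1 : n + 4 ≤ 2 ^ (n + 1) := by
    induction n, hn using Nat.le_induction with
    | base => norm_num
    | succ m hm ih => rw [pow_succ]; omega
  have h2 : (n + 4) ^ (n - 1) * (4 * n + 8) ≤ 2 ^ 2 * 2 ^ ((n + 1) * n) := by
    calc (n + 4) ^ (n - 1) * (4 * n + 8) ≤ (n + 4) ^ (n - 1) * (2 ^ 2 * (n + 4)) :=
          Nat.mul_le_mul_left _ (by omega)
      _ = 2 ^ 2 * (n + 4) ^ n := by
          obtain ⟨m, rfl⟩ : ∃ m, n = m + 1 := ⟨n - 1, by omega⟩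
          rw [Nat.add_sub_cancel]
          ring
      _ ≤ 2 ^ 2 * 2 ^ ((n + 1) * n) := by
          rw [pow_mul]
          exact Nat.mul_le_mul_left _ (Nat.pow_le_pow_left h1 n)
  calc _ ≤ 2 ^ 2 * 2 ^ ((n + 1) * n) * 2 ^ (2 * n ^ 2 + n + 1) :=
        Nat.mul_le_mul h2 (hermannExp_add_two_le n)
    _ ≤ 2 ^ (6 * n ^ 2) := by
        rw [← pow_add, ← pow_add]
        exact Nat.pow_le_pow_right (by norm_num) (by nlinarith)
    _ ≤ n ^ 3 * 2 ^ (6 * n ^ 2) := Nat.le_mul_of_pos_left _ (by positivity)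

/-- In one variable the generator of `I` has degree at most `d`, and every factorisation of it is
seen by the hypothesis. -/
theorem isPrime_of_one_variable {k : Type*} [Field k] {d b : ℕ} (hdb : d ≤ b)
    (I : Ideal (MvPolynomial (Fin 1) k)) (hI : I ≠ ⊤) (S : Set (MvPolynomial (Fin 1) k))
    (hS : I = Ideal.span S) (hSd : ∀ f ∈ S, f.totalDegree ≤ d)
    (hprime : ∀ f g : MvPolynomial (Fin 1) k, f.totalDegree ≤ b → g.totalDegree ≤ b →
      f * g ∈ I → f ∈ I ∨ g ∈ I) : I.IsPrime := by
  by_cases hbot : I = ⊥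
  · rw [hbot]
    exact Ideal.isPrime_bot
  have hpid : IsPrincipalIdealRing (MvPolynomial (Fin 1) k) :=
    IsPrincipalIdealRing.of_surjective (uniqueAlgEquiv k (Fin 1)).symm.toRingHom
      (uniqueAlgEquiv k (Fin 1)).symm.surjective
  obtain ⟨p, hp⟩ := (hpid.principal I).principal
  change I = Ideal.span {p} at hp
  have hmem : ∀ x, x ∈ I ↔ p ∣ x := fun x => by rw [hp, Ideal.mem_span_singleton]
  have hp0 : p ≠ 0 := fun h => hbot (by rw [hp, h]; simp)
  obtain ⟨s, hs, hs0⟩ : ∃ s ∈ S, s ≠ 0 := by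
    by_contra! h
    exact hbot (by rwa [hS, Ideal.span_eq_bot])
  have hdvd : ∀ x y : MvPolynomial (Fin 1) k, x ∣ y → y ≠ 0 → x.totalDegree ≤ y.totalDegree := by
    rintro x _ ⟨c, rfl⟩ h
    rw [totalDegree_mul_of_isDomain (left_ne_zero_of_mul h) (right_ne_zero_of_mul h)]
    omega
  have hpd : p.totalDegree ≤ b :=
    ((hdvd p s ((hmem s).mp (hS ▸ Ideal.subset_span hs)) hs0).trans (hSd s hs)).trans hdb
  have hirr : Irreducible p := by
    refine ⟨fun h => hI (by rw [hp, Ideal.span_singleton_eq_top]; exact h), fun x y hxy => ?_⟩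
    have hx := left_ne_zero_of_mul (hxy ▸ hp0)
    have hy := right_ne_zero_of_mul (hxy ▸ hp0)
    rcases hprime x y ((hdvd x p ⟨y, hxy⟩ hp0).trans hpd)
      ((hdvd y p ⟨x, by rw [hxy, mul_comm]⟩ hp0).trans hpd) ((hmem _).mpr hxy.dvd) with h | h
    · obtain ⟨c, hc⟩ := (hmem x).mp h
      refine .inr (.of_mul_eq_one c (mul_left_cancel₀ hx ?_))
      rw [← mul_assoc, ← hxy, ← hc, mul_one]
    · obtain ⟨c, hc⟩ := (hmem y).mp h
      refine .inl (.of_mul_eq_one c (mul_left_cancel₀ hy ?_))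
      rw [← mul_assoc, mul_comm y, ← hxy, ← hc, mul_one]
  rw [hp]
  exact (Ideal.span_singleton_prime hp0).mpr hirr.prime

end PrimeBound

/-- If a proper ideal of `k[x₁,…,xₙ]` generated in degree at most `d`
is prime up to `(2nd)^(n³·2^(6n²))`, then it is prime. -/
theorem prime_up_to_simple_bound_implies_prime
    (k : Type*) [Field k] (n d : ℕ) (hn : 1 ≤ n) (hd : 1 ≤ d)
    (I : Ideal (MvPolynomial (Fin n) k)) (hproper : I ≠ ⊤)
    (S : Set (MvPolynomial (Fin n) k)) (hgen : I = Ideal.span S)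
    (hdeg : ∀ f ∈ S, f.totalDegree ≤ d)
    (hprime : ∀ f g : MvPolynomial (Fin n) k,
      f.totalDegree ≤ (2 * n * d) ^ (n ^ 3 * 2 ^ (6 * n ^ 2)) →
      g.totalDegree ≤ (2 * n * d) ^ (n ^ 3 * 2 ^ (6 * n ^ 2)) →
      f * g ∈ I → f ∈ I ∨ g ∈ I) :
    I.IsPrime := by
  have hX : 2 ≤ 2 * n * d := by nlinarith [Nat.mul_le_mul hn hd]
  have hdX : d ≤ 2 * n * d := Nat.le_mul_of_pos_left d (by omega)
  have hpos : 0 < n ^ 3 * 2 ^ (6 * n ^ 2) := by positivity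
  obtain rfl | hn2 : n = 1 ∨ 2 ≤ n := by omega
  · exact PrimeBound.isPrime_of_one_variable (hdX.trans (Nat.le_self_pow hpos.ne' _)) I hproper S
      hgen hdeg hprime
  · have hexp := PrimeBound.exponent_le n hn2
    have hG1 : 0 < (n + 4) ^ (n - 1) * (4 * n + 8) := by positivity
    have hX1 : 0 < 2 * n * d := by omega
    have hXG : 2 * n * d ≤ ((2 * n * d) ^ (n + 4) ^ (n - 1)) ^ (4 * n + 8) := by
      rw [← pow_mul]
      exact Nat.le_self_pow hG1.ne' _
    refine PrimeBound.isPrime_of_nzd hn hd hproper hgen hdeg fun a ha haI g hg =>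
      PrimeBound.nzd_of_prime_up_to (hX.trans hXG) ?_ ?_ I S hgen
        (fun f hf => (hdeg f hf).trans (hdX.trans hXG)) hprime a ha haI g hg
    · rw [← pow_mul, ← pow_mul, ← mul_assoc]
      exact Nat.pow_le_pow_right hX1 (le_trans (Nat.mul_le_mul_left _ (Nat.le_add_right _ 2)) hexp)
    · rw [← pow_mul]
      exact Nat.pow_le_pow_right hX1 (le_trans (Nat.le_mul_of_pos_right _ (by omega)) hexp)
end

section
/- Let k be a field, d ≥ 1 a natural number, and let I be a proper ideal of the univariate polynomial ring k[x] generated by polynomials of degree at most d. If I is prime up to d, then I is a prime ideal. -/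
/-!
The zero ideal is prime, so assume that some generator `s` is nonzero; its degree is at most `d`.
Every polynomial is congruent modulo `I` to its remainder on division by `s`, which has degree
less than `deg s ≤ d`. Membership of `f`, `g` and `f * g` in `I` is unchanged when `f` and `g`
are replaced by their remainders, and to these the bounded primality hypothesis applies.
-/

/-- If a proper ideal of the univariate polynomial ring `k[x]`
generated in degree at most `d` is prime up to `d`, then it is prime. -/
theorem univariate_prime_up_to_d_implies_prime
    (k : Type*) [Field k] (d : ℕ) (hd : 1 ≤ d)
    (I : Ideal (Polynomial k)) (hproper : I ≠ ⊤)
    (S : Set (Polynomial k)) (hgen : I = Ideal.span S)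
    (hdeg : ∀ f ∈ S, f.natDegree ≤ d)
    (hprime : ∀ f g : Polynomial k, f.natDegree ≤ d → g.natDegree ≤ d →
      f * g ∈ I → f ∈ I ∨ g ∈ I) :
    I.IsPrime := by
  by_cases hS : ∀ s ∈ S, s = 0
  · have hbot : I = ⊥ := by rw [hgen, Ideal.span_eq_bot]; exact hS
    rw [hbot]
    exact Ideal.isPrime_bot
  push Not at hS
  obtain ⟨s, hsS, hs0⟩ := hS
  have hsI : s ∈ I := hgen ▸ Ideal.subset_span hsS
  have hmod_deg (f : Polynomial k) : (f % s).natDegree ≤ d :=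
    (Polynomial.natDegree_le_natDegree (Polynomial.degree_mod_lt f hs0).le).trans (hdeg s hsS)
  have hsub (f : Polynomial k) : f - f % s ∈ I := by
    have h : f - f % s = s * (f / s) :=
      sub_eq_of_eq_add' (EuclideanDomain.mod_add_div f s).symm
    rw [h]
    exact I.mul_mem_right _ hsI
  have hmod (f : Polynomial k) : f % s ∈ I ↔ f ∈ I :=
    ⟨fun h => by simpa using I.add_mem (hsub f) h,
      fun h => by simpa using I.sub_mem h (hsub f)⟩
  refine ⟨hproper, fun {f g} hfg => ?_⟩
  rw [← hmod f, ← hmod g]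
  refine hprime _ _ (hmod_deg f) (hmod_deg g) ?_
  have h : (f % s) * (g % s) = f * g - (f * (g - g % s) + (g % s) * (f - f % s)) := by ring
  rw [h]
  exact I.sub_mem hfg (I.add_mem (I.mul_mem_left _ (hsub g)) (I.mul_mem_left _ (hsub f)))
end

section
/- Let k be a field, n ≥ 1 and d ≥ 1 natural numbers, and let I be a proper ideal of the polynomial ring k[x_1,…,x_n] generated by polynomials of total degree at most d. Suppose that for every i with 1 ≤ i ≤ n, the intersection of I with the subring k[x_i] of polynomials in the single variable x_i contains a nonzero element. If I is prime up to n·2·d^(2^n), then I is a prime ideal. -/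
/-!
Every class in `k[x₁, …, xₙ] ⧸ I` has a representative of total degree at most `d ^ n`. Since
`d ^ n ≤ n * (2 * d ^ 2 ^ n)`, being prime up to the given bound is then the same as being prime.

The bound `d ^ n` is an affine Bézout inequality. Extending scalars to the algebraic closure, one may
assume `k` infinite (`mem_of_map_mem_span` descends the conclusion). The elements `pᵢ(xᵢ) ∈ I`
form a regular sequence (`regSeq_univariate`). Linear prime avoidance (`exists_common_nzd`) and an
exchange argument (`RegSeq.exchange`) replace them one by one with linear combinations of the given
generators, which have degree at most `d`. Each such cut by a nonzerodivisor satisfies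
`H_{J + (g)}(t + d) + H_J(t) ≤ H_J(t + d)` for affine Hilbert functions (`hilb_cut`). Summing up,
`H_I(T) * (r + n choose n) ≤ (T + r * d + n choose n)` for all `r`, and comparing growth in `r` gives
`H_I(T) ≤ d ^ n` for all `T`. So `H_I(j) = H_I(j + 1)` for some `j ≤ d ^ n`, which means that the
polynomials of degree at most `j` represent a subspace stable under multiplication by every
variable, that is, everything (`exists_rep_infinite`).
-/

namespace ZeroDimBezout

open MvPolynomial

/-! ### Weakly regular sequences modulo an ideal -/

section Regular

variable {R : Type*} [CommRing R]

/-- `g` is a nonzerodivisor on `R ⧸ J`. -/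
def NzdMod (J : Ideal R) (g : R) : Prop := ∀ f, g * f ∈ J → f ∈ J

/-- The list is a weakly regular sequence on `R ⧸ J`: each entry is a nonzerodivisor modulo `J`
and the preceding entries. -/
def RegSeq : Ideal R → List R → Prop
  | _, [] => True
  | J, a :: l => NzdMod J a ∧ RegSeq (J ⊔ Ideal.span {a}) l

/-- The ideals `J, J + (a₁), …, J + (a₁, …, aₘ₋₁)` attached to the list `a₁, …, aₘ`; the ideal
generated by `J` and the whole list is left out. -/
def partialIdeals : Ideal R → List R → List (Ideal R)
  | _, [] => []
  | J, a :: l => J :: partialIdeals (J ⊔ Ideal.span {a}) l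

lemma mem_sup_span_singleton {J : Ideal R} {a f : R} :
    f ∈ J ⊔ Ideal.span {a} ↔ ∃ c, f - a * c ∈ J := by
  rw [Submodule.mem_sup]
  constructor
  · rintro ⟨y, hy, z, hz, rfl⟩
    obtain ⟨c, rfl⟩ := Ideal.mem_span_singleton'.1 hz
    exact ⟨c, by simpa [mul_comm] using hy⟩
  · rintro ⟨c, hc⟩
    exact ⟨_, hc, a * c, Ideal.mul_mem_right _ _ (Ideal.mem_span_singleton_self a), by ring⟩

lemma NzdMod.swap {J : Ideal R} {a g : R} (ha : NzdMod J a)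
    (hg : NzdMod (J ⊔ Ideal.span {a}) g) : NzdMod (J ⊔ Ideal.span {g}) a := by
  intro m hm
  obtain ⟨c, hc⟩ := mem_sup_span_singleton.1 hm
  have h1 : g * c ∈ J ⊔ Ideal.span {a} := by
    refine mem_sup_span_singleton.2 ⟨m, ?_⟩
    have := J.neg_mem hc
    rwa [neg_sub] at this
  obtain ⟨e, he⟩ := mem_sup_span_singleton.1 (hg c h1)
  refine mem_sup_span_singleton.2 ⟨e, ha _ ?_⟩
  have : a * (m - g * e) = (a * m - g * c) + g * (c - a * e) := by ring
  rw [this]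
  exact J.add_mem hc (J.mul_mem_left _ he)

/-- The exchange step: a `g` that is regular modulo all the partial ideals of a regular sequence
can be put in front of it, at the cost of the last entry. -/
lemma RegSeq.exchange {g : R} : ∀ (l : List R) (J : Ideal R), RegSeq J l →
    (∀ P ∈ partialIdeals J l, NzdMod P g) → RegSeq (J ⊔ Ideal.span {g}) l.dropLast
  | [], _, _, _ => trivial
  | [_], _, _, _ => trivial
  | a :: b :: l, J, h, hg => by
    have ih := RegSeq.exchange (b :: l) (J ⊔ Ideal.span {a}) h.2
      (fun P hP => hg P (List.mem_cons_of_mem _ hP))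
    rw [List.dropLast_cons_cons]
    refine ⟨h.1.swap (hg _ (by simp [partialIdeals])), ?_⟩
    rwa [sup_right_comm]

lemma RegSeq.exists_nzd {I : Ideal R} : ∀ (l : List R) (J : Ideal R), RegSeq J l →
    (∀ a ∈ l, a ∈ I) → ∀ P ∈ partialIdeals J l, ∃ a ∈ I, NzdMod P a
  | [], _, _, _, P, hP => by simp [partialIdeals] at hP
  | a :: l, J, h, hI, P, hP => by
    rcases List.mem_cons.1 hP with rfl | hP
    · exact ⟨a, hI a (by simp), h.1⟩
    · exact RegSeq.exists_nzd l _ h.2 (fun b hb => hI b (by simp [hb])) P hP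

/-- Linear prime avoidance: if `S` generates `I`, and `I` contains a nonzerodivisor modulo each of
finitely many ideals, then over an infinite field some `K`-linear combination of elements of `S`
is a nonzerodivisor modulo all of them. -/
lemma exists_common_nzd {K : Type*} [Field K] [Infinite K] [Algebra K R] [IsNoetherianRing R]
    (S : Set R) (Ps : List (Ideal R))
    (h : ∀ P ∈ Ps, ∃ a ∈ Ideal.span S, NzdMod P a) :
    ∃ g ∈ Submodule.span K S, ∀ P ∈ Ps, NzdMod P g := by
  have hzd : ∀ (P : Ideal R) (r : R), NzdMod P r ↔ ∀ Q ∈ associatedPrimes R (R ⧸ P), r ∉ Q := by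
    intro P r
    have key : r ∈ (⋃ p ∈ associatedPrimes R (R ⧸ P), (p : Set R)) ↔
        ∃ x : R ⧸ P, x ≠ 0 ∧ r • x = 0 := by
      rw [biUnion_associatedPrimes_eq_zero_divisors]; rfl
    have key2 : NzdMod P r ↔ ¬ ∃ x : R ⧸ P, x ≠ 0 ∧ r • x = 0 := by
      push Not
      constructor
      · intro hr x hx
        obtain ⟨f, rfl⟩ := Ideal.Quotient.mk_surjective x
        intro h0
        refine hx (Ideal.Quotient.eq_zero_iff_mem.2 (hr f ?_))
        rw [← Ideal.Quotient.eq_zero_iff_mem, map_mul]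
        exact h0
      · intro hr f hf
        by_contra hfP
        refine hr (Ideal.Quotient.mk P f) (fun h0 => hfP (Ideal.Quotient.eq_zero_iff_mem.1 h0)) ?_
        rw [← Ideal.Quotient.eq_zero_iff_mem, map_mul] at hf
        exact hf
    rw [key2, ← key]
    simp
  let A : Set (Ideal R) := ⋃ P ∈ {P | P ∈ Ps}, associatedPrimes R (R ⧸ P)
  have hA : A.Finite := (List.finite_toSet Ps).biUnion fun P _ => associatedPrimes.finite R (R ⧸ P)
  have := hA.to_subtype
  let W := Submodule.span K S
  let p : A → Subspace K W := fun Q => (Q.1.restrictScalars K).comap W.subtype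
  by_contra hcon
  push Not at hcon
  have hcov : ⋃ Q, (p Q : Set W) = Set.univ := by
    refine Set.eq_univ_of_forall fun w => ?_
    obtain ⟨P, hP, hw⟩ := hcon w.1 w.2
    rw [hzd] at hw
    push Not at hw
    obtain ⟨Q, hQ, hwQ⟩ := hw
    exact Set.mem_iUnion.2 ⟨⟨Q, Set.mem_biUnion hP hQ⟩, hwQ⟩
  obtain ⟨⟨Q, hQ⟩, htop⟩ := Subspace.exists_eq_top_of_iUnion_eq_univ hcov
  obtain ⟨P, hP, hQP⟩ := Set.mem_iUnion₂.1 hQ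
  obtain ⟨a, ha, haP⟩ := h P hP
  refine (hzd P a).1 haP Q hQP (Ideal.span_le.2 (fun s hs => ?_) ha)
  have : (⟨s, Submodule.subset_span hs⟩ : W) ∈ p ⟨Q, hQ⟩ := by rw [htop]; trivial
  exact this

end Regular

section Univariate

variable {K σ : Type*} [Field K]

/-- `p i (x i)` is regular modulo polynomials in the other variables. Sending `x i` to a new
variable `T` maps the ring to polynomials in `T` over the quotient, where `p i` becomes monic. -/
lemma nzdMod_univariate (p : σ → Polynomial K) (hp : ∀ i, (p i).Monic) (s : Set σ) (i : σ)
    (hi : i ∉ s) :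
    NzdMod (Ideal.span ((fun j => Polynomial.aeval (X j : MvPolynomial σ K) (p j)) '' s))
      (Polynomial.aeval (X i : MvPolynomial σ K) (p i)) := by
  classical
  set J := Ideal.span ((fun j => Polynomial.aeval (X j : MvPolynomial σ K) (p j)) '' s) with hJ
  let A := MvPolynomial σ K ⧸ J
  let φ : MvPolynomial σ K →ₐ[K] Polynomial A :=
    MvPolynomial.aeval (fun j => if j = i then Polynomial.X
      else Polynomial.C (Ideal.Quotient.mk J (X j)))
  let ε : Polynomial A →ₐ[A] A := Polynomial.aeval (Ideal.Quotient.mk J (X i))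
  have hε : ∀ f, ε (φ f) = Ideal.Quotient.mkₐ K J f := by
    intro f
    have : ((ε.restrictScalars K).comp φ) = Ideal.Quotient.mkₐ K J := by
      apply MvPolynomial.algHom_ext
      intro j
      by_cases h : j = i
      · subst h; simp [φ, ε]; rfl
      · simp [φ, ε, h]; rfl
    exact DFunLike.congr_fun this f
  have hker : ∀ f ∈ J, φ f = 0 := by
    intro f hf
    have : J ≤ RingHom.ker φ := by
      refine Ideal.span_le.2 ?_
      rintro _ ⟨j, hj, rfl⟩
      have hji : j ≠ i := fun h => hi (h ▸ hj)
      have h0 : Ideal.Quotient.mkₐ K J (Polynomial.aeval (X j : MvPolynomial σ K) (p j)) = 0 :=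
        Ideal.Quotient.eq_zero_iff_mem.2 (Ideal.subset_span ⟨j, hj, rfl⟩)
      have hφ : φ (X j) = (Polynomial.CAlgHom (R := K) (A := A)) (Ideal.Quotient.mkₐ K J (X j)) := by
        simp [φ, hji]
      change φ _ = 0
      rw [← Polynomial.aeval_algHom_apply, hφ, Polynomial.aeval_algHom_apply,
        Polynomial.aeval_algHom_apply, h0, map_zero]
    exact this hf
  intro f hf
  have h1 := hker _ hf
  have hX : φ (X i) = Polynomial.X := by simp [φ]
  rw [map_mul, ← Polynomial.aeval_algHom_apply, hX, Polynomial.aeval_X_left_eq_map,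
    ((hp i).map _).mul_right_eq_zero_iff] at h1
  have h2 := hε f
  rw [h1, map_zero] at h2
  exact Ideal.Quotient.eq_zero_iff_mem.1 h2.symm

lemma regSeq_univariate (p : σ → Polynomial K) (hp : ∀ i, (p i).Monic) :
    ∀ (l : List σ) (s : Set σ), l.Nodup → (∀ i ∈ l, i ∉ s) →
    RegSeq (Ideal.span ((fun j => Polynomial.aeval (X j : MvPolynomial σ K) (p j)) '' s))
      (l.map (fun j => Polynomial.aeval (X j : MvPolynomial σ K) (p j)))
  | [], _, _, _ => trivial
  | i :: l, s, hl, hs => by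
    rw [List.nodup_cons] at hl
    refine ⟨nzdMod_univariate p hp s i (hs i (by simp)), ?_⟩
    have hins := Set.image_insert_eq (f := fun j => Polynomial.aeval (X j : MvPolynomial σ K) (p j))
      (a := i) (s := s)
    rw [← Ideal.span_union, Set.union_singleton, ← hins]
    refine regSeq_univariate p hp l _ hl.2 fun j hj hjs => ?_
    rcases hjs with rfl | hjs
    · exact hl.1 hj
    · exact hs j (by simp [hj]) hjs

end Univariate

/-! ### Affine Hilbert functions -/

section Hilbert

variable {K σ : Type*} [Field K]

/-- The image in `K[x] ⧸ J` of the polynomials of total degree at most `t`. -/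
noncomputable def filt (J : Ideal (MvPolynomial σ K)) (t : ℕ) :
    Submodule K (MvPolynomial σ K ⧸ J) :=
  (restrictTotalDegree σ K t).map (Ideal.Quotient.mkₐ K J).toLinearMap

/-- The affine Hilbert function of `K[x] ⧸ J`. -/
noncomputable def hilb (J : Ideal (MvPolynomial σ K)) (t : ℕ) : ℕ := Module.finrank K (filt J t)

instance [Finite σ] (J : Ideal (MvPolynomial σ K)) (t : ℕ) : Module.Finite K (filt J t) := by
  unfold filt; infer_instance

lemma mem_filt {J : Ideal (MvPolynomial σ K)} {t : ℕ} {x : MvPolynomial σ K ⧸ J} :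
    x ∈ filt J t ↔ ∃ f : MvPolynomial σ K, f.totalDegree ≤ t ∧ Ideal.Quotient.mk J f = x := by
  simp [filt, mem_restrictTotalDegree]

lemma filt_mono (J : Ideal (MvPolynomial σ K)) {s t : ℕ} (h : s ≤ t) : filt J s ≤ filt J t := by
  intro x hx
  obtain ⟨f, hf, rfl⟩ := mem_filt.1 hx
  exact mem_filt.2 ⟨f, hf.trans h, rfl⟩

lemma hilb_mono [Finite σ] (J : Ideal (MvPolynomial σ K)) {s t : ℕ} (h : s ≤ t) : hilb J s ≤ hilb J t :=
  Submodule.finrank_mono (filt_mono J h)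

lemma filt_map {J J' : Ideal (MvPolynomial σ K)} (h : J ≤ J') (t : ℕ) :
    (filt J t).map (Ideal.Quotient.factorₐ K h).toLinearMap = filt J' t := by
  ext x
  rw [Submodule.mem_map, mem_filt]
  constructor
  · rintro ⟨y, hy, rfl⟩
    obtain ⟨f, hf, rfl⟩ := mem_filt.1 hy
    exact ⟨f, hf, rfl⟩
  · rintro ⟨f, hf, rfl⟩
    exact ⟨Ideal.Quotient.mk J f, mem_filt.2 ⟨f, hf, rfl⟩, rfl⟩

lemma hilb_anti [Finite σ] {J J' : Ideal (MvPolynomial σ K)} (h : J ≤ J') (t : ℕ) :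
    hilb J' t ≤ hilb J t := by
  rw [hilb, ← filt_map h]
  exact Submodule.finrank_map_le _ _

/-- Cutting by a nonzerodivisor `g` of degree at most `d`: the kernel of
`K[x] ⧸ J → K[x] ⧸ (J + (g))` in degree at most `t + d` contains `g` times everything of degree
at most `t`, and multiplication by `g` is injective. -/
lemma hilb_cut [Finite σ] {J : Ideal (MvPolynomial σ K)} {g : MvPolynomial σ K} {d : ℕ}
    (hg : NzdMod J g) (hd : g.totalDegree ≤ d) (t : ℕ) :
    hilb (J ⊔ Ideal.span {g}) (t + d) + hilb J t ≤ hilb J (t + d) := by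
  have hle : J ≤ J ⊔ Ideal.span {g} := le_sup_left
  let π := (Ideal.Quotient.factorₐ K hle).toLinearMap
  let M := LinearMap.mulLeft K (Ideal.Quotient.mk J g)
  have hM : Function.Injective M := by
    rw [← LinearMap.ker_eq_bot, LinearMap.ker_eq_bot']
    intro x hx
    obtain ⟨f, rfl⟩ := Ideal.Quotient.mk_surjective x
    refine Ideal.Quotient.eq_zero_iff_mem.2 (hg f ?_)
    rw [← Ideal.Quotient.eq_zero_iff_mem, map_mul]
    exact hx
  have h1 := LinearMap.finrank_range_add_finrank_ker (π.domRestrict (filt J (t + d)))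
  have h2 : LinearMap.range (π.domRestrict (filt J (t + d))) =
      filt (J ⊔ Ideal.span {g}) (t + d) := by
    rw [LinearMap.range_domRestrict]
    exact filt_map hle _
  rw [h2] at h1
  have h3 : Module.finrank K (filt J t) ≤
      Module.finrank K (LinearMap.ker (π.domRestrict (filt J (t + d)))) := by
    have hmem : ∀ x : filt J t, M x.1 ∈ filt J (t + d) := by
      rintro ⟨x, hx⟩
      obtain ⟨f, hf, rfl⟩ := mem_filt.1 hx
      refine mem_filt.2 ⟨g * f, (totalDegree_mul _ _).trans (by omega), ?_⟩
      simp [M]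
    let N : filt J t →ₗ[K] filt J (t + d) := (M.comp (filt J t).subtype).codRestrict _ hmem
    have hker : ∀ x : filt J t, N x ∈ LinearMap.ker (π.domRestrict (filt J (t + d))) := by
      rintro ⟨x, hx⟩
      obtain ⟨f, rfl⟩ := Ideal.Quotient.mk_surjective x
      have : Ideal.Quotient.mk (J ⊔ Ideal.span {g}) (g * f) = 0 :=
        Ideal.Quotient.eq_zero_iff_mem.2 (Ideal.mul_mem_right _ _
          (Ideal.mem_sup_right (Ideal.mem_span_singleton_self g)))
      rw [map_mul] at this
      exact this
    refine LinearMap.finrank_le_finrank_of_injective (f := N.codRestrict _ hker) ?_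
    intro x y hxy
    exact Subtype.ext (hM (congrArg (fun z => (z.1.1)) hxy))
  unfold hilb
  omega

/-- If `I` is generated in degree at most `d` and contains a weakly regular sequence of length `m`
on `K[x] ⧸ J`, with `J ≤ I`, then the Hilbert function of `J` grows at least like a polynomial of
degree `m` whose leading coefficient is proportional to any value `hilb I T`. By the exchange step the regular sequence may be traded, one entry at a time,
for elements of degree at most `d`; Pascal's rule sums up the resulting inequalities. -/
lemma hilb_growth [Finite σ] [Infinite K] (S : Set (MvPolynomial σ K)) (d : ℕ)
    (hS : ∀ f ∈ S, f.totalDegree ≤ d) (T m : ℕ) :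
    ∀ (l : List (MvPolynomial σ K)) (J : Ideal (MvPolynomial σ K)), l.length = m →
    RegSeq J l → (∀ a ∈ l, a ∈ Ideal.span S) → J ≤ Ideal.span S → ∀ r : ℕ,
    hilb (Ideal.span S) T * (r + m).choose m ≤ hilb J (T + r * d) := by
  induction m with
  | zero =>
    intro l J _ _ _ hJ r
    simpa using (hilb_anti hJ T).trans (hilb_mono J (by omega))
  | succ m ih =>
    intro l J hlen hreg hl hJ r
    obtain ⟨g, hgS, hg⟩ := exists_common_nzd (K := K) S (partialIdeals J l)
      (RegSeq.exists_nzd l J hreg hl)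
    have hgI : g ∈ Ideal.span S := Submodule.span_le_restrictScalars K _ S hgS
    have hgd : g.totalDegree ≤ d := by
      rw [← mem_restrictTotalDegree]
      exact Submodule.span_le.2 (fun f hf => (mem_restrictTotalDegree _ _ _).2 (hS f hf)) hgS
    have hgJ : NzdMod J g := by
      refine hg J ?_
      cases l with
      | nil => simp at hlen
      | cons a l => simp [partialIdeals]
    have hJ' : J ⊔ Ideal.span {g} ≤ Ideal.span S :=
      sup_le hJ ((Ideal.span_singleton_le_iff_mem _).2 hgI)
    have ih' := ih l.dropLast (J ⊔ Ideal.span {g}) (by simp [hlen]) (RegSeq.exchange l J hreg hg)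
      (fun a ha => hl a (List.mem_of_mem_dropLast ha)) hJ'
    induction r with
    | zero => simpa using hilb_anti hJ T
    | succ r ihr =>
      have h1 := ih' (r + 1)
      have h2 := hilb_cut hgJ hgd (T + r * d)
      have h3 : (r + 1 + (m + 1)).choose (m + 1) =
          (r + 1 + m).choose m + (r + (m + 1)).choose (m + 1) := by
        rw [show r + 1 + (m + 1) = (r + 1 + m) + 1 by ring, Nat.choose_succ_succ,
          show r + 1 + m = r + (m + 1) by ring]
      rw [h3, mul_add]
      have h4 : T + (r + 1) * d = T + r * d + d := by ring
      rw [h4] at h1 ⊢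
      omega

lemma sum_multichoose (n t : ℕ) :
    ∑ s ∈ Finset.range (t + 1), n.multichoose s = (n + 1).multichoose t := by
  induction t with
  | zero => simp
  | succ t ih => rw [Finset.sum_range_succ, ih, Nat.multichoose_succ_succ, add_comm]

lemma hilb_le_choose (n : ℕ) (J : Ideal (MvPolynomial (Fin n) K)) (t : ℕ) :
    hilb J t ≤ (t + n).choose n := by
  classical
  refine (Submodule.finrank_map_le _ _).trans ?_
  let F : Finset (Fin n →₀ ℕ) :=
    (Finset.range (t + 1)).biUnion fun s => Finset.finsuppAntidiag Finset.univ s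
  have hle : restrictTotalDegree (Fin n) K t ≤
      Submodule.span K ((F.image fun m => monomial m (1 : K) : Finset _) :
        Set (MvPolynomial (Fin n) K)) := by
    intro f hf
    rw [mem_restrictTotalDegree] at hf
    rw [f.as_sum]
    refine Submodule.sum_mem _ fun m hm => ?_
    have hmF : m ∈ F := by
      have := (le_totalDegree hm).trans hf
      rw [Finsupp.sum_fintype _ _ (fun _ => rfl)] at this
      refine Finset.mem_biUnion.2 ⟨∑ i, m i, Finset.mem_range.2 (by omega), ?_⟩
      simp [Finset.mem_finsuppAntidiag]
    rw [show monomial m (coeff m f) = coeff m f • monomial m (1 : K) by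
      rw [smul_monomial, smul_eq_mul, mul_one]]
    exact Submodule.smul_mem _ _ (Submodule.subset_span
      (Finset.mem_coe.2 (Finset.mem_image_of_mem _ hmF)))
  calc Module.finrank K (restrictTotalDegree (Fin n) K t)
      ≤ _ := Submodule.finrank_mono hle
    _ ≤ _ := finrank_span_finset_le_card _
    _ ≤ F.card := Finset.card_image_le
    _ ≤ ∑ s ∈ Finset.range (t + 1), (Finset.finsuppAntidiag Finset.univ s).card :=
        Finset.card_biUnion_le
    _ = (n + 1).multichoose t := by
        simp_rw [Finset.card_finsuppAntidiag_nat_eq_multichoose, Finset.card_univ, Fintype.card_fin]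
        exact sum_multichoose n t
    _ = (t + n).choose n := by
        rw [Nat.multichoose_eq, show n + 1 + t - 1 = t + n by omega, Nat.choose_symm_add]

end Hilbert

/-! ### The affine Bézout bound -/

/-- Comparison of leading coefficients in `r`: both sides are polynomials of degree `n`, with
leading coefficients `D / n!` and `d ^ n / n!`. -/
lemma le_pow_of_choose_le (D T d n : ℕ)
    (h : ∀ r : ℕ, D * (r + n).choose n ≤ (T + r * d + n).choose n) : D ≤ d ^ n := by
  have h1 : ∀ r : ℕ, D * (r + 1) ^ n ≤ (T + r * d + n) ^ n := by
    intro r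
    have e1 : (r + 1) ^ n ≤ n.factorial * (r + n).choose n := by
      rw [← Nat.ascFactorial_eq_factorial_mul_choose]
      exact Nat.pow_succ_le_ascFactorial _ _
    have e2 : n.factorial * (T + r * d + n).choose n ≤ (T + r * d + n) ^ n := by
      rw [← Nat.descFactorial_eq_factorial_mul_choose]
      exact Nat.descFactorial_le_pow _ _
    calc D * (r + 1) ^ n ≤ D * (n.factorial * (r + n).choose n) := Nat.mul_le_mul_left _ e1
      _ = n.factorial * (D * (r + n).choose n) := by ring
      _ ≤ n.factorial * (T + r * d + n).choose n := Nat.mul_le_mul_left _ (h r)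
      _ ≤ _ := e2
  have h2 : ∀ r : ℕ, (D : ℝ) ≤ ((d : ℝ) + (T + n : ℝ) * (1 / ((r : ℝ) + 1))) ^ n := by
    intro r
    have hr : (0 : ℝ) < (r : ℝ) + 1 := by positivity
    have h3 : (D : ℝ) * ((r : ℝ) + 1) ^ n ≤ ((T : ℝ) + r * d + n) ^ n := by exact_mod_cast h1 r
    have h4 : (d : ℝ) + (T + n : ℝ) * (1 / ((r : ℝ) + 1)) =
        ((T : ℝ) + (r + 1) * d + n) / (r + 1) := by field_simp; ring
    rw [h4, div_pow, le_div_iff₀ (by positivity)]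
    refine h3.trans ?_
    gcongr
    linarith
  have h5 : Filter.Tendsto (fun r : ℕ => ((d : ℝ) + (T + n : ℝ) * (1 / ((r : ℝ) + 1))) ^ n)
      Filter.atTop (nhds (((d : ℝ) + (T + n : ℝ) * 0) ^ n)) :=
    ((tendsto_one_div_add_atTop_nhds_zero_nat.const_mul _).const_add _).pow n
  have h6 := ge_of_tendsto' h5 h2
  rw [mul_zero, add_zero] at h6
  exact_mod_cast h6

/-- Over an infinite field, a zero-dimensional ideal generated in degree at most `d` has
representatives of degree at most `d ^ n`: the Hilbert function is bounded by `d ^ n`, so it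
repeats a value somewhere below `d ^ n + 1`, and from there on the filtration is constant. -/
lemma exists_rep_infinite {K : Type*} [Field K] [Infinite K] (n d : ℕ)
    (S : Set (MvPolynomial (Fin n) K)) (hS : ∀ f ∈ S, f.totalDegree ≤ d)
    (hzero : ∀ i : Fin n, ∃ p : Polynomial K, p.Monic ∧
      Polynomial.aeval (X i : MvPolynomial (Fin n) K) p ∈ Ideal.span S)
    (f : MvPolynomial (Fin n) K) :
    ∃ f' : MvPolynomial (Fin n) K, f'.totalDegree ≤ d ^ n ∧ f - f' ∈ Ideal.span S := by
  choose p hp hpI using hzero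
  set I := Ideal.span S with hI
  have hbound : ∀ T, hilb I T ≤ d ^ n := by
    intro T
    refine le_pow_of_choose_le _ T d n fun r => ?_
    have hreg := regSeq_univariate p hp (List.finRange n) ∅ (List.nodup_finRange n) (by simp)
    refine (hilb_growth S d hS T n _ _ (by simp) hreg ?_ (by simp) r).trans
      (hilb_le_choose n _ _)
    intro a ha
    obtain ⟨i, _, rfl⟩ := List.mem_map.1 ha
    exact hpI i
  obtain ⟨j, hj, heq⟩ : ∃ j ≤ d ^ n, hilb I (j + 1) ≤ hilb I j := by
    by_contra hcon
    push Not at hcon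
    have : ∀ j ≤ d ^ n + 1, j ≤ hilb I j := by
      intro j
      induction j with
      | zero => simp
      | succ j ih =>
        intro hj
        have h1 := ih (by omega)
        have h2 := hcon j (by omega)
        omega
    have h1 := this _ le_rfl
    have h2 := hbound (d ^ n + 1)
    omega
  have hfilt : filt I j = filt I (j + 1) :=
    Submodule.eq_of_le_of_finrank_le (filt_mono I (Nat.le_succ j)) heq
  have hall : ∀ f : MvPolynomial (Fin n) K, Ideal.Quotient.mk I f ∈ filt I j := by
    intro f
    induction f using MvPolynomial.induction_on with
    | C a => exact mem_filt.2 ⟨C a, by simp, rfl⟩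
    | add p q hp hq => rw [map_add]; exact Submodule.add_mem _ hp hq
    | mul_X p i hp =>
      obtain ⟨q, hq, hqp⟩ := mem_filt.1 hp
      rw [hfilt, map_mul, ← hqp, ← map_mul]
      exact mem_filt.2 ⟨q * X i, (totalDegree_mul _ _).trans (by simp [hq]), rfl⟩
  obtain ⟨f', hf', he⟩ := mem_filt.1 (hall f)
  exact ⟨f', hf'.trans hj, Ideal.Quotient.eq.1 he.symm⟩

/-! ### Descent from an infinite extension field -/

/-- A `k`-subspace `U` of `k[x]` is recovered from its extension of scalars: a `k`-linear form that
vanishes on `U` extends to a `K`-linear form vanishing on the `K`-span of `U`. -/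
lemma mem_of_map_mem_span {k K σ : Type*} [Field k] [Field K] [Algebra k K]
    (U : Submodule k (MvPolynomial σ k)) (f : MvPolynomial σ k)
    (hf : MvPolynomial.map (algebraMap k K) f ∈
      Submodule.span K (MvPolynomial.map (algebraMap k K) '' (U : Set (MvPolynomial σ k)))) :
    f ∈ U := by
  by_contra hfU
  obtain ⟨φ, hφf, hφU⟩ := Submodule.exists_le_ker_of_notMem hfU
  let Φ : MvPolynomial σ K →ₗ[K] K :=
    (basisMonomials σ K).constr K fun m => algebraMap k K (φ (monomial m 1))
  have hΦ : ∀ g : MvPolynomial σ k, Φ (MvPolynomial.map (algebraMap k K) g) =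
      algebraMap k K (φ g) := by
    intro g
    induction g using MvPolynomial.induction_on' with
    | monomial m a =>
      have h1 : monomial m (algebraMap k K a) = algebraMap k K a • basisMonomials σ K m := by
        rw [coe_basisMonomials, smul_monomial, smul_eq_mul, mul_one]
      have h2 : monomial m a = a • monomial m (1 : k) := by
        rw [smul_monomial, smul_eq_mul, mul_one]
      rw [map_monomial, h1, map_smul, Module.Basis.constr_basis, h2, map_smul, smul_eq_mul,
        smul_eq_mul, map_mul]
    | add p q hp hq => simp only [map_add, hp, hq]
  have hle : Submodule.span K (MvPolynomial.map (algebraMap k K) '' (U : Set (MvPolynomial σ k))) ≤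
      LinearMap.ker Φ := by
    rw [Submodule.span_le]
    rintro _ ⟨u, hu, rfl⟩
    have h0 : φ u = 0 := hφU hu
    change Φ _ = 0
    rw [hΦ, h0, map_zero]
  have h0 : Φ _ = 0 := hle hf
  rw [hΦ] at h0
  exact hφf ((map_eq_zero _).1 h0)

/-- A zero-dimensional ideal generated in degree at most `d` has representatives of degree at most
`d ^ n`, over any field: the infinite case applies over the algebraic closure, and the equality
`k[x] = k[x]_{≤ d ^ n} + I` descends. -/
lemma exists_rep {k : Type*} [Field k] (n d : ℕ)
    (S : Set (MvPolynomial (Fin n) k)) (hS : ∀ f ∈ S, f.totalDegree ≤ d)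
    (hzero : ∀ i : Fin n, ∃ p : Polynomial k, p.Monic ∧
      Polynomial.aeval (X i : MvPolynomial (Fin n) k) p ∈ Ideal.span S)
    (f : MvPolynomial (Fin n) k) :
    ∃ f' : MvPolynomial (Fin n) k, f'.totalDegree ≤ d ^ n ∧ f - f' ∈ Ideal.span S := by
  let K := AlgebraicClosure k
  let ι : MvPolynomial (Fin n) k →+* MvPolynomial (Fin n) K := MvPolynomial.map (algebraMap k K)
  have hspan : (Ideal.span S).map ι = Ideal.span (ι '' S) := Ideal.map_span _ _
  obtain ⟨F, hF, hfF⟩ := exists_rep_infinite (K := K) n d (ι '' S)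
    (by
      rintro _ ⟨s, hs, rfl⟩
      exact (Finset.sup_mono (support_map_subset _ _)).trans (hS s hs))
    (by
      intro i
      obtain ⟨p, hp, hpI⟩ := hzero i
      refine ⟨p.map (algebraMap k K), hp.map _, ?_⟩
      have := Ideal.mem_map_of_mem ι hpI
      rw [hspan] at this
      convert this using 1
      have hX : ι (X i) = X i := map_X _ _
      rw [Polynomial.aeval_map_algebraMap, Polynomial.aeval_def, Polynomial.aeval_def,
        Polynomial.hom_eval₂, hX]
      congr 1
      ext a
      simp [ι, MvPolynomial.algebraMap_eq,
        IsScalarTower.algebraMap_apply k K (MvPolynomial (Fin n) K)])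
    (ι f)
  let U : Submodule k (MvPolynomial (Fin n) k) :=
    restrictTotalDegree (Fin n) k (d ^ n) ⊔ (Ideal.span S).restrictScalars k
  have hfU : f ∈ U := by
    refine mem_of_map_mem_span (K := K) U f ?_
    set Q := Submodule.span K (MvPolynomial.map (algebraMap k K) ''
      (U : Set (MvPolynomial (Fin n) k))) with hQ
    have hsub : ∀ u ∈ U, ι u ∈ Q := fun u hu => Submodule.subset_span ⟨u, hu, rfl⟩
    have h1 : F ∈ Q := by
      rw [F.as_sum]
      refine Submodule.sum_mem _ fun m hm => ?_
      have h2 : monomial m (coeff m F) = coeff m F • ι (monomial m 1) := by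
        simp [ι, smul_monomial]
      rw [h2]
      refine Submodule.smul_mem _ _ (hsub _ (Submodule.mem_sup_left ?_))
      rw [mem_restrictTotalDegree, totalDegree_monomial _ one_ne_zero]
      exact (le_totalDegree hm).trans hF
    have h3 : ∀ G ∈ Ideal.span (ι '' S), G ∈ Q := by
      -- As a `K`-space, the extended ideal is spanned by the products of a monomial and some `ι s`.
      have hK := Submodule.span_smul_of_span_eq_top (R := K)
        (basisMonomials (Fin n) K).span_eq (ι '' S)
      intro G hG
      have hG' : G ∈ (Submodule.span (MvPolynomial (Fin n) K) (ι '' S)).restrictScalars K := hG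
      rw [← hK] at hG'
      refine Submodule.span_le.2 ?_ hG'
      rintro _ ⟨_, ⟨m, rfl⟩, _, ⟨s, hs, rfl⟩, rfl⟩
      have h4 : basisMonomials (Fin n) K m • ι s = ι (monomial m 1 * s) := by
        simp [ι, map_mul]
      change basisMonomials (Fin n) K m • ι s ∈ Q
      rw [h4]
      exact hsub _ (Submodule.mem_sup_right (Ideal.mul_mem_left _ _ (Ideal.subset_span hs)))
    have := Q.add_mem (h3 _ hfF) h1
    rwa [sub_add_cancel] at this
  obtain ⟨f', hf', g, hg, rfl⟩ := Submodule.mem_sup.1 hfU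
  refine ⟨f', (mem_restrictTotalDegree _ _ _).1 hf', ?_⟩
  rw [add_sub_cancel_left]
  exact hg

end ZeroDimBezout

/-- If a proper ideal of `k[x₁,…,xₙ]` generated in degree at most `d`
meets each univariate subring `k[xᵢ]` nontrivially and is prime up to `n·2·d^(2^n)`,
then it is prime. -/
theorem zero_dimensional_prime_up_to_bound_implies_prime
    (k : Type*) [Field k] (n d : ℕ) (hn : 1 ≤ n) (hd : 1 ≤ d)
    (I : Ideal (MvPolynomial (Fin n) k)) (hproper : I ≠ ⊤)
    (S : Set (MvPolynomial (Fin n) k)) (hgen : I = Ideal.span S)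
    (hdeg : ∀ f ∈ S, f.totalDegree ≤ d)
    (hzero : ∀ i : Fin n, ∃ p : Polynomial k,
      Polynomial.aeval (MvPolynomial.X i : MvPolynomial (Fin n) k) p ∈ I ∧
      Polynomial.aeval (MvPolynomial.X i : MvPolynomial (Fin n) k) p ≠ 0)
    (hprime : ∀ f g : MvPolynomial (Fin n) k,
      f.totalDegree ≤ n * (2 * d ^ 2 ^ n) →
      g.totalDegree ≤ n * (2 * d ^ 2 ^ n) →
      f * g ∈ I → f ∈ I ∨ g ∈ I) :
    I.IsPrime := by
  have hz : ∀ i : Fin n, ∃ p : Polynomial k, p.Monic ∧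
      Polynomial.aeval (MvPolynomial.X i : MvPolynomial (Fin n) k) p ∈ Ideal.span S := by
    intro i
    obtain ⟨p, hpI, hp0⟩ := hzero i
    have hp : p ≠ 0 := by
      rintro rfl
      simp at hp0
    refine ⟨p * Polynomial.C p.leadingCoeff⁻¹, Polynomial.monic_mul_leadingCoeff_inv hp, ?_⟩
    rw [map_mul, ← hgen]
    exact I.mul_mem_right _ hpI
  have hrep := ZeroDimBezout.exists_rep n d S hdeg hz
  rw [← hgen] at hrep
  have hle : d ^ n ≤ n * (2 * d ^ 2 ^ n) :=
    calc d ^ n ≤ d ^ 2 ^ n := Nat.pow_le_pow_right hd Nat.lt_two_pow_self.le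
      _ ≤ 2 * d ^ 2 ^ n := by omega
      _ ≤ n * (2 * d ^ 2 ^ n) := Nat.le_mul_of_pos_left _ hn
  refine ⟨hproper, fun {f g} hfg => ?_⟩
  obtain ⟨f', hf', hff⟩ := hrep f
  obtain ⟨g', hg', hgg⟩ := hrep g
  have hmul : f' * g' ∈ I := by
    have h : f' * g' = f * g - ((f - f') * g + f' * (g - g')) := by ring
    rw [h]
    exact I.sub_mem hfg (I.add_mem (I.mul_mem_right _ hff) (I.mul_mem_left _ hgg))
  rcases hprime f' g' (hf'.trans hle) (hg'.trans hle) hmul with h | h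
  · exact Or.inl (by simpa using I.add_mem hff h)
  · exact Or.inr (by simpa using I.add_mem hgg h)
end

section
/- Let k be a field and n, d, N₁, N₂ natural numbers. Consider the system of N₁ linear equations ∑_{j=1}^{N₂} f_{ij}·Z_j = h_i (for i = 1,…,N₁), where all f_{ij} and h_i are polynomials in k[x_1,…,x_n] of total degree at most d. If this system has a solution with all Z_j in the field of fractions k(x_1,…,x_n), then it has a solution z = (z_1,…,z_{N₂}) in k(x_1,…,x_n) such that every z_j can be written as a ratio p_j/q_j of polynomials p_j, q_j ∈ k[x_1,…,x_n] with q_j ≠ 0 and both p_j and q_j of total degree at most (2·N₁·d)^(2^n). -/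
/-!
The solution comes from Cramer's rule. Over the fraction field, select columns of the coefficient
matrix forming a basis of its column space; the right-hand side is a combination `y` of these
columns. By equality of row and column rank, some rows of the selected columns form an invertible square
matrix `B` (`exists_isUnit_submatrix`), of size at most `N₁`. Then `y j = det B_j / det B`, where
`B_j` is `B` with its `j`-th column replaced by the right-hand side, and both determinants have
degree at most `N₁ * d` (`totalDegree_det_le`). All other unknowns are set to `0`.
-/

open Matrix

lemma totalDegree_det_le {k σ ι : Type*} [Field k] [Fintype ι] [DecidableEq ι] {d : ℕ}
    (M : Matrix ι ι (MvPolynomial σ k)) (hM : ∀ i j, (M i j).totalDegree ≤ d) :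
    M.det.totalDegree ≤ Fintype.card ι * d := by
  rw [Matrix.det_apply]
  refine MvPolynomial.totalDegree_finsetSum_le fun g _ => ?_
  have hprod : (∏ i, M (g i) i).totalDegree ≤ Fintype.card ι * d := by
    refine (MvPolynomial.totalDegree_finsetProd _ _).trans ?_
    refine (Finset.sum_le_sum fun i _ => hM (g i) i).trans ?_
    simp
  rcases Int.units_eq_one_or (Equiv.Perm.sign g) with hs | hs <;> rw [hs]
  · simpa using hprod
  · simpa [Units.smul_def] using hprod

/-- A matrix with linearly independent columns has an invertible square submatrix using all of its
columns. -/
lemma exists_isUnit_submatrix {K m ι : Type*} [Field K] [Fintype m] [Fintype ι] [DecidableEq ι]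
    (A : Matrix m ι K) (hA : LinearIndependent K A.col) :
    ∃ e : ι → m, Function.Injective e ∧ IsUnit (A.submatrix e id) := by
  obtain ⟨κ, a, ha, hspan, hli⟩ := exists_linearIndependent' K A.row
  have htop : Submodule.span K (Set.range A.row) = ⊤ := by
    apply Submodule.eq_top_of_finrank_eq
    rw [← Matrix.rank_eq_finrank_span_row, ← Matrix.rank_transpose]
    simpa using LinearIndependent.rank_matrix (M := Aᵀ) hA
  -- The selected rows form a basis of `ι → K`, hence are indexed by `ι` itself.
  let b := Module.Basis.mk hli (by rw [hspan, htop])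
  let e : ι ≃ κ := (Pi.basisFun K ι).indexEquiv b
  refine ⟨a ∘ e, ha.comp e.injective, ?_⟩
  rw [← Matrix.linearIndependent_rows_iff_isUnit]
  exact hli.comp e e.injective

lemma det_mul_eq_det_updateCol {K ι : Type*} [Field K] [Fintype ι] [DecidableEq ι]
    (B : Matrix ι ι K) (y b : ι → K) (hy : B *ᵥ y = b) (j : ι) :
    B.det * y j = (B.updateCol j b).det := by
  rw [← Matrix.cramer_apply, Matrix.cramer_eq_adjugate_mulVec, ← hy, Matrix.mulVec_mulVec,
    Matrix.adjugate_mul, Matrix.smul_mulVec, Matrix.one_mulVec]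
  simp

/-- Effective faithful flatness over the rational function field: a linear
system over `k[x₁,…,xₙ]` with coefficients of degree at most `d` that is solvable in
`k(x₁,…,xₙ)` has a solution whose entries are ratios of polynomials of total degree at
most `(2·N₁·d)^(2^n)`. -/
theorem solvable_over_function_field_bounded_solution
    (k : Type*) [Field k] (n d N₁ N₂ : ℕ)
    (f : Fin N₁ → Fin N₂ → MvPolynomial (Fin n) k)
    (h : Fin N₁ → MvPolynomial (Fin n) k)
    (hf : ∀ i j, (f i j).totalDegree ≤ d)
    (hh : ∀ i, (h i).totalDegree ≤ d)
    (hsol : ∃ z : Fin N₂ → FractionRing (MvPolynomial (Fin n) k),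
      ∀ i, ∑ j, algebraMap (MvPolynomial (Fin n) k)
          (FractionRing (MvPolynomial (Fin n) k)) (f i j) * z j =
        algebraMap (MvPolynomial (Fin n) k)
          (FractionRing (MvPolynomial (Fin n) k)) (h i)) :
    ∃ z : Fin N₂ → FractionRing (MvPolynomial (Fin n) k),
      (∀ i, ∑ j, algebraMap (MvPolynomial (Fin n) k)
          (FractionRing (MvPolynomial (Fin n) k)) (f i j) * z j =
        algebraMap (MvPolynomial (Fin n) k)
          (FractionRing (MvPolynomial (Fin n) k)) (h i)) ∧
      ∀ j, ∃ p q : MvPolynomial (Fin n) k, q ≠ 0 ∧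
        p.totalDegree ≤ (2 * N₁ * d) ^ 2 ^ n ∧
        q.totalDegree ≤ (2 * N₁ * d) ^ 2 ^ n ∧
        z j = algebraMap (MvPolynomial (Fin n) k)
            (FractionRing (MvPolynomial (Fin n) k)) p /
          algebraMap (MvPolynomial (Fin n) k)
            (FractionRing (MvPolynomial (Fin n) k)) q := by
  classical
  let R := MvPolynomial (Fin n) k
  let K := FractionRing R
  let φ : R →+* K := algebraMap R K
  obtain ⟨z₀, hz₀⟩ := hsol
  -- `v j` is the `j`-th column of the system over the fraction field.
  let v : Fin N₂ → Fin N₁ → K := fun j i => φ (f i j)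
  obtain ⟨κ, a, ha, hspan, hli⟩ := exists_linearIndependent' K v
  have : Finite κ := Finite.of_injective a ha
  have : Fintype κ := Fintype.ofFinite κ
  have hmem : (fun i => φ (h i)) ∈ Submodule.span K (Set.range (v ∘ a)) := by
    rw [hspan, Submodule.mem_span_range_iff_exists_fun]
    refine ⟨z₀, funext fun i => ?_⟩
    have := hz₀ i
    simpa [v, φ, Finset.sum_apply, mul_comm] using this
  obtain ⟨y, hy⟩ := (Submodule.mem_span_range_iff_exists_fun K).1 hmem
  have hy' : ∀ i, ∑ c, φ (f i (a c)) * y c = φ (h i) := fun i => by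
    have := congrFun hy i
    simpa [v, Finset.sum_apply, mul_comm] using this
  obtain ⟨e, he, hunit⟩ := exists_isUnit_submatrix (Matrix.of fun i c => φ (f i (a c))) hli
  let B : Matrix κ κ R := Matrix.of fun r c => f (e r) (a c)
  have hBmap : φ.mapMatrix B = (Matrix.of fun i c => φ (f i (a c))).submatrix e id := rfl
  have hdet : φ B.det ≠ 0 := by
    rw [RingHom.map_det, hBmap]
    exact ((Matrix.isUnit_iff_isUnit_det _).1 hunit).ne_zero
  have hcramer : ∀ c, y c = φ (B.updateCol c fun r => h (e r)).det / φ B.det := fun c => by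
    rw [eq_div_iff hdet, mul_comm, RingHom.map_det, RingHom.map_det,
      det_mul_eq_det_updateCol (φ.mapMatrix B) y (fun r => φ (h (e r)))
        (funext fun r => hy' (e r)) c]
    congr 1
    ext r s
    by_cases hs : s = c <;> simp [hs]
  have hbound : Fintype.card κ * d ≤ (2 * N₁ * d) ^ 2 ^ n := by
    have hcard : Fintype.card κ ≤ N₁ := by simpa using Fintype.card_le_of_injective e he
    calc Fintype.card κ * d ≤ N₁ * d := Nat.mul_le_mul_right d hcard
      _ ≤ 2 * N₁ * d := by rw [mul_assoc]; omega
      _ ≤ (2 * N₁ * d) ^ 2 ^ n := Nat.le_self_pow (by positivity) _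
  refine ⟨Function.extend a y 0, fun i => ?_, fun j => ?_⟩
  · refine Eq.trans ?_ (hy' i)
    symm
    refine Finset.sum_of_injOn a ha.injOn (by simp) (fun j _ hj => ?_) fun c _ => ?_
    · rw [Function.extend_apply' _ _ _ (by simpa using hj)]
      simp
    · rw [ha.extend_apply]
  · by_cases hj : ∃ c, a c = j
    · obtain ⟨c, rfl⟩ := hj
      refine ⟨(B.updateCol c fun r => h (e r)).det, B.det, fun h0 => hdet (by rw [h0, map_zero]),
        (totalDegree_det_le _ fun r s => ?_).trans hbound,
        (totalDegree_det_le B fun r s => hf _ _).trans hbound, ?_⟩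
      · rw [Matrix.updateCol_apply]
        split_ifs
        · exact hh _
        · exact hf _ _
      · rw [ha.extend_apply, hcramer c]
    · refine ⟨0, 1, one_ne_zero, by simp, by simp, ?_⟩
      rw [Function.extend_apply' _ _ _ hj]
      simp
end
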